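/- arXiv:1805.01422 — 2 statements merged into one kernel-verified Lean document; each statement's English description precedes it below -/
import Mathlib

section
/- Fix n ∈ ℕ, η ∈ (0,1) and α ∈ (0,∞). (i) If Q is an α-sequentially interactive channel from X^n to Z^n, then g_TV(Q,η) ≥ (1−η)/√(2n(e^α−1)²), and consequently Δ_A^{(n)}(Q,η) ≥ ω_TV( ((1−η)/√(2n(e^α−1)²))^− ). (ii) For every η0 ∈ (0,1) and every ε0 > 0 there exists a finite constant c > 0 such that for all η ∈ (0,η0), all n > |log η|/ε0 and every channel R from X^n to Z^n, g_H(R,η) ≥ c√(|log η|/n). Consequently, for such η, n and every α-sequentially interactive channel Q, Δ_A^{(n)}(Q,η) ≥ max{ ω_TV( ((1−η)/√(2n(e^α−1)²))^− ), ω_H( (c√(|log η|/n))^− ) }. -/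
open MeasureTheory ProbabilityTheory ENNReal

namespace PrivacyPaper

variable {X Z Ω : Type*} [MeasurableSpace X] [MeasurableSpace Z] [MeasurableSpace Ω]

/-- Total variation distance between two measures:
`d_TV(P0, P1) = sup_{A measurable} |P0(A) - P1(A)|`. -/
noncomputable def dTV (P0 P1 : Measure Ω) : ℝ :=
  ⨆ A : {A : Set Ω // MeasurableSet A}, |(P0 A.1).toReal - (P1 A.1).toReal|

/-- Hellinger distance between two measures, computed via densities with respect to the
dominating measure `P0 + P1`. -/
noncomputable def dH (P0 P1 : Measure Ω) : ℝ :=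
  Real.sqrt (∫ ω, (Real.sqrt ((P0.rnDeriv (P0 + P1) ω).toReal) -
    Real.sqrt ((P1.rnDeriv (P0 + P1) ω).toReal)) ^ 2 ∂(P0 + P1))

/-- Hellinger affinity `ρ(P0, P1) = ∫ √(p0 p1) dμ`, with `μ = P0 + P1`. -/
noncomputable def hellingerAffinity (P0 P1 : Measure Ω) : ℝ :=
  ∫ ω, Real.sqrt ((P0.rnDeriv (P0 + P1) ω).toReal * (P1.rnDeriv (P0 + P1) ω).toReal)
    ∂(P0 + P1)

/-- Modulus of continuity of a functional `θ` over `P` with respect to a distance `d`,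
with values in `ℝ≥0∞`. -/
noncomputable def modulus (d : Measure X → Measure X → ℝ) (P : Set (Measure X))
    (θ : Measure X → ℝ) (ε : ℝ) : ℝ≥0∞ :=
  ⨆ (P0 : Measure X) (_ : P0 ∈ P) (P1 : Measure X) (_ : P1 ∈ P) (_ : d P0 P1 ≤ ε),
    ENNReal.ofReal |θ P0 - θ P1|

/-- Total variation modulus of continuity `ω_TV`. -/
noncomputable def omegaTV (P : Set (Measure X)) (θ : Measure X → ℝ) : ℝ → ℝ≥0∞ :=
  modulus dTV P θ

/-- Hellinger modulus of continuity `ω_H`. -/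
noncomputable def omegaH (P : Set (Measure X)) (θ : Measure X → ℝ) : ℝ → ℝ≥0∞ :=
  modulus dH P θ

/-- Push-forward of a measure through a channel `c` (given as a map into measures):
`(c P)(A) = ∫ c(A|x) dP(x)`. -/
noncomputable def push (c : X → Measure Z) (μ : Measure X) : Measure Z := μ.bind c

/-- Privatized Hellinger modulus `ω_H^{(Q1)}`. -/
noncomputable def omegaHQ (c : X → Measure Z) (P : Set (Measure X)) (θ : Measure X → ℝ) :
    ℝ → ℝ≥0∞ :=
  modulus (fun P0 P1 => dH (push c P0) (push c P1)) P θ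

/-- Left limit at `m ∈ ℝ≥0∞` of a nondecreasing `ℝ≥0∞`-valued function on `[0,∞)`:
`f(m⁻) = sup_{0 ≤ y < m} f(y)`. -/
noncomputable def leftLimE (f : ℝ → ℝ≥0∞) (m : ℝ≥0∞) : ℝ≥0∞ :=
  ⨆ (y : ℝ) (_ : 0 ≤ y) (_ : ENNReal.ofReal y < m), f y

/-- Right limit at `x ∈ ℝ` of a nondecreasing `ℝ≥0∞`-valued function:
`f(x⁺) = inf_{y > x} f(y)`. -/
noncomputable def rightLimE (f : ℝ → ℝ≥0∞) (x : ℝ) : ℝ≥0∞ :=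
  ⨅ (y : ℝ) (_ : x < y), f y

/-- Left limit of a nondecreasing loss function at `m ∈ ℝ≥0∞`, with the convention
`l(0⁻) = l(0)`, as an element of `ℝ≥0∞`. -/
noncomputable def lossLeftLim (l : ℝ → ℝ) (m : ℝ≥0∞) : ℝ≥0∞ :=
  if m = 0 then ENNReal.ofReal (l 0)
  else ⨆ (y : ℝ) (_ : 0 ≤ y) (_ : ENNReal.ofReal y < m), ENNReal.ofReal (l y)

/-- A (randomized) test is a measurable function with values in `[0,1]`. -/
def IsTest (φ : Ω → ℝ) : Prop := Measurable φ ∧ ∀ ω, 0 ≤ φ ω ∧ φ ω ≤ 1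

/-- Risk of a test: `∫ φ dμ0 + ∫ (1 - φ) dμ1`. -/
noncomputable def testRisk (μ0 μ1 : Measure Ω) (φ : Ω → ℝ) : ℝ :=
  (∫ ω, φ ω ∂μ0) + ∫ ω, (1 - φ ω) ∂μ1

/-- Testing affinity of a pair of measures: `π(μ0, μ1) = inf_φ (∫ φ dμ0 + ∫ (1-φ) dμ1)`. -/
noncomputable def pairAffinity (μ0 μ1 : Measure Ω) : ℝ :=
  sInf {r : ℝ | ∃ φ : Ω → ℝ, IsTest φ ∧ r = testRisk μ0 μ1 φ}

/-- Testing affinity of two sets of measures: `π(M0, M1) = sup π(μ0, μ1)`. -/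
noncomputable def setAffinity (M0 M1 : Set (Measure Ω)) : ℝ :=
  sSup {r : ℝ | ∃ μ0 ∈ M0, ∃ μ1 ∈ M1, r = pairAffinity μ0 μ1}

/-- The set of finite convex combinations of elements of `M`. -/
def convComb (M : Set (Measure Ω)) : Set (Measure Ω) :=
  {μ | ∃ (m : ℕ) (w : Fin m → ℝ≥0∞) (ν : Fin m → Measure Ω),
    (∑ i, w i) = 1 ∧ (∀ i, ν i ∈ M) ∧ μ = ∑ i, w i • ν i}

/-- The upper affinity `η_A^{(n)}(Q, Δ)`, for the channel described through the map
`QPn : P ↦ Q P^{⊗n}`. -/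
noncomputable def etaA {Zn : Type*} [MeasurableSpace Zn] (QPn : Measure X → Measure Zn)
    (P : Set (Measure X)) (θ : Measure X → ℝ) (Δ : ℝ) : ℝ :=
  ⨆ t : ℝ, setAffinity (convComb (QPn '' {μ | μ ∈ P ∧ θ μ ≤ t}))
    (convComb (QPn '' {μ | μ ∈ P ∧ t + Δ ≤ θ μ}))

/-- The affinity `η_2^{(n)}(Q, Δ)` (no convex hulls). -/
noncomputable def eta2 {Zn : Type*} [MeasurableSpace Zn] (QPn : Measure X → Measure Zn)
    (P : Set (Measure X)) (θ : Measure X → ℝ) (Δ : ℝ) : ℝ :=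
  ⨆ t : ℝ, setAffinity (QPn '' {μ | μ ∈ P ∧ θ μ ≤ t}) (QPn '' {μ | μ ∈ P ∧ t + Δ ≤ θ μ})

/-- `Δ_A^{(n)}(Q, η) = sup {Δ ≥ 0 : η_A^{(n)}(Q, Δ) > η}`, as an element of `ℝ≥0∞`. -/
noncomputable def DeltaA {Zn : Type*} [MeasurableSpace Zn] (QPn : Measure X → Measure Zn)
    (P : Set (Measure X)) (θ : Measure X → ℝ) (η : ℝ) : ℝ≥0∞ :=
  ⨆ (Δ : ℝ) (_ : 0 ≤ Δ) (_ : η < etaA QPn P θ Δ), ENNReal.ofReal Δ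

/-- `Δ_2^{(n)}(Q, η) = sup {Δ ≥ 0 : η_2^{(n)}(Q, Δ) > η}`, as an element of `ℝ≥0∞`. -/
noncomputable def Delta2 {Zn : Type*} [MeasurableSpace Zn] (QPn : Measure X → Measure Zn)
    (P : Set (Measure X)) (θ : Measure X → ℝ) (η : ℝ) : ℝ≥0∞ :=
  ⨆ (Δ : ℝ) (_ : 0 ≤ Δ) (_ : η < eta2 QPn P θ Δ), ENNReal.ofReal Δ

/-- The privatized distribution `Q P^{⊗n}` of the observation vector. -/
noncomputable def privProd {Zn : Type*} [MeasurableSpace Zn] (n : ℕ)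
    (Q : (Fin n → X) → Measure Zn) (μ : Measure X) : Measure Zn :=
  (Measure.pi fun _ : Fin n => μ).bind Q

/-- The `Q`-privatized minimax risk `M_n(Q, P, θ)` (with values in `ℝ≥0∞`), where the channel
is described through the map `QPn : P ↦ Q P^{⊗n}`. -/
noncomputable def minimaxRisk {Zn : Type*} [MeasurableSpace Zn] (l : ℝ → ℝ)
    (QPn : Measure X → Measure Zn) (P : Set (Measure X)) (θ : Measure X → ℝ) : ℝ≥0∞ :=
  ⨅ (est : Zn → ℝ) (_ : Measurable est), ⨆ (μ : Measure X) (_ : μ ∈ P),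
    ∫⁻ z, ENNReal.ofReal (l |est z - θ μ|) ∂(QPn μ)

/-- Iterated sequential integral: `seqIntegral K n x g` is
`∫ ⋯ ∫ g(z_1,…,z_n) K_{n-1}(dz_n | x_n, z_{1:n-1}) ⋯ K_0(dz_1 | x_1)`. -/
noncomputable def seqIntegral (K : (i : ℕ) → X × (Fin i → Z) → Measure Z) :
    (n : ℕ) → (Fin n → X) → ((Fin n → Z) → ℝ≥0∞) → ℝ≥0∞
  | 0, _, g => g fun i => i.elim0
  | n + 1, x, g => seqIntegral K n (fun i => x i.castSucc)
      fun zpre => ∫⁻ zn, g (Fin.snoc zpre zn) ∂(K n (x (Fin.last n), zpre))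

/-- An `α`-sequentially interactive channel: `Q` is obtained by sequential composition of
Markov kernels `K i : X × Z^i → Z`, each of which satisfies the `α`-differential privacy
ratio bound in its `X`-argument. -/
def IsSeqInteractive (n : ℕ) (α : ℝ) (Q : Kernel (Fin n → X) (Fin n → Z)) : Prop :=
  ∃ K : (i : ℕ) → Kernel (X × (Fin i → Z)) Z,
    (∀ i, IsMarkovKernel (K i)) ∧
    (∀ (i : ℕ) (x x' : X) (zpre : Fin i → Z) (A : Set Z), MeasurableSet A →
      K i (x, zpre) A ≤ ENNReal.ofReal (Real.exp α) * K i (x', zpre) A) ∧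
    (∀ (x : Fin n → X) (A : Set (Fin n → Z)), MeasurableSet A →
      Q x A = seqIntegral (fun i p => K i p) n x (A.indicator fun _ => 1))

/-- The `α`-private minimax risk `M_{n,α}(P, θ)`: infimum over all output dimensions
`q ∈ ℕ` and all `α`-sequentially interactive channels from `X^n` to `(ℝ^q)^n`. -/
noncomputable def privMinimaxRisk (n : ℕ) (α : ℝ) (l : ℝ → ℝ) (P : Set (Measure X))
    (θ : Measure X → ℝ) : ℝ≥0∞ :=
  ⨅ (q : ℕ) (Q : Kernel (Fin n → X) (Fin n → (Fin q → ℝ))) (_ : IsMarkovKernel Q)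
    (_ : IsSeqInteractive n α Q),
      minimaxRisk l (privProd n fun x => Q x) P θ

/-- The mixture `λ P0 + (1-λ) P1` of two measures. -/
noncomputable def mix (lam : ℝ) (P0 P1 : Measure Ω) : Measure Ω :=
  ENNReal.ofReal lam • P0 + ENNReal.ofReal (1 - lam) • P1

/-- Convexity of a set of measures. -/
def ConvexMeasureSet (P : Set (Measure Ω)) : Prop :=
  ∀ P0 ∈ P, ∀ P1 ∈ P, ∀ lam : ℝ, 0 ≤ lam → lam ≤ 1 → mix lam P0 P1 ∈ P

/-- Linearity of a functional on a (convex) set of measures. -/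
def LinearFunctional (P : Set (Measure X)) (θ : Measure X → ℝ) : Prop :=
  ∀ P0 ∈ P, ∀ P1 ∈ P, ∀ lam : ℝ, 0 ≤ lam → lam ≤ 1 →
    θ (mix lam P0 P1) = lam * θ P0 + (1 - lam) * θ P1

/-- A family of measures is dominated if all its members are absolutely continuous with
respect to a single σ-finite measure. -/
def Dominated (M : Set (Measure Ω)) : Prop :=
  ∃ ν : Measure Ω, SigmaFinite ν ∧ ∀ μ ∈ M, μ ≪ ν

/-- Condition (A): the functional `θ` is bounded on `P`. -/
def CondA (P : Set (Measure X)) (θ : Measure X → ℝ) : Prop := ∃ c : ℝ, ∀ μ ∈ P, |θ μ| ≤ c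

/-- Condition (B): the loss `l : [0,∞) → [0,∞)` is nondecreasing, `l 0 = 0` and
`l(3t/2) ≤ a l(t)` for all `t ≥ 0`. -/
def CondB (l : ℝ → ℝ) (a : ℝ) : Prop :=
  (∀ u v : ℝ, 0 ≤ u → u ≤ v → l u ≤ l v) ∧ (∀ u : ℝ, 0 ≤ u → 0 ≤ l u) ∧ l 0 = 0 ∧
    ∀ u : ℝ, 0 ≤ u → l (3 / 2 * u) ≤ a * l u

/-- Sup-norm of a (bounded) function. -/
noncomputable def supNorm (f : X → ℝ) : ℝ := ⨆ x, |f x|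

/-- The binary privatization channel `Q_1^{(α,ℓ)}`, supported on `{-z0, z0}` with
`z0 = ‖ℓ‖_∞ (e^α + 1)/(e^α - 1)`, giving the point `z0` probability `(1 + ℓ(x)/z0)/2`. -/
noncomputable def binChannel (α : ℝ) (ℓ : X → ℝ) (x : X) : Measure ℝ :=
  ENNReal.ofReal ((1 + ℓ x / (supNorm ℓ * ((Real.exp α + 1) / (Real.exp α - 1)))) / 2) •
      Measure.dirac (supNorm ℓ * ((Real.exp α + 1) / (Real.exp α - 1))) +
    ENNReal.ofReal ((1 - ℓ x / (supNorm ℓ * ((Real.exp α + 1) / (Real.exp α - 1)))) / 2) •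
      Measure.dirac (-(supNorm ℓ * ((Real.exp α + 1) / (Real.exp α - 1))))

/-- `g_d(Q, η) = inf { d(P0, P1) : π(Q P0^{⊗n}, Q P1^{⊗n}) ≤ η }`, as an element of `ℝ≥0∞`
(with `inf ∅ = ∞`). -/
noncomputable def gDist {Zn : Type*} [MeasurableSpace Zn] (d : Measure X → Measure X → ℝ)
    (QPn : Measure X → Measure Zn) (P : Set (Measure X)) (η : ℝ) : ℝ≥0∞ :=
  ⨅ (P0 : Measure X) (_ : P0 ∈ P) (P1 : Measure X) (_ : P1 ∈ P)
    (_ : pairAffinity (QPn P0) (QPn P1) ≤ η), ENNReal.ofReal (d P0 P1)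

/-- Integral of a bounded measurable function against a finite signed measure, via the
Jordan decomposition. -/
noncomputable def sInt (φ : Ω → ℝ) (σ : MeasureTheory.SignedMeasure Ω) : ℝ :=
  (∫ ω, φ ω ∂σ.toJordanDecomposition.posPart) - ∫ ω, φ ω ∂σ.toJordanDecomposition.negPart

/-- Membership in the set `𝕋 = {φ ∈ L∞(μ) : a ≤ ∫ φ f dμ ≤ b  ∀ f ∈ L1(μ), ‖f‖_{L1} ≤ 1}`. -/
def memT (μ : Measure Ω) (a b : ℝ) (φ : Ω → ℝ) : Prop :=
  Measurable φ ∧ (∃ c : ℝ, ∀ᵐ ω ∂μ, |φ ω| ≤ c) ∧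
    ∀ f : Ω → ℝ, Integrable f μ → (∫ ω, |f ω| ∂μ) ≤ 1 →
      a ≤ (∫ ω, φ ω * f ω ∂μ) ∧ (∫ ω, φ ω * f ω ∂μ) ≤ b

/-- The function `G(s,t) = log((1-s)/(1-t)) / log((t/s)·(1-s)/(1-t))`, with `G(s,s) = s`. -/
noncomputable def Gfun (s t : ℝ) : ℝ :=
  if s = t then s
  else Real.log ((1 - s) / (1 - t)) / Real.log (t / s * ((1 - s) / (1 - t)))

theorem pairAffinity_bddBelow (μ0 μ1 : Measure Ω) :
    BddBelow {r : ℝ | ∃ φ : Ω → ℝ, IsTest φ ∧ r = testRisk μ0 μ1 φ} := by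
  refine ⟨0, ?_⟩
  rintro r ⟨φ, hφ, rfl⟩
  exact add_nonneg (integral_nonneg fun ω => (hφ.2 ω).1)
    (integral_nonneg fun ω => by have := (hφ.2 ω).2; simp only [Pi.zero_apply]; linarith)

theorem isTest_zero : IsTest (fun _ : Ω => (0 : ℝ)) :=
  ⟨measurable_const, fun _ => by simp⟩

theorem pairAffinity_le_one (μ0 μ1 : Measure Ω) [IsProbabilityMeasure μ1] :
    pairAffinity μ0 μ1 ≤ 1 := by
  refine csInf_le (pairAffinity_bddBelow μ0 μ1) ⟨fun _ => 0, isTest_zero, ?_⟩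
  simp [testRisk]

theorem le_pairAffinity (μ0 μ1 : Measure Ω) (c : ℝ)
    (h : ∀ φ : Ω → ℝ, IsTest φ → c ≤ testRisk μ0 μ1 φ) : c ≤ pairAffinity μ0 μ1 := by
  refine le_csInf ⟨_, fun _ => 0, isTest_zero, rfl⟩ ?_
  rintro r ⟨φ, hφ, rfl⟩
  exact h φ hφ

theorem pairAffinity_symm (μ0 μ1 : Measure Ω) : pairAffinity μ0 μ1 = pairAffinity μ1 μ0 := by
  have key : ∀ μ0 μ1 : Measure Ω, pairAffinity μ0 μ1 ≤ pairAffinity μ1 μ0 := by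
    intro μ0 μ1
    apply le_pairAffinity
    intro φ hφ
    refine csInf_le (pairAffinity_bddBelow μ0 μ1) ⟨fun ω => 1 - φ ω, ⟨?_, ?_⟩, ?_⟩
    · exact measurable_const.sub hφ.1
    · intro ω; have := hφ.2 ω; constructor <;> linarith
    · simp [testRisk, add_comm]
  exact le_antisymm (key _ _) (key _ _)

theorem convComb_prob (M : Set (Measure Ω)) (hM : ∀ μ ∈ M, IsProbabilityMeasure μ) :
    ∀ μ ∈ convComb M, IsProbabilityMeasure μ := by
  rintro μ ⟨m, w, ν, hw, hν, rfl⟩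
  constructor
  have : ∀ i, ν i Set.univ = 1 := fun i => (hM _ (hν i)).measure_univ
  simp [Measure.finsetSum_apply, this, hw]

theorem subset_convComb (M : Set (Measure Ω)) : M ⊆ convComb M := by
  intro μ hμ
  exact ⟨1, fun _ => 1, fun _ => μ, by simp, fun _ => hμ, by simp⟩

theorem setAffinity_bdd (M0 M1 : Set (Measure Ω)) (hM : ∀ μ ∈ M1, IsProbabilityMeasure μ) :
    ∀ r ∈ {r : ℝ | ∃ μ0 ∈ M0, ∃ μ1 ∈ M1, r = pairAffinity μ0 μ1}, r ≤ 1 := by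
  rintro r ⟨μ0, -, μ1, h1, rfl⟩
  have := hM μ1 h1
  exact pairAffinity_le_one _ _

theorem lt_etaA {Zn : Type*} [MeasurableSpace Zn] (QPn : Measure X → Measure Zn)
    (P : Set (Measure X)) (hQ : ∀ μ ∈ P, IsProbabilityMeasure (QPn μ)) (θ : Measure X → ℝ)
    (η : ℝ) (P0 P1 : Measure X) (h0 : P0 ∈ P) (h1 : P1 ∈ P) (hle : θ P0 ≤ θ P1)
    (h : η < pairAffinity (QPn P0) (QPn P1)) : η < etaA QPn P θ (θ P1 - θ P0) := by
  have hprob : ∀ t : ℝ, ∀ μ ∈ convComb (QPn '' {μ | μ ∈ P ∧ t + (θ P1 - θ P0) ≤ θ μ}),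
      IsProbabilityMeasure μ := by
    intro t
    apply convComb_prob
    rintro _ ⟨μ, hμ, rfl⟩
    exact hQ μ hμ.1
  refine lt_of_lt_of_le h ?_
  unfold etaA
  refine le_trans ?_ (le_ciSup (f := fun t : ℝ => setAffinity (convComb (QPn '' {μ | μ ∈ P ∧ θ μ ≤ t}))
    (convComb (QPn '' {μ | μ ∈ P ∧ t + (θ P1 - θ P0) ≤ θ μ}))) ?_ (θ P0))
  · refine le_csSup ⟨1, setAffinity_bdd _ _ (hprob _)⟩ ⟨QPn P0, ?_, QPn P1, ?_, rfl⟩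
    · exact subset_convComb _ ⟨P0, ⟨h0, le_rfl⟩, rfl⟩
    · exact subset_convComb _ ⟨P1, ⟨h1, by simp⟩, rfl⟩
  · refine ⟨1, ?_⟩
    rintro _ ⟨t, rfl⟩
    exact Real.sSup_le (setAffinity_bdd _ _ (hprob _)) zero_le_one

theorem leftLim_le_DeltaA {Zn : Type*} [MeasurableSpace Zn] (QPn : Measure X → Measure Zn)
    (P : Set (Measure X)) (hQ : ∀ μ ∈ P, IsProbabilityMeasure (QPn μ)) (θ : Measure X → ℝ)
    (η : ℝ) (d : Measure X → Measure X → ℝ) (m : ℝ≥0∞) (hm : m ≤ gDist d QPn P η) :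
    leftLimE (modulus d P θ) m ≤ DeltaA QPn P θ η := by
  unfold leftLimE modulus
  refine iSup_le fun y => iSup_le fun hy => iSup_le fun hym => iSup_le fun P0 => iSup_le fun h0 =>
    iSup_le fun P1 => iSup_le fun h1 => iSup_le fun hd => ?_
  have haff : η < pairAffinity (QPn P0) (QPn P1) := by
    by_contra hcon
    push Not at hcon
    have h2 : gDist d QPn P η ≤ ENNReal.ofReal (d P0 P1) := by
      unfold gDist
      exact iInf_le_of_le P0 (iInf_le_of_le h0 (iInf_le_of_le P1 (iInf_le_of_le h1
        (iInf_le_of_le hcon le_rfl))))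
    exact absurd (hm.trans (h2.trans (ENNReal.ofReal_le_ofReal hd))) (not_le.2 hym)
  unfold DeltaA
  rcases le_total (θ P0) (θ P1) with hle | hle
  · rw [abs_sub_comm, abs_of_nonneg (sub_nonneg.2 hle)]
    exact le_iSup_of_le _ (le_iSup_of_le (sub_nonneg.2 hle)
      (le_iSup_of_le (lt_etaA QPn P hQ θ η P0 P1 h0 h1 hle haff) le_rfl))
  · rw [abs_of_nonneg (sub_nonneg.2 hle)]
    rw [pairAffinity_symm] at haff
    exact le_iSup_of_le _ (le_iSup_of_le (sub_nonneg.2 hle)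
      (le_iSup_of_le (lt_etaA QPn P hQ θ η P1 P0 h1 h0 hle haff) le_rfl))

theorem privProd_prob {Zn : Type*} [MeasurableSpace Zn] (n : ℕ)
    (Q : Kernel (Fin n → X) Zn) [IsMarkovKernel Q] (μ : Measure X) [IsProbabilityMeasure μ] :
    IsProbabilityMeasure (privProd n (fun x => Q x) μ) := by
  constructor
  unfold privProd
  rw [Measure.bind_apply .univ Q.aemeasurable]
  simp

theorem measurable_snoc_pair {Y : Type*} [MeasurableSpace Y] (n : ℕ) :
    Measurable (fun p : (Fin n → Y) × Y => (Fin.snoc p.1 p.2 : Fin (n + 1) → Y)) := by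
  rw [measurable_pi_iff]
  intro i
  refine Fin.lastCases ?_ (fun j => ?_) i
  · simpa using measurable_snd
  · simpa [Function.comp_def] using (measurable_pi_apply j).comp measurable_fst

theorem lintegral_pi_snoc (μ : Measure X) [IsFiniteMeasure μ] (n : ℕ)
    (g : (Fin (n + 1) → X) → ℝ≥0∞) (hg : Measurable g) :
    ∫⁻ x, g x ∂(Measure.pi fun _ : Fin (n + 1) => μ) =
      ∫⁻ x', ∫⁻ x, g (Fin.snoc x' x) ∂μ ∂(Measure.pi fun _ : Fin n => μ) := by
  have h := (measurePreserving_piFinSuccAbove (fun _ : Fin (n + 1) => μ) (Fin.last n)).symm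
  rw [← h.lintegral_comp hg, lintegral_prod_symm _ (by
    exact (hg.comp (MeasurableEquiv.measurable _)).aemeasurable)]
  refine lintegral_congr fun x' => lintegral_congr fun x => ?_
  congr 1
  exact Fin.insertNth_last' x x'

theorem dTV_nonneg (P0 P1 : Measure Ω) : 0 ≤ dTV P0 P1 :=
  Real.iSup_nonneg fun _ => abs_nonneg _

theorem abs_sub_le_dTV (P0 P1 : Measure Ω) [IsProbabilityMeasure P0] [IsProbabilityMeasure P1]
    (A : Set Ω) (hA : MeasurableSet A) : |(P0 A).toReal - (P1 A).toReal| ≤ dTV P0 P1 := by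
  refine le_ciSup (f := fun A : {A : Set Ω // MeasurableSet A} =>
    |(P0 A.1).toReal - (P1 A.1).toReal|) ⟨1, ?_⟩ ⟨A, hA⟩
  rintro _ ⟨B, rfl⟩
  have h0 : (P0 B.1).toReal ≤ 1 := measureReal_le_one (μ := P0)
  have h1 : (P1 B.1).toReal ≤ 1 := measureReal_le_one (μ := P1)
  have h2 : 0 ≤ (P0 B.1).toReal := ENNReal.toReal_nonneg
  have h3 : 0 ≤ (P1 B.1).toReal := ENNReal.toReal_nonneg
  rw [abs_le]
  constructor <;> linarith

theorem dTV_symm (P0 P1 : Measure Ω) : dTV P0 P1 = dTV P1 P0 := by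
  unfold dTV
  congr 1
  funext A
  exact abs_sub_comm _ _

theorem integrable_of_bdd {μ : Measure Ω} [IsFiniteMeasure μ] {f : Ω → ℝ} (hf : Measurable f)
    {c : ℝ} (h : ∀ ω, |f ω| ≤ c) : Integrable f μ :=
  Integrable.of_bound hf.aestronglyMeasurable c (Filter.Eventually.of_forall h)

theorem lintegral_le_add_dTV (P0 P1 : Measure Ω) [IsProbabilityMeasure P0]
    [IsProbabilityMeasure P1] (k : Ω → ℝ) (hk : Measurable k) (c : ℝ)
    (h0 : ∀ x, 0 ≤ k x) (h1 : ∀ x, k x ≤ c) :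
    ∫⁻ x, ENNReal.ofReal (k x) ∂P0 ≤
      (∫⁻ x, ENNReal.ofReal (k x) ∂P1) + ENNReal.ofReal c * ENNReal.ofReal (dTV P0 P1) := by
  rw [lintegral_eq_lintegral_meas_lt P0 (Filter.Eventually.of_forall h0) hk.aemeasurable,
    lintegral_eq_lintegral_meas_lt P1 (Filter.Eventually.of_forall h0) hk.aemeasurable]
  calc ∫⁻ t in Set.Ioi (0:ℝ), P0 {a | t < k a}
      ≤ ∫⁻ t in Set.Ioi (0:ℝ), (P1 {a | t < k a} +
          (Set.Iio c).indicator (fun _ => ENNReal.ofReal (dTV P0 P1)) t) := by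
        refine lintegral_mono fun t => ?_
        by_cases ht : t < c
        · have hm : MeasurableSet {a | t < k a} := measurableSet_lt measurable_const hk
          have := abs_sub_le_dTV P0 P1 _ hm
          simp only [Set.indicator, Set.mem_Iio, ht, if_true]
          rw [← ENNReal.ofReal_toReal (measure_ne_top P0 {a | t < k a}),
            ← ENNReal.ofReal_toReal (measure_ne_top P1 {a | t < k a}),
            ← ENNReal.ofReal_add ENNReal.toReal_nonneg (dTV_nonneg _ _)]
          apply ENNReal.ofReal_le_ofReal
          linarith [(abs_le.1 this).2]
        · have : {a | t < k a} = ∅ := by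
            ext a
            simp only [Set.mem_ofPred_eq, Set.mem_empty_iff_false, iff_false]
            intro h
            exact ht (h.trans_le (h1 a))
          simp [this]
    _ = (∫⁻ t in Set.Ioi (0:ℝ), P1 {a | t < k a}) +
        ∫⁻ t in Set.Ioi (0:ℝ), (Set.Iio c).indicator (fun _ => ENNReal.ofReal (dTV P0 P1)) t :=
        lintegral_add_right _ (measurable_const.indicator measurableSet_Iio)
    _ = _ := by
        congr 1
        rw [lintegral_indicator measurableSet_Iio, lintegral_const,
          Measure.restrict_restrict measurableSet_Iio, Measure.restrict_apply .univ,
          Set.univ_inter, Set.inter_comm, Set.Ioi_inter_Iio, Real.volume_Ioo, sub_zero, mul_comm]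

theorem integral_le_add_dTV (P0 P1 : Measure Ω) [IsProbabilityMeasure P0]
    [IsProbabilityMeasure P1] (k : Ω → ℝ) (hk : Measurable k) (c : ℝ) (hc : 0 ≤ c)
    (h0 : ∀ x, 0 ≤ k x) (h1 : ∀ x, k x ≤ c) :
    ∫ x, k x ∂P0 ≤ ∫ x, k x ∂P1 + c * dTV P0 P1 := by
  have hi : ∀ μ : Measure Ω, IsProbabilityMeasure μ → Integrable k μ := fun μ _ =>
    integrable_of_bdd hk (c := c) fun x => by rw [abs_of_nonneg (h0 x)]; exact h1 x
  have h := lintegral_le_add_dTV P0 P1 k hk c h0 h1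
  have e0 := ofReal_integral_eq_lintegral_ofReal (hi P0 inferInstance)
    (Filter.Eventually.of_forall h0)
  have e1 := ofReal_integral_eq_lintegral_ofReal (hi P1 inferInstance)
    (Filter.Eventually.of_forall h0)
  have n1 : 0 ≤ ∫ x, k x ∂P1 := integral_nonneg h0
  have n2 : 0 ≤ c * dTV P0 P1 := mul_nonneg hc (dTV_nonneg _ _)
  rw [← e0, ← e1, ← ENNReal.ofReal_mul hc, ← ENNReal.ofReal_add n1 n2] at h
  exact (ENNReal.ofReal_le_ofReal_iff (add_nonneg n1 n2)).1 h

/-- Contraction for functions with bounded ratios. -/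
theorem integral_ratio_le (P0 P1 : Measure Ω) [IsProbabilityMeasure P0]
    [IsProbabilityMeasure P1] (k : Ω → ℝ) (hk : Measurable k) (E : ℝ)
    (h0 : ∀ x, 0 ≤ k x) (h1 : ∀ x y, k x ≤ E * k y) (hE : 1 ≤ E) (P2 : Measure Ω)
    [IsProbabilityMeasure P2] :
    ∫ x, k x ∂P0 ≤ ∫ x, k x ∂P1 + (E - 1) * dTV P0 P1 * ∫ x, k x ∂P2 := by
  obtain ⟨x0⟩ : Nonempty Ω := P0.nonempty_of_neZero
  have hne : Nonempty Ω := ⟨x0⟩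
  have hEpos : 0 < E := by linarith
  set m := ⨅ x, k x with hm
  have hbdd : BddBelow (Set.range k) := ⟨0, by rintro _ ⟨x, rfl⟩; exact h0 x⟩
  have hmle : ∀ x, m ≤ k x := fun x => ciInf_le hbdd x
  have hm0 : 0 ≤ m := le_ciInf h0
  have hEm : ∀ x, k x ≤ E * m := by
    intro x
    have : k x / E ≤ m := le_ciInf fun y => by
      rw [div_le_iff₀ hEpos, mul_comm]; exact h1 x y
    rw [div_le_iff₀ hEpos] at this
    linarith
  have hi : ∀ μ : Measure Ω, IsProbabilityMeasure μ → Integrable k μ := fun μ _ =>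
    integrable_of_bdd hk (c := E * m) fun x => by rw [abs_of_nonneg (h0 x)]; exact hEm x
  have key := integral_le_add_dTV P0 P1 (fun x => k x - m) (hk.sub_const m) ((E - 1) * m)
    (mul_nonneg (by linarith) hm0) (fun x => by linarith [hmle x]) (fun x => by linarith [hEm x])
  rw [integral_sub (hi P0 inferInstance) (integrable_const _),
    integral_sub (hi P1 inferInstance) (integrable_const _)] at key
  simp only [integral_const, probReal_univ, smul_eq_mul, one_mul] at key
  have hm2 : m ≤ ∫ x, k x ∂P2 := by
    have := integral_mono (μ := P2) (integrable_const m) (hi P2 inferInstance) hmle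
    simpa using this
  have : (E - 1) * m * dTV P0 P1 ≤ (E - 1) * dTV P0 P1 * ∫ x, k x ∂P2 := by
    have := mul_le_mul_of_nonneg_left hm2 (mul_nonneg (sub_nonneg.2 hE) (dTV_nonneg P0 P1))
    linarith
  linarith

theorem abs_integral_sub_le (ν0 ν1 : Measure Ω) [IsProbabilityMeasure ν0]
    [IsProbabilityMeasure ν1] (δ : ℝ) (hδ : 0 ≤ δ)
    (hu : ∀ A, MeasurableSet A → (ν1 A).toReal ≤ (ν0 A).toReal + δ * (ν0 A).toReal)
    (hl : ∀ A, MeasurableSet A → (ν0 A).toReal ≤ (ν1 A).toReal + δ * (ν0 A).toReal)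
    (f : Ω → ℝ) (hf : Measurable f) (c : ℝ) (hc : ∀ x, |f x| ≤ c) :
    |∫ x, f x ∂ν1 - ∫ x, f x ∂ν0| ≤ δ * ∫ x, |f x| ∂ν0 := by
  have hle1 : ν1 ≤ ν0 + ENNReal.ofReal δ • ν0 := by
    rw [Measure.le_iff]
    intro A hA
    have := hu A hA
    rw [Measure.add_apply, Measure.smul_apply, smul_eq_mul,
      ← ENNReal.ofReal_toReal (measure_ne_top ν0 A), ← ENNReal.ofReal_toReal (measure_ne_top ν1 A),
      ← ENNReal.ofReal_mul hδ, ← ENNReal.ofReal_add ENNReal.toReal_nonneg (by positivity)]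
    exact ENNReal.ofReal_le_ofReal this
  have hle0 : ν0 ≤ ν1 + ENNReal.ofReal δ • ν0 := by
    rw [Measure.le_iff]
    intro A hA
    have := hl A hA
    rw [Measure.add_apply, Measure.smul_apply, smul_eq_mul,
      ← ENNReal.ofReal_toReal (measure_ne_top ν0 A), ← ENNReal.ofReal_toReal (measure_ne_top ν1 A),
      ← ENNReal.ofReal_mul hδ, ← ENNReal.ofReal_add ENNReal.toReal_nonneg (by positivity)]
    exact ENNReal.ofReal_le_ofReal this
  have step : ∀ g : Ω → ℝ, Measurable g → (∀ x, 0 ≤ g x) → (∀ x, g x ≤ c) →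
      ∫ x, g x ∂ν1 ≤ ∫ x, g x ∂ν0 + δ * ∫ x, g x ∂ν0 ∧
      ∫ x, g x ∂ν0 ≤ ∫ x, g x ∂ν1 + δ * ∫ x, g x ∂ν0 := by
    intro g hg g0 gc
    have gi : ∀ μ : Measure Ω, IsFiniteMeasure μ → Integrable g μ := fun μ _ =>
      integrable_of_bdd hg (c := c) fun x => by rw [abs_of_nonneg (g0 x)]; exact gc x
    have gs : Integrable g (ENNReal.ofReal δ • ν0) := (gi ν0 inferInstance).smul_measure (by simp)
    have es : ∫ x, g x ∂(ENNReal.ofReal δ • ν0) = δ * ∫ x, g x ∂ν0 := by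
      rw [integral_smul_measure, ENNReal.toReal_ofReal hδ, smul_eq_mul]
    constructor
    · rw [← es, ← integral_add_measure (gi ν0 inferInstance) gs]
      exact integral_mono_measure hle1 (Filter.Eventually.of_forall g0)
        ((gi ν0 inferInstance).add_measure gs)
    · rw [← es, ← integral_add_measure (gi ν1 inferInstance) gs]
      exact integral_mono_measure hle0 (Filter.Eventually.of_forall g0)
        ((gi ν1 inferInstance).add_measure gs)
  have hp := step (fun x => max (f x) 0) (hf.max measurable_const) (fun x => le_max_right _ _)
    (fun x => max_le ((le_abs_self _).trans (hc x)) ((abs_nonneg _).trans (hc x)))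
  have hm := step (fun x => max (-f x) 0) (hf.neg.max measurable_const) (fun x => le_max_right _ _)
    (fun x => max_le ((neg_le_abs _).trans (hc x)) ((abs_nonneg _).trans (hc x)))
  have ip : ∀ μ : Measure Ω, IsProbabilityMeasure μ → Integrable (fun x => max (f x) 0) μ :=
    fun μ _ => (integrable_of_bdd hf hc).sup (integrable_const 0)
  have im : ∀ μ : Measure Ω, IsProbabilityMeasure μ → Integrable (fun x => max (-f x) 0) μ :=
    fun μ _ => (integrable_of_bdd hf hc).neg.sup (integrable_const 0)
  have ef : ∀ μ : Measure Ω, IsProbabilityMeasure μ →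
      ∫ x, f x ∂μ = ∫ x, max (f x) 0 ∂μ - ∫ x, max (-f x) 0 ∂μ := by
    intro μ hμ
    rw [← integral_sub (ip μ hμ) (im μ hμ)]
    refine integral_congr_ae (Filter.Eventually.of_forall fun x => ?_)
    rcases le_total (f x) 0 with h | h
    · simp [h]
    · simp [h]
  have ea : ∫ x, |f x| ∂ν0 = ∫ x, max (f x) 0 ∂ν0 + ∫ x, max (-f x) 0 ∂ν0 := by
    rw [← integral_add (ip ν0 inferInstance) (im ν0 inferInstance)]
    refine integral_congr_ae (Filter.Eventually.of_forall fun x => ?_)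
    rcases le_total (f x) 0 with h | h
    · simp [h, abs_of_nonpos h]
    · simp [h, abs_of_nonneg h]
  rw [ef ν0 inferInstance, ef ν1 inferInstance, ea, abs_le]
  constructor <;> linarith [hp.1, hp.2, hm.1, hm.2]

theorem integral_sub_sq (ν : Measure Ω) [IsProbabilityMeasure ν] (f : Ω → ℝ) (hf : Measurable f)
    (c : ℝ) (hc : ∀ x, |f x| ≤ c) (a : ℝ) :
    ∫ x, (f x - a) ^ 2 ∂ν = ∫ x, f x ^ 2 ∂ν - 2 * a * ∫ x, f x ∂ν + a ^ 2 := by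
  have i1 : Integrable f ν := integrable_of_bdd hf hc
  have i2 : Integrable (fun x => f x ^ 2) ν := integrable_of_bdd (hf.pow_const 2) (c := c ^ 2)
    fun x => by
      rw [abs_pow]; exact pow_le_pow_left₀ (abs_nonneg _) (hc x) 2
  have : ∫ x, (f x - a) ^ 2 ∂ν = ∫ x, (f x ^ 2 - 2 * a * f x + a ^ 2) ∂ν := by
    congr 1; funext x; ring
  have i3 : Integrable (fun x => f x ^ 2 - 2 * a * f x) ν := i2.sub (i1.const_mul _)
  rw [this, integral_add i3 (integrable_const _),
    integral_sub i2 (i1.const_mul _), integral_const_mul]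
  simp

theorem sq_integral_le (ν : Measure Ω) [IsProbabilityMeasure ν] (f : Ω → ℝ) (hf : Measurable f)
    (c : ℝ) (hc : ∀ x, |f x| ≤ c) : (∫ x, f x ∂ν) ^ 2 ≤ ∫ x, f x ^ 2 ∂ν := by
  have h : 0 ≤ ∫ x, (f x - ∫ x, f x ∂ν) ^ 2 ∂ν := integral_nonneg fun x => sq_nonneg _
  rw [integral_sub_sq ν f hf c hc] at h
  nlinarith

theorem chi_step (ν0 ν1 : Measure Ω) [IsProbabilityMeasure ν0]
    [IsProbabilityMeasure ν1] (δ : ℝ) (hδ : 0 ≤ δ)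
    (hu : ∀ A, MeasurableSet A → (ν1 A).toReal ≤ (ν0 A).toReal + δ * (ν0 A).toReal)
    (hl : ∀ A, MeasurableSet A → (ν0 A).toReal ≤ (ν1 A).toReal + δ * (ν0 A).toReal)
    (f : Ω → ℝ) (hf : Measurable f) (c : ℝ) (hc : ∀ x, |f x| ≤ c) :
    (∫ x, f x ∂ν1) ^ 2 ≤ (1 + δ ^ 2) * ∫ x, f x ^ 2 ∂ν0 := by
  set a := ∫ x, f x ∂ν0 with ha
  have hb : ∀ x, |f x - a| ≤ c + |a| := fun x => (abs_sub _ _).trans (by linarith [hc x])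
  have h1 := abs_integral_sub_le ν0 ν1 δ hδ hu hl (fun x => f x - a) (hf.sub_const a) _ hb
  have i0 : Integrable f ν0 := integrable_of_bdd hf hc
  have i1 : Integrable f ν1 := integrable_of_bdd hf hc
  rw [integral_sub i0 (integrable_const _), integral_sub i1 (integrable_const _)] at h1
  simp only [integral_const, probReal_univ, smul_eq_mul, one_mul, ← ha, sub_self, sub_zero] at h1
  have h2 := sq_integral_le ν0 (fun x => |f x - a|) (hf.sub_const a).abs (c + |a|)
    (fun x => by rw [abs_abs]; exact hb x)
  simp only [sq_abs] at h2
  rw [integral_sub_sq ν0 f hf c hc, ← ha] at h2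
  set w := ∫ x, |f x - a| ∂ν0
  set s := ∫ x, f x ^ 2 ∂ν0
  set b := ∫ x, f x ∂ν1
  have hw : 0 ≤ w := integral_nonneg fun x => abs_nonneg _
  have h3 : (b - a) ^ 2 ≤ δ ^ 2 * w ^ 2 := by
    rw [← mul_pow, ← sq_abs]; exact pow_le_pow_left₀ (abs_nonneg _) h1 2
  have h4 : a * (b - a) ≤ |a| * (δ * w) := (le_abs_self _).trans (by
    rw [abs_mul]; exact mul_le_mul_of_nonneg_left h1 (abs_nonneg _))
  have h5 := sq_nonneg (δ * |a| - w)
  have h6 : |a| ^ 2 = a ^ 2 := sq_abs a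
  have h7 : δ ^ 2 * w ^ 2 ≤ δ ^ 2 * (s - a ^ 2) :=
    mul_le_mul_of_nonneg_left (by nlinarith) (sq_nonneg _)
  have h8 : b ^ 2 = a ^ 2 + 2 * (a * (b - a)) + (b - a) ^ 2 := by ring
  have h9 : (δ * |a| - w) ^ 2 = δ ^ 2 * a ^ 2 - 2 * (|a| * (δ * w)) + w ^ 2 := by
    rw [← h6]; ring
  nlinarith

/-- Kernel associated with the sequential composition. -/
noncomputable def seqKer (K : (i : ℕ) → Kernel (X × (Fin i → Z)) Z) :
    (n : ℕ) → Kernel (Fin n → X) (Fin n → Z)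
  | 0 => Kernel.const _ (Measure.dirac fun i => i.elim0)
  | n + 1 =>
    (((seqKer K n).comap (fun (x : Fin (n + 1) → X) (i : Fin n) => x i.castSucc)
        (measurable_pi_iff.2 fun i => measurable_pi_apply _)) ⊗ₖ
      ((K n).comap (fun p : (Fin (n + 1) → X) × (Fin n → Z) => (p.1 (Fin.last n), p.2))
        (((measurable_pi_apply _).comp measurable_fst).prodMk measurable_snd))).map
      (fun p : (Fin n → Z) × Z => (Fin.snoc p.1 p.2 : Fin (n + 1) → Z))

theorem seqKer_markov (K : (i : ℕ) → Kernel (X × (Fin i → Z)) Z) (hK : ∀ i, IsMarkovKernel (K i))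
    (n : ℕ) : IsMarkovKernel (seqKer K n) := by
  induction n with
  | zero => unfold seqKer; infer_instance
  | succ n ih =>
    unfold seqKer
    have := hK n
    exact Kernel.IsMarkovKernel.map _ (measurable_snoc_pair n)

theorem lintegral_seqKer_succ (K : (i : ℕ) → Kernel (X × (Fin i → Z)) Z)
    (hK : ∀ i, IsMarkovKernel (K i)) (n : ℕ) (x : Fin (n + 1) → X)
    (g : (Fin (n + 1) → Z) → ℝ≥0∞) (hg : Measurable g) :
    ∫⁻ z, g z ∂(seqKer K (n + 1) x) =
      ∫⁻ zpre, ∫⁻ zn, g (Fin.snoc zpre zn) ∂(K n (x (Fin.last n), zpre))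
        ∂(seqKer K n fun i => x i.castSucc) := by
  have := hK n
  have := seqKer_markov K hK n
  rw [seqKer, Kernel.lintegral_map _ (measurable_snoc_pair n) _ hg,
    Kernel.lintegral_compProd _ _ _ (by exact hg.comp (measurable_snoc_pair n))]
  rfl

theorem measurable_inner (K : Kernel (X × Ω) Z) [IsMarkovKernel K] (g : Ω × Z → ℝ≥0∞)
    (hg : Measurable g) :
    Measurable (fun p : X × Ω => ∫⁻ zn, g (p.2, zn) ∂(K p)) := by
  have h : Measurable (fun q : (X × Ω) × Z => g (q.1.2, q.2)) := by fun_prop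
  exact h.lintegral_kernel_prod_right'

theorem seqIntegral_eq (K : (i : ℕ) → Kernel (X × (Fin i → Z)) Z)
    (hK : ∀ i, IsMarkovKernel (K i)) (n : ℕ) (x : Fin n → X)
    (g : (Fin n → Z) → ℝ≥0∞) (hg : Measurable g) :
    seqIntegral (fun i p => K i p) n x g = ∫⁻ z, g z ∂(seqKer K n x) := by
  induction n with
  | zero =>
    rw [seqIntegral, seqKer, Kernel.const_apply, lintegral_dirac' _ hg]
  | succ n ih =>
    have := hK n
    rw [lintegral_seqKer_succ K hK n x g hg, seqIntegral, ih]
    have h := measurable_inner (K n) (fun p => g (Fin.snoc p.1 p.2))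
      (hg.comp (measurable_snoc_pair n))
    exact h.comp (measurable_const.prodMk measurable_id)

/-- The averaged conditional kernel. -/
noncomputable def avgKer (K : (i : ℕ) → Kernel (X × (Fin i → Z)) Z) (P : Measure X) (n : ℕ) :
    Kernel (Fin n → Z) Z :=
  (K n) ∘ₖ ((Kernel.const (Fin n → Z) P) ×ₖ Kernel.id)

theorem lintegral_avgKer (K : (i : ℕ) → Kernel (X × (Fin i → Z)) Z)
    (P : Measure X) [IsProbabilityMeasure P] (n : ℕ) (z : Fin n → Z) (g : Z → ℝ≥0∞)
    (hg : Measurable g) :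
    ∫⁻ y, g y ∂(avgKer K P n z) = ∫⁻ x, ∫⁻ y, g y ∂(K n (x, z)) ∂P := by
  have hm : Measurable (fun p : X × (Fin n → Z) => ∫⁻ y, g y ∂(K n p)) :=
    Measurable.lintegral_kernel hg
  rw [avgKer, Kernel.lintegral_comp _ _ _ hg, Kernel.prod_apply, Kernel.const_apply,
    Kernel.id_apply, lintegral_prod _ hm.aemeasurable]
  refine lintegral_congr fun x => ?_
  rw [lintegral_dirac' _ (by exact hm.comp (measurable_const.prodMk measurable_id))]

theorem avgKer_markov (K : (i : ℕ) → Kernel (X × (Fin i → Z)) Z) (hK : ∀ i, IsMarkovKernel (K i))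
    (P : Measure X) [IsProbabilityMeasure P] (n : ℕ) : IsMarkovKernel (avgKer K P n) := by
  have := hK n
  unfold avgKer
  infer_instance

/-- The law of the privatized observations. -/
noncomputable def seqLaw (K : (i : ℕ) → Kernel (X × (Fin i → Z)) Z) (P : Measure X) :
    (n : ℕ) → Measure (Fin n → Z)
  | 0 => Measure.dirac fun i => i.elim0
  | n + 1 => (seqLaw K P n ⊗ₘ avgKer K P n).map
      (fun p : (Fin n → Z) × Z => (Fin.snoc p.1 p.2 : Fin (n + 1) → Z))

theorem seqLaw_prob (K : (i : ℕ) → Kernel (X × (Fin i → Z)) Z) (hK : ∀ i, IsMarkovKernel (K i))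
    (P : Measure X) [IsProbabilityMeasure P] (n : ℕ) : IsProbabilityMeasure (seqLaw K P n) := by
  induction n with
  | zero => unfold seqLaw; infer_instance
  | succ n ih =>
    have := avgKer_markov K hK P n
    unfold seqLaw
    exact Measure.isProbabilityMeasure_map (measurable_snoc_pair n).aemeasurable

theorem lintegral_privProd_seqKer (K : (i : ℕ) → Kernel (X × (Fin i → Z)) Z)
    (hK : ∀ i, IsMarkovKernel (K i)) (P : Measure X) [IsProbabilityMeasure P] (n : ℕ)
    (g : (Fin n → Z) → ℝ≥0∞) (hg : Measurable g) :
    ∫⁻ x, ∫⁻ z, g z ∂(seqKer K n x) ∂(Measure.pi fun _ : Fin n => P) =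
      ∫⁻ z, g z ∂(seqLaw K P n) := by
  induction n with
  | zero =>
    simp only [seqKer, seqLaw, Kernel.const_apply]
    simp
  | succ n ih =>
    have := hK n
    have := avgKer_markov K hK P n
    have := seqLaw_prob K hK P n
    have := seqKer_markov K hK n
    have hF := measurable_inner (K n) (fun p => g (Fin.snoc p.1 p.2))
      (hg.comp (measurable_snoc_pair n))
    rw [lintegral_pi_snoc _ _ _ (Measurable.lintegral_kernel hg), seqLaw,
      lintegral_map hg (measurable_snoc_pair n),
      Measure.lintegral_compProd (by exact hg.comp (measurable_snoc_pair n))]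
    have hG : Measurable (fun z : Fin n → Z => ∫⁻ b, g (Fin.snoc z b) ∂(avgKer K P n z)) :=
      (hg.comp (measurable_snoc_pair n)).lintegral_kernel_prod_right'
    have e1 : ∀ z : Fin n → Z, ∫⁻ b, g (Fin.snoc z b) ∂(avgKer K P n z) =
        ∫⁻ x, ∫⁻ b, g (Fin.snoc z b) ∂(K n (x, z)) ∂P := fun z =>
      lintegral_avgKer K P n z _ (hg.comp ((measurable_snoc_pair n).comp measurable_prodMk_left))
    rw [← ih _ hG]
    refine lintegral_congr fun x' => ?_
    simp only [lintegral_seqKer_succ K hK n _ g hg, Fin.snoc_last, Fin.snoc_castSucc, e1]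
    exact lintegral_lintegral_swap hF.aemeasurable

theorem privProd_eq_seqLaw (K : (i : ℕ) → Kernel (X × (Fin i → Z)) Z)
    (hK : ∀ i, IsMarkovKernel (K i)) (P : Measure X) [IsProbabilityMeasure P] (n : ℕ)
    (Q : Kernel (Fin n → X) (Fin n → Z))
    (hQ : ∀ (x : Fin n → X) (A : Set (Fin n → Z)), MeasurableSet A →
      Q x A = seqIntegral (fun i p => K i p) n x (A.indicator fun _ => 1)) :
    privProd n (fun x => Q x) P = seqLaw K P n := by
  ext A hA
  have hm : Measurable (A.indicator fun _ => (1 : ℝ≥0∞)) := measurable_const.indicator hA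
  rw [privProd, Measure.bind_apply hA Q.aemeasurable]
  simp only [hQ _ A hA, seqIntegral_eq K hK n _ _ hm]
  rw [lintegral_privProd_seqKer K hK P n _ hm, lintegral_indicator hA]
  simp

theorem integral_seqLaw_succ (K : (i : ℕ) → Kernel (X × (Fin i → Z)) Z)
    (hK : ∀ i, IsMarkovKernel (K i)) (P : Measure X) [IsProbabilityMeasure P] (n : ℕ)
    (f : (Fin (n + 1) → Z) → ℝ) (hf : Measurable f) (c : ℝ) (hc : ∀ x, |f x| ≤ c) :
    ∫ z, f z ∂(seqLaw K P (n + 1)) =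
      ∫ z, ∫ y, f (Fin.snoc z y) ∂(avgKer K P n z) ∂(seqLaw K P n) := by
  have := avgKer_markov K hK P n
  have := seqLaw_prob K hK P n
  rw [seqLaw, integral_map (measurable_snoc_pair n).aemeasurable hf.aestronglyMeasurable,
    Measure.integral_compProd]
  exact integrable_of_bdd (hf.comp (measurable_snoc_pair n)) (fun _ => hc _)

theorem seqLaw_chi (K : (i : ℕ) → Kernel (X × (Fin i → Z)) Z)
    (hK : ∀ i, IsMarkovKernel (K i)) (P0 P1 : Measure X) [IsProbabilityMeasure P0]
    [IsProbabilityMeasure P1] (δ : ℝ) (hδ : 0 ≤ δ)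
    (hu : ∀ n z A, MeasurableSet A → (avgKer K P1 n z A).toReal ≤
      (avgKer K P0 n z A).toReal + δ * (avgKer K P0 n z A).toReal)
    (hl : ∀ n z A, MeasurableSet A → (avgKer K P0 n z A).toReal ≤
      (avgKer K P1 n z A).toReal + δ * (avgKer K P0 n z A).toReal) (n : ℕ)
    (f : (Fin n → Z) → ℝ) (hf : Measurable f) (c : ℝ) (hc : ∀ x, |f x| ≤ c) :
    (∫ z, f z ∂(seqLaw K P1 n)) ^ 2 ≤ (1 + δ ^ 2) ^ n * ∫ z, f z ^ 2 ∂(seqLaw K P0 n) := by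
  induction n with
  | zero =>
    have hs : (fun z : Fin 0 → Z => f z) = fun _ => f fun i => i.elim0 := by
      funext z; congr 1; funext i; exact i.elim0
    have hs2 : (fun z : Fin 0 → Z => f z ^ 2) = fun _ => f (fun i => i.elim0) ^ 2 := by
      funext z; congr 2; funext i; exact i.elim0
    rw [hs, hs2]
    simp [seqLaw]
  | succ n ih =>
    have := avgKer_markov K hK P0 n
    have := avgKer_markov K hK P1 n
    have := seqLaw_prob K hK P0 n
    have hsn := measurable_snoc_pair (Y := Z) n
    have hsq : ∀ x, |f x ^ 2| ≤ c ^ 2 := fun x => by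
      rw [abs_pow]; exact pow_le_pow_left₀ (abs_nonneg _) (hc x) 2
    have aux : ∀ (κ : Kernel (Fin n → Z) Z) [IsMarkovKernel κ] (h : (Fin (n + 1) → Z) → ℝ)
        (c : ℝ), Measurable h → (∀ x, |h x| ≤ c) →
        Measurable (fun z => ∫ y, h (Fin.snoc z y) ∂(κ z)) ∧
          ∀ z, |∫ y, h (Fin.snoc z y) ∂(κ z)| ≤ c := by
      intro κ _ h c hh hc
      constructor
      · exact (StronglyMeasurable.integral_kernel_prod_right'
          (hh.comp hsn).stronglyMeasurable).measurable
      · intro z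
        have := norm_integral_le_of_norm_le_const (μ := κ z) (f := fun y => h (Fin.snoc z y))
          (C := c) (Filter.Eventually.of_forall fun y => hc _)
        simpa using this
    obtain ⟨m1, b1⟩ := aux (avgKer K P1 n) f c hf hc
    obtain ⟨m2, b2⟩ := aux (avgKer K P0 n) (fun x => f x ^ 2) (c ^ 2) (hf.pow_const 2) hsq
    rw [integral_seqLaw_succ K hK P1 n f hf c hc,
      integral_seqLaw_succ K hK P0 n _ (hf.pow_const 2) (c ^ 2) hsq]
    refine (ih _ m1 b1).trans ?_
    rw [pow_succ (1 + δ ^ 2) n, mul_assoc]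
    refine mul_le_mul_of_nonneg_left ?_ (by positivity)
    rw [← integral_const_mul]
    refine integral_mono ?_ ?_ ?_
    · exact integrable_of_bdd (m1.pow_const 2) (c := c ^ 2) fun z => by
        rw [abs_pow]; exact pow_le_pow_left₀ (abs_nonneg _) (b1 z) 2
    · exact (integrable_of_bdd m2 b2).const_mul _
    · intro z
      exact chi_step (avgKer K P0 n z) (avgKer K P1 n z) δ hδ (hu n z) (hl n z)
        (fun y => f (Fin.snoc z y)) (hf.comp (hsn.comp measurable_prodMk_left)) c (fun _ => hc _)

theorem avgKer_ratio (K : (i : ℕ) → Kernel (X × (Fin i → Z)) Z)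
    (hK : ∀ i, IsMarkovKernel (K i)) (α : ℝ) (hα : 0 < α)
    (hp : ∀ (i : ℕ) (x x' : X) (zpre : Fin i → Z) (A : Set Z), MeasurableSet A →
      K i (x, zpre) A ≤ ENNReal.ofReal (Real.exp α) * K i (x', zpre) A)
    (P0 P1 P2 : Measure X) [IsProbabilityMeasure P0]
    [IsProbabilityMeasure P1] [IsProbabilityMeasure P2] (n : ℕ) (z : Fin n → Z) (A : Set Z)
    (hA : MeasurableSet A) :
    (avgKer K P0 n z A).toReal ≤ (avgKer K P1 n z A).toReal +
      (Real.exp α - 1) * dTV P0 P1 * (avgKer K P2 n z A).toReal := by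
  have := hK n
  have hm : Measurable (fun x => K n (x, z) A) :=
    (Kernel.measurable_coe (K n) hA).comp (measurable_id.prodMk measurable_const)
  have e : ∀ P : Measure X, IsProbabilityMeasure P →
      (avgKer K P n z A).toReal = ∫ x, (K n (x, z) A).toReal ∂P := by
    intro P _
    rw [integral_toReal hm.aemeasurable (Filter.Eventually.of_forall fun x => measure_lt_top _ _)]
    have := lintegral_avgKer K P n z (A.indicator fun _ => 1) (measurable_const.indicator hA)
    simp only [lintegral_indicator hA] at this
    simp only [lintegral_const, Measure.restrict_apply .univ, Set.univ_inter, one_mul] at this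
    rw [this]
  rw [e P0 inferInstance, e P1 inferInstance, e P2 inferInstance]
  refine integral_ratio_le P0 P1 _ hm.ennreal_toReal _ (fun _ => ENNReal.toReal_nonneg) ?_
    (Real.one_le_exp hα.le) P2
  intro x y
  have := ENNReal.toReal_mono (ENNReal.mul_ne_top ENNReal.ofReal_ne_top (measure_ne_top _ _))
    (hp n x y z A hA)
  rwa [ENNReal.toReal_mul, ENNReal.toReal_ofReal (Real.exp_pos _).le] at this

theorem pow_bound (δ : ℝ) (n : ℕ) (h : n * δ ^ 2 ≤ 1 / 2) :
    (1 + δ ^ 2) ^ n ≤ 1 + 2 * (n * δ ^ 2) := by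
  have h0 : 0 ≤ n * δ ^ 2 := by positivity
  have h1 : (1 + δ ^ 2) ^ n ≤ Real.exp (n * δ ^ 2) := by
    rw [Real.exp_nat_mul]
    exact pow_le_pow_left₀ (by positivity) (by linarith [Real.add_one_le_exp (δ ^ 2)]) n
  refine h1.trans ?_
  set x := (n : ℝ) * δ ^ 2
  have h2 := Real.add_one_le_exp (-x)
  have h3 : Real.exp x * Real.exp (-x) = 1 := by rw [← Real.exp_add]; simp
  have h4 := Real.exp_pos x
  have h5 : Real.exp x * (1 - x) ≤ 1 := by
    rw [← h3]; exact mul_le_mul_of_nonneg_left (by linarith) h4.le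
  have h6 : 1 ≤ (1 + 2 * x) * (1 - x) := by nlinarith
  exact le_of_mul_le_mul_right (h5.trans h6) (by linarith)

theorem testRisk_eq (μ0 μ1 : Measure Ω) [IsProbabilityMeasure μ0] [IsProbabilityMeasure μ1]
    (φ : Ω → ℝ) (hφ : IsTest φ) :
    testRisk μ0 μ1 φ = 1 - (∫ x, φ x ∂μ1 - ∫ x, φ x ∂μ0) := by
  have hb : ∀ x, |φ x| ≤ 1 := fun x => by
    rw [abs_of_nonneg (hφ.2 x).1]; exact (hφ.2 x).2
  unfold testRisk
  rw [integral_sub (integrable_const _) (integrable_of_bdd hφ.1 hb)]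
  simp
  ring

theorem chi_to_tv (M0 M1 : Measure Ω) [IsProbabilityMeasure M0] [IsProbabilityMeasure M1]
    (C : ℝ) (hC : 1 ≤ C)
    (h : ∀ f : Ω → ℝ, Measurable f → ∀ c : ℝ, (∀ x, |f x| ≤ c) →
      (∫ z, f z ∂M1) ^ 2 ≤ C * ∫ z, f z ^ 2 ∂M0) (φ : Ω → ℝ) (hφ : IsTest φ) :
    (∫ z, φ z ∂M1 - ∫ z, φ z ∂M0) ^ 2 ≤ C - 1 := by
  have hb : ∀ x, |φ x| ≤ 1 := fun x => by
    rw [abs_of_nonneg (hφ.2 x).1]; exact (hφ.2 x).2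
  have i0 : Integrable φ M0 := integrable_of_bdd hφ.1 hb
  have i1 : Integrable φ M1 := integrable_of_bdd hφ.1 hb
  set a := ∫ z, φ z ∂M0 with ha
  set b := ∫ z, φ z ∂M1 with hb'
  set s := ∫ z, φ z ^ 2 ∂M0 with hs
  have hs1 : s ≤ 1 := by
    have : s ≤ ∫ _z, (1 : ℝ) ∂M0 := by
      refine integral_mono (integrable_of_bdd (hφ.1.pow_const 2) (c := 1) fun x => ?_)
        (integrable_const _) fun x => ?_
      · rw [abs_pow]; exact pow_le_one₀ (abs_nonneg _) (hb x)
      · exact pow_le_one₀ (hφ.2 x).1 (hφ.2 x).2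
    simpa using this
  have key : ∀ t : ℝ, (b - t) ^ 2 ≤ C * (s - 2 * t * a + t ^ 2) := by
    intro t
    have := h (fun x => φ x - t) (hφ.1.sub_const t) (1 + |t|)
      (fun x => (abs_sub _ _).trans (by linarith [hb x]))
    rw [integral_sub_sq M0 φ hφ.1 1 hb, integral_sub i1 (integrable_const _)] at this
    simpa [← ha, ← hb', ← hs] using this
  have d := discrim_le_zero (a := C - 1) (b := 2 * (b - a)) (c := C * (s - a ^ 2) - (b - a) ^ 2)
    (fun u => by have := key (a + u); nlinarith)
  unfold discrim at d
  have d2 : C * (b - a) ^ 2 ≤ C * ((C - 1) * (s - a ^ 2)) := by nlinarith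
  have d3 := le_of_mul_le_mul_left d2 (by linarith)
  nlinarith [mul_nonneg (sub_nonneg.2 hC) (sq_nonneg a), mul_nonneg (sub_nonneg.2 hC) (sub_nonneg.2 hs1)]

theorem gTV_bound (P : Set (Measure X)) (hP : ∀ μ ∈ P, IsProbabilityMeasure μ)
    (n : ℕ) (hn : 0 < n) (η : ℝ) (α : ℝ) (hα : 0 < α)
    (Q : Kernel (Fin n → X) (Fin n → Z)) (hQ : IsMarkovKernel Q) (hS : IsSeqInteractive n α Q) :
    ENNReal.ofReal ((1 - η) / Real.sqrt (2 * n * (Real.exp α - 1) ^ 2))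
          ≤ gDist dTV (privProd n fun x => Q x) P η := by
  obtain ⟨K, hK, hp, hQK⟩ := hS
  unfold gDist
  refine le_iInf fun P0 => le_iInf fun h0 => le_iInf fun P1 => le_iInf fun h1 => le_iInf fun ha => ?_
  have := hP P0 h0
  have := hP P1 h1
  apply ENNReal.ofReal_le_ofReal
  have hn' : (0 : ℝ) < n := Nat.cast_pos.2 hn
  have he : 0 < Real.exp α - 1 := by linarith [Real.add_one_lt_exp hα.ne']
  have hspos : 0 < Real.sqrt (2 * n * (Real.exp α - 1) ^ 2) := Real.sqrt_pos.2 (by positivity)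
  rw [div_le_iff₀ hspos]
  set δ := (Real.exp α - 1) * dTV P0 P1 with hδ
  have hδ0 : 0 ≤ δ := mul_nonneg he.le (dTV_nonneg _ _)
  have es : dTV P0 P1 * Real.sqrt (2 * n * (Real.exp α - 1) ^ 2) = Real.sqrt (2 * n * δ ^ 2) := by
    rw [hδ, mul_pow, ← mul_assoc, Real.sqrt_mul (by positivity) (dTV P0 P1 ^ 2),
      Real.sqrt_sq (dTV_nonneg _ _), mul_comm]
  rw [es]
  by_contra hcon
  push Not at hcon
  have hprob0 := privProd_prob n Q P0
  have hprob1 := privProd_prob n Q P1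
  have hge : ∀ φ : (Fin n → Z) → ℝ, IsTest φ → 1 - Real.sqrt (2 * n * δ ^ 2) ≤
      testRisk (privProd n (fun x => Q x) P0) (privProd n (fun x => Q x) P1) φ := by
    intro φ hφ
    rcases le_total (1 / 2 : ℝ) (n * δ ^ 2) with hbig | hsmall
    · have : (1 : ℝ) ≤ Real.sqrt (2 * n * δ ^ 2) := by
        rw [Real.le_sqrt' one_pos]; linarith
      have h2 : 0 ≤ testRisk (privProd n (fun x => Q x) P0) (privProd n (fun x => Q x) P1) φ :=
        add_nonneg (integral_nonneg fun ω => (hφ.2 ω).1)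
          (integral_nonneg fun ω => sub_nonneg.2 (hφ.2 ω).2)
      linarith
    · rw [testRisk_eq _ _ φ hφ]
      have hchi := fun f hf c hc => seqLaw_chi K hK P0 P1 δ hδ0
        (fun n z A hA => by
          have := avgKer_ratio K hK α hα hp P1 P0 P0 n z A hA
          rwa [dTV_symm P1 P0] at this)
        (fun n z A hA => avgKer_ratio K hK α hα hp P0 P1 P0 n z A hA) n f hf c hc
      rw [← privProd_eq_seqLaw K hK P0 n Q hQK, ← privProd_eq_seqLaw K hK P1 n Q hQK] at hchi
      have h3 := chi_to_tv _ _ ((1 + δ ^ 2) ^ n) (one_le_pow₀ (by nlinarith [sq_nonneg δ])) hchi φ hφ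
      have h4 := Real.le_sqrt_of_sq_le (h3.trans (by
        have := pow_bound δ n hsmall
        show (1 + δ ^ 2) ^ n - 1 ≤ 2 * n * δ ^ 2
        linarith))
      linarith
  have := le_pairAffinity _ _ _ hge
  linarith

/-- The Hellinger affinity measure with density `√(p0 p1)`. -/
noncomputable def affM (P0 P1 : Measure Ω) : Measure Ω :=
  (P0 + P1).withDensity fun ω =>
    (P0.rnDeriv (P0 + P1) ω * P1.rnDeriv (P0 + P1) ω) ^ (1 / 2 : ℝ)

theorem affM_cs (P0 P1 : Measure Ω) [IsProbabilityMeasure P0] [IsProbabilityMeasure P1]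
    (f g : Ω → ℝ≥0∞) (hf : Measurable f) (hg : Measurable g) :
    ∫⁻ x, f x ^ (1 / 2 : ℝ) * g x ^ (1 / 2 : ℝ) ∂(affM P0 P1) ≤
      (∫⁻ x, f x ∂P0) ^ (1 / 2 : ℝ) * (∫⁻ x, g x ∂P1) ^ (1 / 2 : ℝ) := by
  have a0 : P0 ≪ P0 + P1 := Measure.absolutelyContinuous_of_le (Measure.le_add_right le_rfl)
  have a1 : P1 ≪ P0 + P1 := Measure.absolutelyContinuous_of_le (Measure.le_add_left le_rfl)
  set p0 := P0.rnDeriv (P0 + P1) with hp0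
  set p1 := P1.rnDeriv (P0 + P1) with hp1
  have m0 : Measurable p0 := Measure.measurable_rnDeriv _ _
  have m1 : Measurable p1 := Measure.measurable_rnDeriv _ _
  have h2 : (0 : ℝ) ≤ 1 / 2 := by norm_num
  unfold affM
  have hd : Measurable (fun ω => (p0 ω * p1 ω) ^ (1 / 2 : ℝ)) := (m0.mul m1).pow_const _
  have hfg : Measurable (fun x => f x ^ (1 / 2 : ℝ) * g x ^ (1 / 2 : ℝ)) :=
    (hf.pow_const _).mul (hg.pow_const _)
  rw [← hp0, ← hp1, lintegral_withDensity_eq_lintegral_mul _ hd hfg]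
  have hol := ENNReal.lintegral_mul_le_Lp_mul_Lq (P0 + P1) (p := 2) (q := 2)
    Real.HolderConjugate.two_two
    (f := fun x => (p0 x * f x) ^ (1 / 2 : ℝ)) (g := fun x => (p1 x * g x) ^ (1 / 2 : ℝ))
    ((m0.mul hf).pow_const _).aemeasurable ((m1.mul hg).pow_const _).aemeasurable
  have es : ∀ y : ℝ≥0∞, (y ^ (1 / 2 : ℝ)) ^ (2 : ℝ) = y := fun y => by
    rw [← ENNReal.rpow_mul]; norm_num
  simp only [es] at hol
  rw [lintegral_rnDeriv_mul a0 hf.aemeasurable,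
    lintegral_rnDeriv_mul a1 hg.aemeasurable] at hol
  refine le_trans (le_of_eq (lintegral_congr fun x => ?_)) hol
  simp only [Pi.mul_apply, ENNReal.mul_rpow_of_nonneg _ _ h2]
  ring

theorem affM_finite (P0 P1 : Measure Ω) [IsProbabilityMeasure P0] [IsProbabilityMeasure P1] :
    IsFiniteMeasure (affM P0 P1) := by
  constructor
  have := affM_cs P0 P1 (fun _ => 1) (fun _ => 1) measurable_const measurable_const
  simp only [ENNReal.one_rpow, one_mul, lintegral_one, measure_univ] at this
  exact this.trans_lt ENNReal.one_lt_top

theorem affM_pi_cs (P0 P1 : Measure X) [IsProbabilityMeasure P0] [IsProbabilityMeasure P1]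
    (n : ℕ) (f : (Fin n → X) → ℝ≥0∞) (hf : Measurable f) :
    ∫⁻ x, f x ∂(Measure.pi fun _ : Fin n => affM P0 P1) ≤
      (∫⁻ x, f x ∂(Measure.pi fun _ : Fin n => P0)) ^ (1 / 2 : ℝ) *
      (∫⁻ x, f x ∂(Measure.pi fun _ : Fin n => P1)) ^ (1 / 2 : ℝ) := by
  have := affM_finite P0 P1
  induction n with
  | zero =>
    have e : ∀ μ : Measure X, IsFiniteMeasure μ →
        ∫⁻ x, f x ∂(Measure.pi fun _ : Fin 0 => μ) = f fun i => i.elim0 := by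
      intro μ _
      rw [Measure.pi_of_empty _ (fun i : Fin 0 => i.elim0), lintegral_dirac' _ hf]
    rw [e _ inferInstance, e _ inferInstance, e _ inferInstance,
      ← ENNReal.rpow_add_of_nonneg _ _ (by norm_num) (by norm_num)]
    norm_num
  | succ n ih =>
    have hm : Measurable (fun p : (Fin n → X) × X => f (Fin.snoc p.1 p.2)) :=
      hf.comp (measurable_snoc_pair n)
    have hm' : Measurable (fun p : X × (Fin n → X) => f (Fin.snoc p.2 p.1)) :=
      hm.comp measurable_swap
    have sw : ∀ μ : Measure X, IsFiniteMeasure μ →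
        ∫⁻ x, f x ∂(Measure.pi fun _ : Fin (n + 1) => μ) =
        ∫⁻ x, ∫⁻ x', f (Fin.snoc x' x) ∂(Measure.pi fun _ : Fin n => μ) ∂μ := by
      intro μ _
      rw [lintegral_pi_snoc μ n f hf]
      exact lintegral_lintegral_swap hm.aemeasurable
    rw [sw _ inferInstance, sw _ inferInstance, sw _ inferInstance]
    refine le_trans (lintegral_mono fun x => ih (fun x' => f (Fin.snoc x' x))
      (hm.comp measurable_prodMk_right)) ?_
    exact affM_cs P0 P1 _ _ hm'.lintegral_prod_right' hm'.lintegral_prod_right'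

theorem dH_sq (P0 P1 : Measure Ω) [IsProbabilityMeasure P0] [IsProbabilityMeasure P1] :
    dH P0 P1 ^ 2 = 2 - 2 * (affM P0 P1 Set.univ).toReal := by
  have a0 : P0 ≪ P0 + P1 := Measure.absolutelyContinuous_of_le (Measure.le_add_right le_rfl)
  have a1 : P1 ≪ P0 + P1 := Measure.absolutelyContinuous_of_le (Measure.le_add_left le_rfl)
  unfold dH affM
  rw [Real.sq_sqrt (integral_nonneg fun _ => sq_nonneg _), withDensity_apply _ .univ,
    Measure.restrict_univ]
  have i0 : ∫ x, (P0.rnDeriv (P0 + P1) x).toReal ∂(P0 + P1) = 1 := by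
    rw [Measure.integral_toReal_rnDeriv a0]; simp
  have i1 : ∫ x, (P1.rnDeriv (P0 + P1) x).toReal ∂(P0 + P1) = 1 := by
    rw [Measure.integral_toReal_rnDeriv a1]; simp
  have n0 : Integrable (fun x => (P0.rnDeriv (P0 + P1) x).toReal) (P0 + P1) :=
    Measure.integrable_toReal_rnDeriv
  have n1 : Integrable (fun x => (P1.rnDeriv (P0 + P1) x).toReal) (P0 + P1) :=
    Measure.integrable_toReal_rnDeriv
  have f0 := Measure.rnDeriv_lt_top P0 (P0 + P1)
  have f1 := Measure.rnDeriv_lt_top P1 (P0 + P1)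
  have m0 : Measurable (P0.rnDeriv (P0 + P1)) := Measure.measurable_rnDeriv _ _
  have m1 : Measurable (P1.rnDeriv (P0 + P1)) := Measure.measurable_rnDeriv _ _
  set p0 := P0.rnDeriv (P0 + P1)
  set p1 := P1.rnDeriv (P0 + P1)
  have es : ∀ x, ((p0 x * p1 x) ^ (1 / 2 : ℝ)).toReal =
      Real.sqrt (p0 x).toReal * Real.sqrt (p1 x).toReal := by
    intro x
    rw [← ENNReal.toReal_rpow, ENNReal.toReal_mul, ← Real.sqrt_eq_rpow,
      Real.sqrt_mul ENNReal.toReal_nonneg]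
  have n2 : Integrable (fun x => Real.sqrt (p0 x).toReal * Real.sqrt (p1 x).toReal)
      (P0 + P1) := by
    refine (n0.add n1).mono' ?_ (Filter.Eventually.of_forall fun x => ?_)
    · exact (m0.ennreal_toReal.sqrt.mul m1.ennreal_toReal.sqrt).aestronglyMeasurable
    · have h0 := Real.sq_sqrt (ENNReal.toReal_nonneg (a := p0 x))
      have h1 := Real.sq_sqrt (ENNReal.toReal_nonneg (a := p1 x))
      have h3 := sq_nonneg (Real.sqrt (p0 x).toReal - Real.sqrt (p1 x).toReal)
      rw [Real.norm_of_nonneg (by positivity), Pi.add_apply]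
      have : 0 ≤ Real.sqrt (p0 x).toReal * Real.sqrt (p1 x).toReal := by positivity
      nlinarith
  have hd : Measurable (fun ω => (p0 ω * p1 ω) ^ (1 / 2 : ℝ)) := (m0.mul m1).pow_const _
  rw [← integral_toReal hd.aemeasurable]
  · simp only [es]
    have : ∀ x, (Real.sqrt (p0 x).toReal - Real.sqrt (p1 x).toReal) ^ 2 =
        ((p0 x).toReal + (p1 x).toReal) -
          2 * (Real.sqrt (p0 x).toReal * Real.sqrt (p1 x).toReal) := by
      intro x
      have h0 := Real.sq_sqrt (ENNReal.toReal_nonneg (a := p0 x))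
      have h1 := Real.sq_sqrt (ENNReal.toReal_nonneg (a := p1 x))
      linear_combination h0 + h1
    simp only [this]
    have n3 : Integrable (fun x => (p0 x).toReal + (p1 x).toReal) (P0 + P1) := n0.add n1
    rw [integral_sub n3 (n2.const_mul 2), integral_add n0 n1, i0, i1,
      integral_const_mul]
    norm_num
  · filter_upwards [f0, f1] with x h0 h1
    exact ENNReal.rpow_lt_top_of_nonneg (by norm_num) (ENNReal.mul_lt_top h0 h1).ne

theorem binary_ineq (a b : ℝ) (ha0 : 0 ≤ a) (ha1 : a ≤ 1) (hb0 : 0 ≤ b) (hb1 : b ≤ 1) :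
    (Real.sqrt a * Real.sqrt b + Real.sqrt (1 - a) * Real.sqrt (1 - b)) ^ 2 ≤ 1 - (b - a) ^ 2 := by
  have hw := Real.sq_sqrt ha0
  have hx := Real.sq_sqrt hb0
  have hy := Real.sq_sqrt (sub_nonneg.2 ha1)
  have hz := Real.sq_sqrt (sub_nonneg.2 hb1)
  set w := Real.sqrt a
  set x := Real.sqrt b
  set y := Real.sqrt (1 - a)
  set z := Real.sqrt (1 - b)
  have e1 : (w * x + y * z) ^ 2 + (w * z - x * y) ^ 2 = 1 := by
    have : (w * x + y * z) ^ 2 + (w * z - x * y) ^ 2 = (w ^ 2 + y ^ 2) * (x ^ 2 + z ^ 2) := by ring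
    rw [this, hw, hx, hy, hz]; ring
  have e2 : (w * z + x * y) ^ 2 ≤ 1 := by
    have : (w * z + x * y) ^ 2 + (w * x - y * z) ^ 2 = (w ^ 2 + y ^ 2) * (x ^ 2 + z ^ 2) := by ring
    rw [hw, hx, hy, hz] at this
    nlinarith [sq_nonneg (w * x - y * z)]
  have e3 : a - b = (w * z - x * y) * (w * z + x * y) := by
    have : (w * z - x * y) * (w * z + x * y) = w ^ 2 * z ^ 2 - x ^ 2 * y ^ 2 := by ring
    rw [this, hw, hx, hy, hz]; ring
  have e4 : (b - a) ^ 2 ≤ (w * z - x * y) ^ 2 := by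
    have : (b - a) ^ 2 = (w * z - x * y) ^ 2 * (w * z + x * y) ^ 2 := by
      rw [← mul_pow, ← e3]; ring
    rw [this]
    exact mul_le_of_le_one_right (sq_nonneg _) e2
  linarith

theorem affinity_test {Zn : Type*} [MeasurableSpace Zn] (n : ℕ)
    (R : Kernel (Fin n → X) Zn) [IsMarkovKernel R] (P0 P1 : Measure X) [IsProbabilityMeasure P0]
    [IsProbabilityMeasure P1] (φ : Zn → ℝ) (hφ : IsTest φ) :
    (affM P0 P1 Set.univ).toReal ^ (2 * n) ≤
      1 - (∫ z, φ z ∂(privProd n (fun x => R x) P1) -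
        ∫ z, φ z ∂(privProd n (fun x => R x) P0)) ^ 2 := by
  have := affM_finite P0 P1
  have hpr : ∀ μ : Measure X, IsProbabilityMeasure μ →
    IsProbabilityMeasure (privProd n (fun x => R x) μ) := fun μ _ => privProd_prob n R μ
  have hp0 := hpr P0 inferInstance
  have hp1 := hpr P1 inferInstance
  have hb : ∀ x, |φ x| ≤ 1 := fun x => by
    rw [abs_of_nonneg (hφ.2 x).1]; exact (hφ.2 x).2
  have half : ∀ f : Zn → ℝ, Measurable f → (∀ z, 0 ≤ f z) → (∀ z, f z ≤ 1) →
      ∫⁻ x, ∫⁻ z, ENNReal.ofReal (f z) ∂(R x) ∂(Measure.pi fun _ : Fin n => affM P0 P1) ≤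
      ENNReal.ofReal (Real.sqrt (∫ z, f z ∂(privProd n (fun x => R x) P0)) *
        Real.sqrt (∫ z, f z ∂(privProd n (fun x => R x) P1))) := by
    intro f hf f0 f1
    have hfm : Measurable (fun z => ENNReal.ofReal (f z)) := hf.ennreal_ofReal
    refine (affM_pi_cs P0 P1 n _ (Measurable.lintegral_kernel hfm)).trans (le_of_eq ?_)
    have e : ∀ μ : Measure X, IsProbabilityMeasure μ →
        ∫⁻ x, ∫⁻ z, ENNReal.ofReal (f z) ∂(R x) ∂(Measure.pi fun _ : Fin n => μ) =
        ENNReal.ofReal (∫ z, f z ∂(privProd n (fun x => R x) μ)) := by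
      intro μ hμ
      have := hpr μ hμ
      rw [ofReal_integral_eq_lintegral_ofReal (integrable_of_bdd hf (c := 1) fun x => by
        rw [abs_of_nonneg (f0 x)]; exact f1 x) (Filter.Eventually.of_forall f0), privProd,
        Measure.lintegral_bind R.aemeasurable hfm.aemeasurable]
    rw [e P0 inferInstance, e P1 inferInstance, ENNReal.ofReal_mul (Real.sqrt_nonneg _),
      Real.sqrt_eq_rpow, Real.sqrt_eq_rpow,
      ENNReal.ofReal_rpow_of_nonneg (integral_nonneg f0) (by norm_num),
      ENNReal.ofReal_rpow_of_nonneg (integral_nonneg f0) (by norm_num)]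
  have t1 := half φ hφ.1 (fun z => (hφ.2 z).1) (fun z => (hφ.2 z).2)
  have t2 := half (fun z => 1 - φ z) (measurable_const.sub hφ.1)
    (fun z => sub_nonneg.2 (hφ.2 z).2) (fun z => by linarith [(hφ.2 z).1])
  have hsub : ∀ μ : Measure Zn, IsProbabilityMeasure μ →
      ∫ z, (1 - φ z) ∂μ = 1 - ∫ z, φ z ∂μ ∧ 0 ≤ ∫ z, φ z ∂μ ∧ ∫ z, φ z ∂μ ≤ 1 := by
    intro μ _
    have h1 : ∫ z, (1 - φ z) ∂μ = 1 - ∫ z, φ z ∂μ := by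
      rw [integral_sub (integrable_const _) (integrable_of_bdd hφ.1 hb)]; simp
    refine ⟨h1, integral_nonneg fun z => (hφ.2 z).1, ?_⟩
    have : 0 ≤ ∫ z, (1 - φ z) ∂μ := integral_nonneg fun z => sub_nonneg.2 (hφ.2 z).2
    linarith
  obtain ⟨s0, a0, a1⟩ := hsub _ hp0
  obtain ⟨s1, b0, b1⟩ := hsub _ hp1
  rw [s0, s1] at t2
  have tot : (affM P0 P1 Set.univ) ^ n =
      ∫⁻ x, ∫⁻ z, ENNReal.ofReal (φ z) ∂(R x) ∂(Measure.pi fun _ : Fin n => affM P0 P1) +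
      ∫⁻ x, ∫⁻ z, ENNReal.ofReal (1 - φ z) ∂(R x) ∂(Measure.pi fun _ : Fin n => affM P0 P1) := by
    rw [← lintegral_add_left (Measurable.lintegral_kernel hφ.1.ennreal_ofReal)]
    have : ∀ x, ∫⁻ z, ENNReal.ofReal (φ z) ∂(R x) + ∫⁻ z, ENNReal.ofReal (1 - φ z) ∂(R x) = 1 := by
      intro x
      rw [← lintegral_add_left hφ.1.ennreal_ofReal]
      have : ∀ z, ENNReal.ofReal (φ z) + ENNReal.ofReal (1 - φ z) = 1 := fun z => by
        rw [← ENNReal.ofReal_add (hφ.2 z).1 (sub_nonneg.2 (hφ.2 z).2)]; simp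
      simp [this]
    simp only [this, lintegral_one, Measure.pi_univ, Finset.prod_const, Finset.card_univ,
      Fintype.card_fin]
  have t3 := add_le_add t1 t2
  rw [← tot, ← ENNReal.ofReal_add (by positivity) (by positivity)] at t3
  have t4 := ENNReal.toReal_mono ENNReal.ofReal_ne_top t3
  rw [ENNReal.toReal_pow, ENNReal.toReal_ofReal (by positivity)] at t4
  refine le_trans ?_ (binary_ineq _ _ a0 a1 b0 b1)
  rw [mul_comm, pow_mul]
  exact pow_le_pow_left₀ (by positivity) t4 2

theorem log_ineq (η η0 : ℝ) (h0 : 0 < η) (h1 : η < η0) (h2 : η0 < 1) :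
    1 - (1 - η) ^ 2 ≤ Real.exp (-((1 - η0) / (3 - η0) * |Real.log η|)) := by
  have hs : 0 < 1 - η := by linarith
  have hL : |Real.log η| = -Real.log η := abs_of_nonpos (Real.log_nonpos h0.le (by linarith))
  have hser := Real.hasSum_pow_div_log_of_abs_lt_one (x := 1 - η)
    (by rw [abs_of_pos hs]; linarith)
  have hsum := sum_le_hasSum (Finset.range 2) (fun i _ => by positivity) hser
  have e0 : (1 : ℝ) - (1 - η) = η := by ring
  rw [e0, ← hL] at hsum
  simp only [Finset.sum_range_succ, Finset.sum_range_zero] at hsum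
  norm_num at hsum
  have hl : Real.log (1 + (1 - η)) ≤ 1 - η := by
    have := Real.log_le_sub_one_of_pos (x := 1 + (1 - η)) (by linarith)
    linarith
  have e : 1 - (1 - η) ^ 2 = Real.exp (Real.log η + Real.log (1 + (1 - η))) := by
    rw [Real.exp_add, Real.exp_log h0, Real.exp_log (by linarith)]; ring
  rw [e]
  apply Real.exp_le_exp.2
  have h3 : (0 : ℝ) < 3 - η0 := by linarith
  rw [div_mul_eq_mul_div, ← sub_nonneg]
  have : -((1 - η0) * |Real.log η| / (3 - η0)) - (Real.log η + Real.log (1 + (1 - η))) =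
      (2 * |Real.log η| - (3 - η0) * Real.log (1 + (1 - η))) / (3 - η0) := by
    rw [hL]; field_simp; ring
  rw [this]
  apply div_nonneg _ h3.le
  have h4 : (3 - η0) * Real.log (1 + (1 - η)) ≤ (3 - η0) * (1 - η) :=
    mul_le_mul_of_nonneg_left hl h3.le
  nlinarith

theorem gH_bound (P : Set (Measure X)) (hP : ∀ μ ∈ P, IsProbabilityMeasure μ)
    (η0 ε0 : ℝ) (h1 : η0 < 1) (hε : 0 < ε0) (η : ℝ) (hη : 0 < η) (hηη : η < η0)
    (n : ℕ) (hn : |Real.log η| / ε0 < n) (R : Kernel (Fin n → X) (Fin n → Z))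
    (hR : IsMarkovKernel R) :
    ENNReal.ofReal (Real.sqrt (((1 - η0) / (3 - η0)) / (1 + ((1 - η0) / (3 - η0)) * ε0)) *
        Real.sqrt (|Real.log η| / n)) ≤ gDist dH (privProd n fun x => R x) P η := by
  unfold gDist
  refine le_iInf fun P0 => le_iInf fun h0 => le_iInf fun P1 => le_iInf fun h1 => le_iInf fun ha => ?_
  have := hP P0 h0
  have := hP P1 h1
  apply ENNReal.ofReal_le_ofReal
  have hk : 0 < (1 - η0) / (3 - η0) := div_pos (by linarith) (by linarith)
  have hlog := log_ineq η η0 hη hηη ‹_›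
  set κ := (1 - η0) / (3 - η0)
  set L := |Real.log η|
  have hL : 0 ≤ L := abs_nonneg _
  have hn0 : (0 : ℝ) < n := lt_of_le_of_lt (by positivity) hn
  have hprob0 := privProd_prob n R P0
  have hprob1 := privProd_prob n R P1
  set ρ := (affM P0 P1 Set.univ).toReal with hρ
  have hρ0 : 0 ≤ ρ := ENNReal.toReal_nonneg
  have hpi : 1 - Real.sqrt (1 - ρ ^ (2 * n)) ≤ η := by
    refine le_trans (le_pairAffinity _ _ _ fun φ hφ => ?_) ha
    rw [testRisk_eq _ _ φ hφ]
    have h3 := affinity_test n R P0 P1 φ hφ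
    have h4 := Real.le_sqrt_of_sq_le (show (_ : ℝ) ^ 2 ≤ 1 - ρ ^ (2 * n) by
      exact le_sub_comm.1 h3)
    linarith
  have h2 : ρ ^ (2 * n) ≤ Real.exp (-(κ * L)) := by
    refine le_trans ?_ hlog
    have hη1 : 0 < 1 - η := by linarith
    have : (1 - η) ^ 2 ≤ 1 - ρ ^ (2 * n) := by
      rw [← Real.le_sqrt' hη1]; linarith
    linarith
  set x := κ * L / (2 * n) with hx
  have hx0 : 0 ≤ x := by positivity
  have h3 : ρ ≤ Real.exp (-x) := by
    have : Real.exp (-(κ * L)) = Real.exp (-x) ^ (2 * n) := by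
      rw [← Real.exp_nat_mul]; congr 1; rw [hx]; push_cast; field_simp
    rw [this] at h2
    have hnn : 2 * n ≠ 0 := by
      have : 0 < n := by exact_mod_cast hn0
      omega
    exact le_of_pow_le_pow_left₀ hnn (Real.exp_pos _).le h2
  have h4 : Real.exp (-x) * (1 + x) ≤ 1 := by
    have h5 := Real.add_one_le_exp x
    have h6 : Real.exp (-x) * Real.exp x = 1 := by rw [← Real.exp_add]; simp
    rw [← h6]; exact mul_le_mul_of_nonneg_left (by linarith) (Real.exp_pos _).le
  have hxle : x ≤ κ * ε0 := by
    rw [div_lt_iff₀ hε] at hn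
    rw [hx, div_le_iff₀ (by positivity)]
    have : κ * L ≤ κ * (n * ε0) := mul_le_mul_of_nonneg_left hn.le hk.le
    nlinarith [mul_pos hk (mul_pos hn0 hε)]
  have h7 : x / (1 + κ * ε0) ≤ 1 - ρ := by
    have h8 : x / (1 + κ * ε0) ≤ x / (1 + x) :=
      div_le_div_of_nonneg_left hx0 (by linarith) (by linarith)
    have h9 : x / (1 + x) ≤ 1 - Real.exp (-x) := by
      rw [div_le_iff₀ (by linarith)]; nlinarith
    linarith
  have hd := dH_sq P0 P1
  rw [← hρ] at hd
  have hdn : 0 ≤ dH P0 P1 := Real.sqrt_nonneg _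
  rw [← Real.sqrt_mul (by positivity)]
  rw [Real.sqrt_le_left hdn, hd]
  have : κ / (1 + κ * ε0) * (L / n) = 2 * (x / (1 + κ * ε0)) := by
    rw [hx]; field_simp
  rw [this]
  linarith

/-- lower bounds on `g_TV`, `g_H` and `Δ_A` for private channels.
(i) For an `α`-sequentially interactive channel `Q`,
`g_TV(Q,η) ≥ (1-η)/√(2n(e^α-1)²)` and consequently
`Δ_A^{(n)}(Q,η) ≥ ω_TV(((1-η)/√(2n(e^α-1)²))⁻)`.
(ii) For all `η0 ∈ (0,1)`, `ε0 > 0` there is `c > 0` such that for all `η ∈ (0,η0)`,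
all `n > |log η|/ε0` and every channel `R`, `g_H(R,η) ≥ c√(|log η|/n)`; consequently, for
such `η`, `n` and every `α`-sequentially interactive channel `Q`,
`Δ_A^{(n)}(Q,η) ≥ max{ω_TV(((1-η)/√(2n(e^α-1)²))⁻), ω_H((c√(|log η|/n))⁻)}`. -/
theorem statement4 {X Z : Type*} [MeasurableSpace X] [MeasurableSpace Z]
    (P : Set (Measure X)) (hP : ∀ μ ∈ P, IsProbabilityMeasure μ) (θ : Measure X → ℝ)
    (n : ℕ) (hn : 0 < n) (η : ℝ) (hη0 : 0 < η) (hη1 : η < 1) (α : ℝ) (hα : 0 < α) :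
    (∀ Q : Kernel (Fin n → X) (Fin n → Z), IsMarkovKernel Q → IsSeqInteractive n α Q →
      ENNReal.ofReal ((1 - η) / Real.sqrt (2 * n * (Real.exp α - 1) ^ 2))
          ≤ gDist dTV (privProd n fun x => Q x) P η ∧
        leftLimE (omegaTV P θ)
            (ENNReal.ofReal ((1 - η) / Real.sqrt (2 * n * (Real.exp α - 1) ^ 2)))
          ≤ DeltaA (privProd n fun x => Q x) P θ η) ∧
      (∀ η0 ε0 : ℝ, 0 < η0 → η0 < 1 → 0 < ε0 →
        ∃ c : ℝ, 0 < c ∧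
          ∀ η' : ℝ, 0 < η' → η' < η0 → ∀ n' : ℕ, |Real.log η'| / ε0 < n' →
            (∀ R : Kernel (Fin n' → X) (Fin n' → Z), IsMarkovKernel R →
              ENNReal.ofReal (c * Real.sqrt (|Real.log η'| / n'))
                ≤ gDist dH (privProd n' fun x => R x) P η') ∧
            (∀ Q : Kernel (Fin n' → X) (Fin n' → Z), IsMarkovKernel Q →
              IsSeqInteractive n' α Q →
                max
                    (leftLimE (omegaTV P θ) (ENNReal.ofReal
                      ((1 - η') / Real.sqrt (2 * n' * (Real.exp α - 1) ^ 2))))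
                    (leftLimE (omegaH P θ) (ENNReal.ofReal
                      (c * Real.sqrt (|Real.log η'| / n'))))
                  ≤ DeltaA (privProd n' fun x => Q x) P θ η')) := by
  have main : ∀ (n : ℕ), 0 < n → ∀ η : ℝ, ∀ Q : Kernel (Fin n → X) (Fin n → Z),
      IsMarkovKernel Q → IsSeqInteractive n α Q →
      ENNReal.ofReal ((1 - η) / Real.sqrt (2 * n * (Real.exp α - 1) ^ 2))
          ≤ gDist dTV (privProd n fun x => Q x) P η ∧
        leftLimE (omegaTV P θ)
            (ENNReal.ofReal ((1 - η) / Real.sqrt (2 * n * (Real.exp α - 1) ^ 2)))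
          ≤ DeltaA (privProd n fun x => Q x) P θ η := by
    intro n hn η Q hQ hS
    have hg := gTV_bound P hP n hn η α hα Q hQ hS
    refine ⟨hg, leftLim_le_DeltaA _ P (fun μ hμ => ?_) θ η dTV _ hg⟩
    have := hP μ hμ
    exact privProd_prob n Q μ
  refine ⟨main n hn η, ?_⟩
  intro η0 ε0 hη00 hη01 hε
  have hk : 0 < (1 - η0) / (3 - η0) := div_pos (by linarith) (by linarith)
  refine ⟨Real.sqrt (((1 - η0) / (3 - η0)) / (1 + ((1 - η0) / (3 - η0)) * ε0)),
    Real.sqrt_pos.2 (by positivity), ?_⟩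
  intro η' h0 h1 n' hn'
  have hR := fun (R : Kernel (Fin n' → X) (Fin n' → Z)) (hR : IsMarkovKernel R) =>
    gH_bound P hP η0 ε0 hη01 hε η' h0 h1 n' hn' R hR
  refine ⟨hR, fun Q hQ hS => max_le ?_ ?_⟩
  · have hn0 : (0 : ℝ) < n' := lt_of_le_of_lt (by positivity) hn'
    exact (main n' (by exact_mod_cast hn0) η' Q hQ hS).2
  · refine leftLim_le_DeltaA _ P (fun μ hμ => ?_) θ η' dH _ (hR Q hQ)
    have := hP μ hμ
    exact privProd_prob n' Q μ

end PrivacyPaper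
end

section
/- Fix n ∈ ℕ. Suppose θ is bounded, i.e. sup_{P∈P} |θ(P)| < ∞ (Condition A); the loss l : [0,∞) → [0,∞) is nondecreasing with l(0) = 0 and l(3t/2) ≤ a·l(t) for all t ≥ 0, for some a ∈ (1,∞) (Condition B); P is dominated by a σ-finite measure and convex; θ : P → ℝ is linear; and Q is a non-interactive channel from X^n to Z^n with identical marginals Q1. Fix C ≥ √(2 log(2a)) + 1 and set C1 = [1 + 8a²/(2a−1)] · a^{⌈2 log(C)/log(3/2)⌉}. Then there exists a measurable estimator θ̂_n : Z^n → ℝ such that sup_{P∈P} ∫ l(|θ̂_n(z) − θ(P)|) d(Q P^⊗n)(z) ≤ C1 · l( ω_H^{(Q1)}(n^{−1/2}) ). -/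
open MeasureTheory ProbabilityTheory ENNReal

namespace PrivacyPaper


variable {X Z Ω : Type*} [MeasurableSpace X] [MeasurableSpace Z] [MeasurableSpace Ω]

lemma fip_hilbert {H : Type*} [NormedAddCommGroup H] [InnerProductSpace ℝ H] [CompleteSpace H]
    {ι : Type*} (K : ι → Set H) (hc : ∀ i, IsClosed (K i)) (hcv : ∀ i, Convex ℝ (K i))
    (M : ℝ) (hM : ∀ i, ∀ x ∈ K i, ‖x‖ ≤ M)
    (hne : ∀ F : Finset ι, (⋂ i ∈ F, K i).Nonempty) : (⋂ i, K i).Nonempty := by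
  classical
  have key : ∀ F : Finset ι, ∃ x ∈ ⋂ i ∈ F, K i, ∀ y ∈ ⋂ i ∈ F, K i,
      ‖x‖ ^ 2 + ‖y - x‖ ^ 2 ≤ ‖y‖ ^ 2 := by
    intro F
    have hcl : IsClosed (⋂ i ∈ F, K i) := isClosed_biInter fun i _ => hc i
    have hcx : Convex ℝ (⋂ i ∈ F, K i) := convex_iInter₂ fun i _ => hcv i
    obtain ⟨x, hx, hmin⟩ := exists_norm_eq_iInf_of_complete_convex (hne F) hcl.isComplete hcx 0
    rw [norm_eq_iInf_iff_real_inner_le_zero hcx hx] at hmin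
    refine ⟨x, hx, fun y hy => ?_⟩
    have h := hmin y hy
    have e : ‖y‖ ^ 2 = ‖x + (y - x)‖ ^ 2 := by congr 2; abel
    rw [e, norm_add_sq_real]
    simp only [zero_sub, inner_neg_left] at h
    linarith
  choose x hx hxm using key
  have mono : ∀ F G : Finset ι, F ⊆ G → ‖x F‖ ^ 2 + ‖x G - x F‖ ^ 2 ≤ ‖x G‖ ^ 2 := by
    intro F G hFG
    apply hxm F (x G)
    have := hx G
    simp only [Set.mem_iInter] at this ⊢
    exact fun i hi => this i (hFG hi)
  rcases isEmpty_or_nonempty ι with hι | ⟨⟨i0⟩⟩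
  · simp
  have hbd : BddAbove (Set.range fun F => ‖x F‖ ^ 2) := by
    refine ⟨M ^ 2, ?_⟩
    rintro _ ⟨F, rfl⟩
    have h1 := mono F (insert i0 F) (Finset.subset_insert _ _)
    have h2 : ‖x (insert i0 F)‖ ≤ M := by
      apply hM i0
      have := hx (insert i0 F)
      simp only [Set.mem_iInter] at this
      exact this i0 (Finset.mem_insert_self _ _)
    have h3 : ‖x (insert i0 F)‖ ^ 2 ≤ M ^ 2 := by gcongr
    have := sq_nonneg ‖x (insert i0 F) - x F‖
    simp only
    linarith
  have hcs : CauchySeq x := by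
    rw [Metric.cauchySeq_iff']
    intro ε hε
    obtain ⟨F, hF⟩ := exists_lt_of_lt_ciSup (f := fun F => ‖x F‖ ^ 2)
      (sub_lt_self (⨆ F, ‖x F‖ ^ 2) (by positivity : 0 < ε ^ 2))
    refine ⟨F, fun G hG => ?_⟩
    have h1 := mono F G hG
    have h2 := le_ciSup hbd G
    rw [dist_eq_norm]
    apply lt_of_pow_lt_pow_left₀ 2 hε.le
    have hF2 : (⨆ F, ‖x F‖ ^ 2) - ε ^ 2 < ‖x F‖ ^ 2 := hF
    have h3 : ‖x G‖ ^ 2 ≤ ⨆ F, ‖x F‖ ^ 2 := h2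
    linarith
  obtain ⟨y, hy⟩ := cauchySeq_tendsto_of_complete hcs
  refine ⟨y, Set.mem_iInter.2 fun i => ?_⟩
  refine (hc i).mem_of_tendsto hy ?_
  filter_upwards [Filter.eventually_ge_atTop {i}] with F hF
  have := hx F
  simp only [Set.mem_iInter] at this
  exact this i (hF (by simp))

lemma lintegral_pi_prod {Z : Type*} [MeasurableSpace Z] (n : ℕ) (μ : Measure Z)
    [IsProbabilityMeasure μ] (f : Fin n → Z → ℝ≥0∞) (hf : ∀ i, Measurable (f i)) :
    ∫⁻ z, ∏ i, f i (z i) ∂(Measure.pi fun _ : Fin n => μ) = ∏ i, ∫⁻ x, f i x ∂μ := by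
  have hi : iIndepFun (fun i (z : Fin n → Z) => f i (z i)) (Measure.pi fun _ : Fin n => μ) :=
    iIndepFun_pi (X := f) (fun i => (hf i).aemeasurable)
  have h := lintegral_prod_eq_prod_lintegral_of_indepFun Finset.univ
    (fun i (z : Fin n → Z) => f i (z i)) hi (fun i => (hf i).comp (measurable_pi_apply i))
  rw [h]
  refine Finset.prod_congr rfl fun i _ => ?_
  have := (measurePreserving_eval (fun _ : Fin n => μ) i).lintegral_comp (hf i)
  simpa using this

lemma pi_ac {Z : Type*} [MeasurableSpace Z] (n : ℕ) (μ ν : Measure Z)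
    [IsProbabilityMeasure μ] [IsProbabilityMeasure ν] (h : μ ≪ ν) :
    (Measure.pi fun _ : Fin n => μ) ≪ (Measure.pi fun _ : Fin n => ν) := by
  have e : (Measure.pi fun _ : Fin n => μ) =
      (Measure.pi fun _ : Fin n => ν).withDensity fun z => ∏ i, μ.rnDeriv ν (z i) := by
    refine (Measure.pi_eq fun s hs => ?_)
    rw [withDensity_apply _ (MeasurableSet.univ_pi hs), ← lintegral_indicator (MeasurableSet.univ_pi hs)]
    have : ∀ z : Fin n → Z, (Set.univ.pi s).indicator (fun z => ∏ i, μ.rnDeriv ν (z i)) z =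
        ∏ i, (s i).indicator (μ.rnDeriv ν) (z i) := by
      intro z
      by_cases hz : z ∈ Set.univ.pi s
      · rw [Set.indicator_of_mem hz]
        refine Finset.prod_congr rfl fun i _ => ?_
        rw [Set.indicator_of_mem (hz i trivial)]
      · rw [Set.indicator_of_notMem hz]
        simp only [Set.mem_univ_pi, not_forall] at hz
        obtain ⟨i, hi⟩ := hz
        exact (Finset.prod_eq_zero (Finset.mem_univ i) (Set.indicator_of_notMem hi _)).symm
    simp_rw [this]
    rw [lintegral_pi_prod n ν (fun i => (s i).indicator (μ.rnDeriv ν))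
      (fun i => (Measure.measurable_rnDeriv μ ν).indicator (hs i))]
    refine Finset.prod_congr rfl fun i _ => ?_
    rw [lintegral_indicator (hs i), Measure.setLIntegral_rnDeriv h]
  rw [e]
  exact withDensity_absolutelyContinuous _ _


lemma sqrt_mul_integrable {Z : Type*} [MeasurableSpace Z] {ν : Measure Z} {x y : Z → ℝ}
    (hxm : Measurable x) (hym : Measurable y) (hx : ∀ z, 0 ≤ x z) (hy : ∀ z, 0 ≤ y z)
    (hxi : Integrable x ν) (hyi : Integrable y ν) :
    Integrable (fun z => √(x z * y z)) ν := by
  refine (hxi.add hyi).mono' ((hxm.mul hym).sqrt.aestronglyMeasurable) (.of_forall fun z => ?_)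
  rw [Real.norm_of_nonneg (Real.sqrt_nonneg _), Pi.add_apply]
  have := hx z
  have := hy z
  apply Real.sqrt_le_iff.2 ⟨by positivity, by nlinarith [mul_nonneg (hx z) (hy z)]⟩

lemma variational {Z : Type*} [MeasurableSpace Z] (ν : Measure Z) (x y u : Z → ℝ)
    (hxm : Measurable x) (hym : Measurable y) (hum : Measurable u)
    (hx : ∀ z, 0 < x z) (hy : ∀ z, 0 < y z) (hu : ∀ z, 0 ≤ u z)
    (hxi : Integrable x ν) (hyi : Integrable y ν) (hui : Integrable u ν)
    (hmax : ∀ t : ℝ, 0 < t → t < 1 →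
      ∫ z, √(((1 - t) * x z + t * u z) * y z) ∂ν ≤ ∫ z, √(x z * y z) ∂ν) :
    ∫⁻ z, ENNReal.ofReal (√(y z) / √(x z) * u z) ∂ν ≤ ENNReal.ofReal (∫ z, √(x z * y z) ∂ν) := by
  set I := ∫ z, √(x z * y z) ∂ν with hI
  let H : ℝ → Z → ℝ := fun t z => 2 * (√(y z) * u z) / (√((1 - t) * x z + t * u z) + √(x z))
  have hxyi := sqrt_mul_integrable hxm hym (fun z => (hx z).le) (fun z => (hy z).le) hxi hyi
  have hHm : ∀ t, Measurable (H t) := by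
    intro t
    simp only [H]
    fun_prop
  have step : ∀ t : ℝ, 0 < t → t < 1 →
      ∫⁻ z, ENNReal.ofReal (H t z) ∂ν ≤ ENNReal.ofReal (2 * I / (1 + √(1 - t))) := by
    intro t ht0 ht1
    have hti : Integrable (fun z => √(((1 - t) * x z + t * u z) * y z)) ν := by
      apply sqrt_mul_integrable (by fun_prop) hym _ (fun z => (hy z).le) _ hyi
      · intro z
        have := (hx z).le; have := hu z; have : 0 ≤ 1 - t := by linarith
        positivity
      · exact (hxi.const_mul _).add (hui.const_mul _)
    let G : Z → ℝ := fun z => (2 / t) * (√(((1 - t) * x z + t * u z) * y z) - √(x z * y z)) +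
      (2 / (1 + √(1 - t))) * √(x z * y z)
    have hGi : Integrable G ν := ((hti.sub hxyi).const_mul _).add (hxyi.const_mul _)
    have hHG : ∀ z, H t z ≤ G z := by
      intro z
      have hxz := hx z
      have hyz := hy z
      have huz := hu z
      have h1t : 0 < 1 - t := by linarith
      simp only [H, G]
      have hw : 0 < (1 - t) * x z + t * u z := by positivity
      rw [Real.sqrt_mul hw.le, Real.sqrt_mul hxz.le]
      set s := √((1 - t) * x z + t * u z) with hs
      set r := √(x z) with hr
      set k := √(1 - t) with hk
      have hr0 : 0 < r := Real.sqrt_pos.2 hxz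
      have hk0 : 0 < k := Real.sqrt_pos.2 h1t
      have hs0 : 0 < s := Real.sqrt_pos.2 hw
      have hs2 : s ^ 2 = (1 - t) * x z + t * u z := Real.sq_sqrt hw.le
      have hr2 : r ^ 2 = x z := Real.sq_sqrt hxz.le
      have hsr : k * r ≤ s := by
        rw [hk, hr, ← Real.sqrt_mul h1t.le]
        exact Real.sqrt_le_sqrt (by nlinarith [mul_nonneg ht0.le huz])
      have hy0 : 0 ≤ √(y z) := Real.sqrt_nonneg _
      have e1 : u z = (s ^ 2 - r ^ 2) / t + r ^ 2 := by
        field_simp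
        rw [hs2, hr2]; ring
      have e2 : 2 * (√(y z) * u z) / (s + r) =
          2 / t * (s * √(y z) - r * √(y z)) + 2 * (r * √(y z)) * (r / (s + r)) := by
        rw [e1]; field_simp; ring
      rw [e2]
      have e3 : r / (s + r) ≤ 1 / (1 + k) := by
        rw [div_le_div_iff₀ (by positivity) (by positivity)]
        nlinarith
      have : 2 * (r * √(y z)) * (r / (s + r)) ≤ 2 * (r * √(y z)) * (1 / (1 + k)) := by gcongr
      calc _ ≤ _ := add_le_add_right this _
        _ = _ := by ring
    have hG0 : ∀ z, 0 ≤ G z := fun z => le_trans (by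
      have := hu z
      simp only [H]; positivity) (hHG z)
    calc ∫⁻ z, ENNReal.ofReal (H t z) ∂ν ≤ ∫⁻ z, ENNReal.ofReal (G z) ∂ν :=
          lintegral_mono fun z => ENNReal.ofReal_le_ofReal (hHG z)
      _ = ENNReal.ofReal (∫ z, G z ∂ν) :=
          (ofReal_integral_eq_lintegral_ofReal hGi (.of_forall hG0)).symm
      _ ≤ _ := by
          apply ENNReal.ofReal_le_ofReal
          simp only [G]
          have hsub : Integrable (fun z => 2 / t *
              (√(((1 - t) * x z + t * u z) * y z) - √(x z * y z))) ν :=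
            (hti.sub hxyi).const_mul _
          rw [integral_add hsub (hxyi.const_mul _), integral_const_mul,
            integral_const_mul, integral_sub hti hxyi]
          have := hmax t ht0 ht1
          have h2 : 2 / t * ((∫ z, √(((1 - t) * x z + t * u z) * y z) ∂ν) - I) ≤ 0 :=
            mul_nonpos_of_nonneg_of_nonpos (by positivity) (by linarith)
          calc _ ≤ 0 + 2 / (1 + √(1 - t)) * I := by gcongr
            _ = _ := by ring
  let t : ℕ → ℝ := fun k => 1 / ((k : ℝ) + 1 + 1)
  have ht : Filter.Tendsto t Filter.atTop (nhds 0) := by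
    have := tendsto_one_div_add_atTop_nhds_zero_nat (𝕜 := ℝ)
    have h := (Filter.tendsto_add_atTop_iff_nat 1).2 this
    refine h.congr fun k => ?_
    simp [t]
  have ht0 : ∀ k, 0 < t k := fun k => by simp only [t]; positivity
  have ht1 : ∀ k, t k < 1 := fun k => by
    simp only [t]; rw [div_lt_one (by positivity)]; 
    have : (0:ℝ) ≤ k := Nat.cast_nonneg k
    linarith
  have lim : ∀ z, Filter.Tendsto (fun k => ENNReal.ofReal (H (t k) z)) Filter.atTop
      (nhds (ENNReal.ofReal (√(y z) / √(x z) * u z))) := by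
    intro z
    apply ENNReal.tendsto_ofReal
    have hr0 : 0 < √(x z) := Real.sqrt_pos.2 (hx z)
    have hcont : ContinuousAt (fun t => H t z) 0 := by
      simp only [H]
      apply ContinuousAt.div
      · fun_prop
      · fun_prop
      · have := Real.sqrt_nonneg ((1 - 0) * x z + 0 * u z)
        positivity
    have := hcont.tendsto.comp ht
    have e : H 0 z = √(y z) / √(x z) * u z := by
      simp only [H]
      rw [show (1 - 0) * x z + 0 * u z = x z by ring]
      field_simp
      ring
    rw [e] at this
    exact this
  calc ∫⁻ z, ENNReal.ofReal (√(y z) / √(x z) * u z) ∂ν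
      = ∫⁻ z, Filter.liminf (fun k => ENNReal.ofReal (H (t k) z)) Filter.atTop ∂ν :=
        lintegral_congr fun z => (lim z).liminf_eq.symm
    _ ≤ Filter.liminf (fun k => ∫⁻ z, ENNReal.ofReal (H (t k) z) ∂ν) Filter.atTop :=
        lintegral_liminf_le fun k => (hHm _).ennreal_ofReal
    _ ≤ Filter.liminf (fun k => ENNReal.ofReal (2 * I / (1 + √(1 - t k)))) Filter.atTop :=
        Filter.liminf_le_liminf (.of_forall fun k => step _ (ht0 k) (ht1 k))
    _ = ENNReal.ofReal I := by
        apply Filter.Tendsto.liminf_eq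
        apply ENNReal.tendsto_ofReal
        have hcont : ContinuousAt (fun t : ℝ => 2 * I / (1 + √(1 - t))) 0 := by
          apply ContinuousAt.div
          · fun_prop
          · fun_prop
          · positivity
        have := hcont.tendsto.comp ht
        have e : 2 * I / (1 + √(1 - 0)) = I := by
          simp; ring
        rw [e] at this
        exact this


lemma finite_g {Z : Type*} [MeasurableSpace Z] (ν : Measure Z) [IsProbabilityMeasure ν]
    {ι κ : Type*} [Fintype ι] [Fintype κ] [Nonempty ι] [Nonempty κ]
    (p : ι → Z → ℝ) (q : κ → Z → ℝ)
    (hpm : ∀ i, Measurable (p i)) (hqm : ∀ i, Measurable (q i))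
    (hp : ∀ i z, 0 ≤ p i z) (hq : ∀ i z, 0 ≤ q i z)
    (hpi : ∀ i, Integrable (p i) ν) (hqi : ∀ i, Integrable (q i) ν)
    (hp1 : ∀ i, ∫ z, p i z ∂ν = 1) (hq1 : ∀ i, ∫ z, q i z ∂ν = 1)
    (ρ ρ' : ℝ) (hρ : ρ < ρ')
    (haff : ∀ w ∈ stdSimplex ℝ ι, ∀ v ∈ stdSimplex ℝ κ,
      ∫ z, √((∑ i, w i * p i z) * (∑ j, v j * q j z)) ∂ν ≤ ρ) :
    ∃ g : Z → ℝ, Measurable g ∧ (∀ z, 0 < g z) ∧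
      (∀ i, ∫⁻ z, ENNReal.ofReal (g z * p i z) ∂ν ≤ ENNReal.ofReal ρ') ∧
      (∀ j, ∫⁻ z, ENNReal.ofReal ((g z)⁻¹ * q j z) ∂ν ≤ ENNReal.ofReal ρ') := by
  classical
  obtain ⟨δ, hδ0, hδ1, hδ⟩ : ∃ δ : ℝ, 0 < δ ∧ δ ≤ 1 ∧ 5 * δ ≤ ρ' - ρ := by
    refine ⟨min 1 ((ρ' - ρ) / 5), by
      apply lt_min <;> linarith, min_le_left _ _, ?_⟩
    have := min_le_right 1 ((ρ' - ρ) / 5)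
    linarith
  set ε := δ ^ 2 with hε
  have hε0 : 0 < ε := by positivity
  let x : (ι → ℝ) → Z → ℝ := fun w z => (∑ i, w i * p i z) + ε
  let y : (κ → ℝ) → Z → ℝ := fun v z => (∑ i, v i * q i z) + ε
  have hxm : ∀ w, Measurable (x w) := fun w => by simp only [x]; fun_prop
  have hym : ∀ w, Measurable (y w) := fun w => by simp only [y]; fun_prop
  have hps : ∀ w ∈ stdSimplex ℝ ι, ∀ z, 0 ≤ ∑ i, w i * p i z := fun w hw z =>
    Finset.sum_nonneg fun i _ => mul_nonneg (hw.1 i) (hp i z)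
  have hqs : ∀ w ∈ stdSimplex ℝ κ, ∀ z, 0 ≤ ∑ i, w i * q i z := fun w hw z =>
    Finset.sum_nonneg fun i _ => mul_nonneg (hw.1 i) (hq i z)
  have hx0 : ∀ w ∈ stdSimplex ℝ ι, ∀ z, 0 < x w z := fun w hw z => by
    have := hps w hw z
    simp only [x]; linarith
  have hy0 : ∀ w ∈ stdSimplex ℝ κ, ∀ z, 0 < y w z := fun w hw z => by
    have := hqs w hw z
    simp only [y]; linarith
  have hsi : ∀ w : ι → ℝ, Integrable (fun z => ∑ i, w i * p i z) ν := fun w =>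
    integrable_finsetSum _ fun i _ => (hpi i).const_mul _
  have hti : ∀ w : κ → ℝ, Integrable (fun z => ∑ i, w i * q i z) ν := fun w =>
    integrable_finsetSum _ fun i _ => (hqi i).const_mul _
  have hxi : ∀ w, Integrable (x w) ν := fun w => (hsi w).add (integrable_const _)
  have hyi : ∀ w, Integrable (y w) ν := fun w => (hti w).add (integrable_const _)
  let F : (ι → ℝ) × (κ → ℝ) → ℝ := fun wv => ∫ z, √(x wv.1 z * y wv.2 z) ∂ν
  have hFc : ContinuousOn F (stdSimplex ℝ ι ×ˢ stdSimplex ℝ κ) := by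
    refine continuousOn_of_dominated (bound := fun z => ((∑ i, p i z) + ε) + ((∑ j, q j z) + ε))
      (fun wv _ => ((hxm _).mul (hym _)).sqrt.aestronglyMeasurable) ?_ ?_ ?_
    · rintro ⟨w, v⟩ ⟨hw, hv⟩
      refine .of_forall fun z => ?_
      rw [Real.norm_of_nonneg (Real.sqrt_nonneg _)]
      have h1 := hx0 w hw z
      have h2 := hy0 v hv z
      have h3 : x w z ≤ (∑ i, p i z) + ε := by
        simp only [x]
        gcongr with i _
        have := hw.1 i
        have h4 : w i ≤ 1 := by
          rw [← hw.2]; exact Finset.single_le_sum (fun i _ => hw.1 i) (Finset.mem_univ i)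
        nlinarith [hp i z]
      have h5 : y v z ≤ (∑ i, q i z) + ε := by
        simp only [y]
        gcongr with i _
        have := hv.1 i
        have h4 : v i ≤ 1 := by
          rw [← hv.2]; exact Finset.single_le_sum (fun i _ => hv.1 i) (Finset.mem_univ i)
        nlinarith [hq i z]
      refine le_trans ?_ (add_le_add h3 h5)
      apply Real.sqrt_le_iff.2 ⟨by positivity, by nlinarith [mul_pos h1 h2]⟩
    · exact ((integrable_finsetSum _ fun i _ => hpi i).add (integrable_const _)).add
        ((integrable_finsetSum _ fun i _ => hqi i).add (integrable_const _))
    · refine .of_forall fun z => ?_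
      simp only [x, y]
      fun_prop
  obtain ⟨⟨w, v⟩, ⟨hw, hv⟩, hmax⟩ := ((isCompact_stdSimplex (𝕜 := ℝ) (ι := ι)).prod
    (isCompact_stdSimplex (𝕜 := ℝ) (ι := κ))).exists_isMaxOn
    (⟨(Pi.single (Classical.arbitrary ι) 1, Pi.single (Classical.arbitrary κ) 1),
      single_mem_stdSimplex ℝ _, single_mem_stdSimplex ℝ _⟩) hFc
  simp only at hw hv
  have hFle : F (w, v) ≤ ρ' := by
    have h1 : ∀ z, √(x w z * y v z) ≤ √((∑ i, w i * p i z) * (∑ j, v j * q j z)) +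
        δ * ((∑ i, w i * p i z) + 1) + δ * ((∑ i, v i * q i z) + 1) + ε := by
      intro z
      have h2 := hps w hw z
      have h3 := hqs v hv z
      simp only [x, y]
      set s := ∑ i, w i * p i z
      set t := ∑ i, v i * q i z
      have h4 := Real.sq_sqrt (mul_nonneg h2 h3)
      have h5 := Real.sqrt_nonneg (s * t)
      apply Real.sqrt_le_iff.2 ⟨by positivity, ?_⟩
      set r := √(s * t)
      have h6 : 0 ≤ r * (δ * (s + 1) + δ * (t + 1) + ε) := by positivity
      have h7 : 0 ≤ δ ^ 2 * (s ^ 2 + t ^ 2 + 2 * s * t + 4) + ε ^ 2 := by positivity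
      rw [hε] at *
      have h8 : 0 ≤ δ ^ 2 * (s ^ 2 + t ^ 2 + 2 * s * t + 4 + 3 * s + 3 * t) := by positivity
      have h9 : 0 ≤ δ ^ 3 * (s + t + 2) := by positivity
      nlinarith
    have i1 : Integrable (fun z => √((∑ i, w i * p i z) * (∑ j, v j * q j z))) ν :=
      sqrt_mul_integrable (by fun_prop) (by fun_prop) (hps w hw) (hqs v hv) (hsi w) (hti v)
    have i2 : Integrable (fun z => δ * ((∑ i, w i * p i z) + 1)) ν :=
      ((hsi w).add (integrable_const _)).const_mul _
    have i3 : Integrable (fun z => δ * ((∑ i, v i * q i z) + 1)) ν :=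
      ((hti v).add (integrable_const _)).const_mul _
    have e2 : ∫ z, δ * ((∑ i, w i * p i z) + 1) ∂ν = 2 * δ := by
      rw [integral_const_mul, integral_add (hsi w) (integrable_const _),
        integral_finsetSum _ fun i _ => (hpi i).const_mul _]
      simp only [integral_const_mul, hp1, mul_one, hw.2]
      simp; ring
    have e3 : ∫ z, δ * ((∑ i, v i * q i z) + 1) ∂ν = 2 * δ := by
      rw [integral_const_mul, integral_add (hti v) (integrable_const _),
        integral_finsetSum _ fun i _ => (hqi i).const_mul _]
      simp only [integral_const_mul, hq1, mul_one, hv.2]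
      simp; ring
    have i12 : Integrable (fun z => √((∑ i, w i * p i z) * (∑ j, v j * q j z)) +
        δ * ((∑ i, w i * p i z) + 1)) ν := i1.add i2
    have i123 : Integrable (fun z => √((∑ i, w i * p i z) * (∑ j, v j * q j z)) +
        δ * ((∑ i, w i * p i z) + 1) + δ * ((∑ i, v i * q i z) + 1)) ν := i12.add i3
    have h2 : F (w, v) ≤ ∫ z, (√((∑ i, w i * p i z) * (∑ j, v j * q j z)) +
        δ * ((∑ i, w i * p i z) + 1) + δ * ((∑ i, v i * q i z) + 1) + ε) ∂ν := integral_mono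
      (sqrt_mul_integrable (hxm w) (hym v) (fun z => (hx0 w hw z).le)
        (fun z => (hy0 v hv z).le) (hxi w) (hyi v))
      (i123.add (integrable_const ε)) h1
    rw [integral_add i123 (integrable_const ε), integral_add i12 i3, integral_add i1 i2,
      e2, e3] at h2
    have h3 := haff w hw v hv
    simp at h2
    nlinarith
  have hw' : ∀ t : ℝ, 0 < t → t < 1 → ∀ i, ((1 - t) • w + t • Pi.single i 1) ∈ stdSimplex ℝ ι :=
    fun t h0 h1 i => (convex_stdSimplex ℝ ι) hw (single_mem_stdSimplex ℝ i) (by linarith) h0.le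
      (by ring)
  have hv' : ∀ t : ℝ, 0 < t → t < 1 → ∀ i, ((1 - t) • v + t • Pi.single i 1) ∈ stdSimplex ℝ κ :=
    fun t h0 h1 i => (convex_stdSimplex ℝ κ) hv (single_mem_stdSimplex ℝ i) (by linarith) h0.le
      (by ring)
  refine ⟨fun z => √(y v z) / √(x w z), by
      exact (hym v).sqrt.div (hxm w).sqrt, fun z => ?_, fun i => ?_, fun j => ?_⟩
  · have := Real.sqrt_pos.2 (hx0 w hw z)
    have := Real.sqrt_pos.2 (hy0 v hv z)
    positivity
  · have hv := variational ν (x w) (y v) (fun z => p i z + ε) (hxm w) (hym v)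
      ((hpm i).add_const _) (hx0 w hw) (hy0 v hv) (fun z => add_nonneg (hp i z) hε0.le) (hxi w)
      (hyi v) ((hpi i).add (integrable_const _)) (by
        intro t h0 h1
        have h := hmax (Set.mk_mem_prod (hw' t h0 h1 i) hv)
        have e : ∀ z, (1 - t) * x w z + t * (p i z + ε) = x ((1 - t) • w + t • Pi.single i 1) z := by
          intro z
          simp only [x, Pi.add_apply, Pi.smul_apply, smul_eq_mul, add_mul, Finset.sum_add_distrib,
            mul_assoc, ← Finset.mul_sum, Pi.single_apply, ite_mul, one_mul, zero_mul,
            Finset.sum_ite_eq', Finset.mem_univ, if_true]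
          ring
        simp_rw [e]
        exact h)
    refine le_trans (lintegral_mono fun z => ENNReal.ofReal_le_ofReal ?_)
      (hv.trans (ENNReal.ofReal_le_ofReal hFle))
    simp only
    gcongr
    linarith
  · have hv := variational ν (y v) (x w) (fun z => q j z + ε) (hym v) (hxm w)
      ((hqm j).add_const _) (hy0 v hv) (hx0 w hw) (fun z => add_nonneg (hq j z) hε0.le) (hyi v)
      (hxi w) ((hqi j).add (integrable_const _)) (by
        intro t h0 h1
        have h := hmax (Set.mk_mem_prod hw (hv' t h0 h1 j))
        have e : ∀ z, (1 - t) * y v z + t * (q j z + ε) = y ((1 - t) • v + t • Pi.single j 1) z := by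
          intro z
          simp only [y, Pi.add_apply, Pi.smul_apply, smul_eq_mul, add_mul, Finset.sum_add_distrib,
            mul_assoc, ← Finset.mul_sum, Pi.single_apply, ite_mul, one_mul, zero_mul,
            Finset.sum_ite_eq', Finset.mem_univ, if_true]
          ring
        simp_rw [e, mul_comm _ (x w _)]
        exact h)
    simp_rw [mul_comm _ (x w _)] at hv
    refine le_trans (lintegral_mono fun z => ENNReal.ofReal_le_ofReal ?_)
      (hv.trans (ENNReal.ofReal_le_ofReal hFle))
    simp only [inv_div]
    gcongr
    linarith


lemma withDensity_prob {Z : Type*} [MeasurableSpace Z] (ν : Measure Z) (p : Z → ℝ)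
    (hp : ∀ z, 0 ≤ p z) (hpi : Integrable p ν) (hp1 : ∫ z, p z ∂ν = 1) :
    IsProbabilityMeasure (ν.withDensity fun z => ENNReal.ofReal (p z)) := by
  constructor
  rw [withDensity_apply _ MeasurableSet.univ, setLIntegral_univ,
    ← ofReal_integral_eq_lintegral_ofReal hpi (.of_forall hp), hp1, ENNReal.ofReal_one]

lemma prod_tail {Z : Type*} [MeasurableSpace Z] (ν : Measure Z) (n : ℕ) (p g : Z → ℝ)
    (hpm : Measurable p) (hp : ∀ z, 0 ≤ p z) (hpi : Integrable p ν) (hp1 : ∫ z, p z ∂ν = 1)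
    (hgm : Measurable g) (hg : ∀ z, 0 < g z) (ρ : ℝ) (hρ : 0 ≤ ρ)
    (h : ∫⁻ z, ENNReal.ofReal (g z * p z) ∂ν ≤ ENNReal.ofReal ρ) :
    (Measure.pi fun _ : Fin n => ν.withDensity fun z => ENNReal.ofReal (p z))
      {z | 1 ≤ ∏ i, g (z i)} ≤ ENNReal.ofReal (ρ ^ n) := by
  have := withDensity_prob ν p hp hpi hp1
  set μ := ν.withDensity fun z => ENNReal.ofReal (p z) with hμ
  have h1 : ∫⁻ z, ENNReal.ofReal (g z) ∂μ ≤ ENNReal.ofReal ρ := by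
    rw [hμ, lintegral_withDensity_eq_lintegral_mul _ hpm.ennreal_ofReal hgm.ennreal_ofReal]
    refine le_trans (le_of_eq (lintegral_congr fun z => ?_)) h
    rw [Pi.mul_apply, mul_comm, ← ENNReal.ofReal_mul (hg z).le]
  have hm : Measurable fun z : Fin n → Z => ∏ i, ENNReal.ofReal (g (z i)) := by fun_prop
  have h2 := mul_meas_ge_le_lintegral (μ := Measure.pi fun _ : Fin n => μ) hm 1
  rw [lintegral_pi_prod n μ (fun _ z => ENNReal.ofReal (g z)) (fun _ => hgm.ennreal_ofReal),
    one_mul] at h2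
  refine le_trans (measure_mono ?_) (h2.trans ?_)
  · intro z hz
    simp only [Set.mem_ofPred_eq] at hz ⊢
    rw [← ENNReal.ofReal_prod_of_nonneg fun i _ => (hg _).le]
    simpa using hz
  · simp only [Finset.prod_const, Finset.card_univ, Fintype.card_fin]
    rw [ENNReal.ofReal_pow hρ]
    gcongr

/-- regularity of a density -/
def IsDens {Z : Type*} [MeasurableSpace Z] (ν : Measure Z) (p : Z → ℝ) : Prop :=
  Measurable p ∧ (∀ z, 0 ≤ p z) ∧ Integrable p ν ∧ ∫ z, p z ∂ν = 1

lemma finite_test {Z : Type*} [MeasurableSpace Z] (ν : Measure Z) [IsProbabilityMeasure ν] (n : ℕ)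
    (A B : Set (Z → ℝ)) (hA : ∀ p ∈ A, IsDens ν p) (hB : ∀ p ∈ B, IsDens ν p)
    (hcA : Convex ℝ A) (hcB : Convex ℝ B) (ρ ρ' : ℝ) (hρ : ρ < ρ') (hρ' : 0 ≤ ρ')
    (haff : ∀ p ∈ A, ∀ q ∈ B, ∫ z, √(p z * q z) ∂ν ≤ ρ)
    (F G : Finset (Z → ℝ)) (hFA : ↑F ⊆ A) (hGB : ↑G ⊆ B) (hF : F.Nonempty) (hG : G.Nonempty) :
    ∃ T : Set (Fin n → Z), MeasurableSet T ∧
      (∀ p ∈ F, (Measure.pi fun _ : Fin n => ν.withDensity fun z => ENNReal.ofReal (p z)) T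
        ≤ ENNReal.ofReal (ρ' ^ n)) ∧
      (∀ p ∈ G, (Measure.pi fun _ : Fin n => ν.withDensity fun z => ENNReal.ofReal (p z)) Tᶜ
        ≤ ENNReal.ofReal (ρ' ^ n)) := by
  have : Nonempty F := hF.to_subtype
  have : Nonempty G := hG.to_subtype
  have hA' : ∀ i : F, IsDens ν i.1 := fun i => hA _ (hFA i.2)
  have hB' : ∀ i : G, IsDens ν i.1 := fun i => hB _ (hGB i.2)
  obtain ⟨g, hgm, hg, h1, h2⟩ := finite_g ν (fun i : F => i.1) (fun j : G => j.1)
    (fun i => (hA' i).1) (fun i => (hB' i).1) (fun i => (hA' i).2.1) (fun i => (hB' i).2.1)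
    (fun i => (hA' i).2.2.1) (fun i => (hB' i).2.2.1) (fun i => (hA' i).2.2.2)
    (fun i => (hB' i).2.2.2) ρ ρ' hρ (by
      intro w hw v hv
      have e1 := hcA.sum_mem (t := Finset.univ) (fun i _ => hw.1 i) hw.2
        (z := fun i : F => i.1) (fun i _ => hFA i.2)
      have e2 := hcB.sum_mem (t := Finset.univ) (fun i _ => hv.1 i) hv.2
        (z := fun i : G => i.1) (fun i _ => hGB i.2)
      have := haff _ e1 _ e2
      simpa only [Finset.sum_apply, Pi.smul_apply, smul_eq_mul] using this)
  refine ⟨{z | 1 ≤ ∏ i, g (z i)}, measurableSet_le measurable_const (by fun_prop), ?_, ?_⟩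
  · intro p hp
    obtain ⟨a1, a2, a3, a4⟩ := hA p (hFA hp)
    exact prod_tail ν n p g a1 a2 a3 a4 hgm hg ρ' hρ' (h1 ⟨p, hp⟩)
  · intro p hp
    obtain ⟨a1, a2, a3, a4⟩ := hB p (hGB hp)
    refine le_trans (measure_mono ?_) (prod_tail ν n p (fun z => (g z)⁻¹) a1 a2 a3 a4 hgm.inv
      (fun z => inv_pos.2 (hg z)) ρ' hρ' (h2 ⟨p, hp⟩))
    intro z hz
    simp only [Set.mem_compl_iff, Set.mem_ofPred_eq, not_le] at hz ⊢
    rw [Finset.prod_inv_distrib]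
    exact (one_le_inv₀ (Finset.prod_pos fun i _ => hg _)).2 hz.le

/-- the set of randomized tests satisfying an (affine) risk constraint -/
def KSet {Y : Type*} [MeasurableSpace Y] (ν : Measure Y) (m : Measure Y) (a b : ℝ) (e : ℝ≥0∞) :
    Set (Lp ℝ 2 ν) :=
  {φ | (∀ᵐ z ∂ν, 0 ≤ φ z ∧ φ z ≤ 1) ∧ ∫⁻ z, ENNReal.ofReal (a + b * φ z) ∂m ≤ e}

lemma KSet_closed {Y : Type*} [MeasurableSpace Y] (ν : Measure Y) (m : Measure Y) (hm : m ≪ ν)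
    (a b : ℝ) (e : ℝ≥0∞) : IsClosed (KSet ν m a b e) := by
  apply IsSeqClosed.isClosed
  intro u φ hu hφ
  have h1 := tendstoInMeasure_of_tendsto_Lp hφ
  obtain ⟨ns, -, hns⟩ := h1.exists_seq_tendsto_ae
  constructor
  · have h2 : ∀ᵐ z ∂ν, ∀ k, 0 ≤ u k z ∧ u k z ≤ 1 := ae_all_iff.2 fun k => (hu k).1
    filter_upwards [hns, h2] with z hz h2
    exact ⟨ge_of_tendsto' hz fun k => (h2 _).1, le_of_tendsto' hz fun k => (h2 _).2⟩
  · calc ∫⁻ z, ENNReal.ofReal (a + b * φ z) ∂m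
        = ∫⁻ z, Filter.liminf (fun k => ENNReal.ofReal (a + b * u (ns k) z)) Filter.atTop ∂m := by
          apply lintegral_congr_ae
          filter_upwards [hm.ae_le hns] with z hz
          symm
          apply Filter.Tendsto.liminf_eq
          exact ENNReal.tendsto_ofReal ((hz.const_mul b).const_add a)
      _ ≤ Filter.liminf (fun k => ∫⁻ z, ENNReal.ofReal (a + b * u (ns k) z) ∂m) Filter.atTop := by
          apply lintegral_liminf_le
          intro k
          exact (((Lp.stronglyMeasurable (u (ns k))).measurable.const_mul b).const_add a).ennreal_ofReal
      _ ≤ Filter.liminf (fun _ : ℕ => e) Filter.atTop :=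
          Filter.liminf_le_liminf (.of_forall fun k => (hu _).2)
      _ = e := by simp

lemma KSet_convex {Y : Type*} [MeasurableSpace Y] (ν : Measure Y) (m : Measure Y) (hm : m ≪ ν)
    (a b : ℝ) (e : ℝ≥0∞) : Convex ℝ (KSet ν m a b e) := by
  intro φ hφ ψ hψ s t hs ht hst
  have hadd := Lp.coeFn_add (s • φ) (t • ψ)
  have h1 := Lp.coeFn_smul s φ
  have h2 := Lp.coeFn_smul t ψ
  have hv : ∀ᵐ z ∂ν, (s • φ + t • ψ : Lp ℝ 2 ν) z = s * φ z + t * ψ z := by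
    filter_upwards [hadd, h1, h2] with z e1 e2 e3
    rw [e1, Pi.add_apply, e2, e3]; rfl
  constructor
  · filter_upwards [hv, hφ.1, hψ.1] with z e1 e2 e3
    rw [e1]
    constructor
    · have := e2.1; have := e3.1; positivity
    · nlinarith [e2.2, e3.2]
  · have hm1 : Measurable fun z => ENNReal.ofReal (a + b * φ z) :=
      (((Lp.stronglyMeasurable φ).measurable.const_mul b).const_add a).ennreal_ofReal
    have hm2 : Measurable fun z => ENNReal.ofReal (a + b * ψ z) :=
      (((Lp.stronglyMeasurable ψ).measurable.const_mul b).const_add a).ennreal_ofReal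
    calc ∫⁻ z, ENNReal.ofReal (a + b * (s • φ + t • ψ : Lp ℝ 2 ν) z) ∂m
        ≤ ∫⁻ z, (ENNReal.ofReal s * ENNReal.ofReal (a + b * φ z) +
            ENNReal.ofReal t * ENNReal.ofReal (a + b * ψ z)) ∂m := by
          apply lintegral_mono_ae
          filter_upwards [hm.ae_le hv] with z hz
          rw [hz, ← ENNReal.ofReal_mul hs, ← ENNReal.ofReal_mul ht]
          refine le_trans (ENNReal.ofReal_le_ofReal (le_of_eq ?_)) ENNReal.ofReal_add_le
          have : a = (s + t) * a := by rw [hst, one_mul]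
          nth_rewrite 1 [this]
          ring
      _ = ENNReal.ofReal s * (∫⁻ z, ENNReal.ofReal (a + b * φ z) ∂m) +
            ENNReal.ofReal t * ∫⁻ z, ENNReal.ofReal (a + b * ψ z) ∂m := by
          rw [lintegral_add_left (hm1.const_mul _), lintegral_const_mul _ hm1,
            lintegral_const_mul _ hm2]
      _ ≤ ENNReal.ofReal s * e + ENNReal.ofReal t * e := by
          gcongr
          · exact hφ.2
          · exact hψ.2
      _ = e := by
          rw [← add_mul, ← ENNReal.ofReal_add hs ht, hst, ENNReal.ofReal_one, one_mul]

lemma exists_test {Z : Type*} [MeasurableSpace Z] (ν : Measure Z) [IsProbabilityMeasure ν] (n : ℕ)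
    (A B : Set (Z → ℝ)) (hA : ∀ p ∈ A, IsDens ν p) (hB : ∀ p ∈ B, IsDens ν p)
    (hcA : Convex ℝ A) (hcB : Convex ℝ B) (ρ ρ' : ℝ) (hρ : ρ < ρ') (hρ' : 0 ≤ ρ')
    (haff : ∀ p ∈ A, ∀ q ∈ B, ∫ z, √(p z * q z) ∂ν ≤ ρ) :
    ∃ T : Set (Fin n → Z), MeasurableSet T ∧
      (∀ p ∈ A, (Measure.pi fun _ : Fin n => ν.withDensity fun z => ENNReal.ofReal (p z)) T
        ≤ ENNReal.ofReal (2 * ρ' ^ n)) ∧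
      (∀ p ∈ B, (Measure.pi fun _ : Fin n => ν.withDensity fun z => ENNReal.ofReal (p z)) Tᶜ
        ≤ ENNReal.ofReal (2 * ρ' ^ n)) := by
  classical
  rcases A.eq_empty_or_nonempty with rfl | ⟨p0, hp0⟩
  · exact ⟨Set.univ, MeasurableSet.univ, by simp, by simp⟩
  rcases B.eq_empty_or_nonempty with rfl | ⟨q0, hq0⟩
  · exact ⟨∅, MeasurableSet.empty, by simp, by simp⟩
  let pr : (Z → ℝ) → Measure (Fin n → Z) := fun p =>
    Measure.pi fun _ : Fin n => ν.withDensity fun z => ENNReal.ofReal (p z)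
  let νn : Measure (Fin n → Z) := Measure.pi fun _ : Fin n => ν
  have hac : ∀ p, IsDens ν p → pr p ≪ νn := by
    intro p hp
    have := withDensity_prob ν p hp.2.1 hp.2.2.1 hp.2.2.2
    exact pi_ac n _ ν (withDensity_absolutelyContinuous _ _)
  let e := ENNReal.ofReal (ρ' ^ n)
  let K : (A ⊕ B) → Set (Lp ℝ 2 νn) := Sum.elim (fun p => KSet νn (pr p.1) 0 1 e)
    (fun q => KSet νn (pr q.1) 1 (-1) e)
  have hne : (⋂ i, K i).Nonempty := by
    refine fip_hilbert K ?_ ?_ 1 ?_ ?_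
    · rintro (p | q)
      · exact KSet_closed _ _ (hac _ (hA _ p.2)) _ _ _
      · exact KSet_closed _ _ (hac _ (hB _ q.2)) _ _ _
    · rintro (p | q)
      · exact KSet_convex _ _ (hac _ (hA _ p.2)) _ _ _
      · exact KSet_convex _ _ (hac _ (hB _ q.2)) _ _ _
    · intro i φ hφ
      have h1 : ∀ᵐ z ∂νn, 0 ≤ φ z ∧ φ z ≤ 1 := by
        rcases i with p | q <;> exact hφ.1
      have h2 : ∀ᵐ z ∂νn, ‖φ z‖ ≤ 1 := by
        filter_upwards [h1] with z hz
        rw [Real.norm_of_nonneg hz.1]; exact hz.2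
      have := Lp.norm_le_of_ae_bound zero_le_one h2
      simpa [measureUnivNNReal] using this
    · intro F
      obtain ⟨T, hT, h1, h2⟩ := finite_test ν n A B hA hB hcA hcB ρ ρ' hρ hρ' haff
        (insert p0 (F.toLeft.image Subtype.val)) (insert q0 (F.toRight.image Subtype.val))
        (by intro p; simp; rintro (rfl | ⟨h, -⟩) <;> assumption)
        (by intro p; simp; rintro (rfl | ⟨h, -⟩) <;> assumption)
        (Finset.insert_nonempty _ _) (Finset.insert_nonempty _ _)
      have hind : ∀ᵐ z ∂νn, (indicatorConstLp 2 hT (measure_ne_top νn T) (1 : ℝ)) z =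
          T.indicator (fun _ => (1 : ℝ)) z := indicatorConstLp_coeFn
      have h01 : ∀ᵐ z ∂νn, 0 ≤ (indicatorConstLp 2 hT (measure_ne_top νn T) (1 : ℝ)) z ∧
          (indicatorConstLp 2 hT (measure_ne_top νn T) (1 : ℝ)) z ≤ 1 := by
        filter_upwards [hind] with z hz
        rw [hz]
        by_cases h : z ∈ T <;> simp [h]
      refine ⟨indicatorConstLp 2 hT (measure_ne_top _ _) (1 : ℝ), ?_⟩
      rw [Set.mem_iInter₂]
      rintro (p | q) hi
      · refine ⟨h01, ?_⟩
        refine le_trans (le_of_eq ?_) (h1 p.1 (by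
          simp only [Finset.mem_insert, Finset.mem_image, Finset.mem_toLeft]
          exact Or.inr ⟨p, hi, rfl⟩))
        rw [← lintegral_indicator_one hT]
        apply lintegral_congr_ae
        filter_upwards [(hac _ (hA _ p.2)).ae_le hind] with z hz
        rw [hz]
        by_cases h : z ∈ T <;> simp [h]
      · refine ⟨h01, ?_⟩
        refine le_trans (le_of_eq ?_) (h2 q.1 (by
          simp only [Finset.mem_insert, Finset.mem_image, Finset.mem_toRight]
          exact Or.inr ⟨q, hi, rfl⟩))
        rw [← lintegral_indicator_one hT.compl]
        apply lintegral_congr_ae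
        filter_upwards [(hac _ (hB _ q.2)).ae_le hind] with z hz
        rw [hz]
        by_cases h : z ∈ T <;> simp [h]
  obtain ⟨φ, hφ⟩ := hne
  rw [Set.mem_iInter] at hφ
  have hφm : Measurable φ := (Lp.stronglyMeasurable φ).measurable
  have mark : ∀ (m : Measure (Fin n → Z)) (f : (Fin n → Z) → ℝ), Measurable f →
      ∫⁻ z, ENNReal.ofReal (f z) ∂m ≤ e → m {z | 1 / 2 ≤ f z} ≤ ENNReal.ofReal (2 * ρ' ^ n) := by
    intro m f hf h
    have h1 := mul_meas_ge_le_lintegral (μ := m) (hf.const_mul 2).ennreal_ofReal 1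
    rw [one_mul] at h1
    refine le_trans (measure_mono ?_) (h1.trans ?_)
    · intro z hz
      simp only [Set.mem_ofPred_eq] at hz ⊢
      rw [← ENNReal.ofReal_one]
      exact ENNReal.ofReal_le_ofReal (by linarith)
    · simp_rw [ENNReal.ofReal_mul (zero_le_two : (0 : ℝ) ≤ 2)]
      rw [lintegral_const_mul _ hf.ennreal_ofReal]
      gcongr
  refine ⟨{z | 1 / 2 ≤ φ z}, measurableSet_le measurable_const hφm, fun p hp => ?_, fun q hq => ?_⟩
  · apply mark (pr p) φ hφm
    have := (hφ (.inl ⟨p, hp⟩)).2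
    simpa using this
  · have h := mark (pr q) (fun z => 1 + -1 * φ z) ((hφm.const_mul _).const_add _)
      (hφ (.inr ⟨q, hq⟩)).2
    refine le_trans (measure_mono ?_) h
    intro z hz
    simp only [Set.mem_compl_iff, Set.mem_ofPred_eq, not_le] at hz ⊢
    linarith


/-- measure with a given real density -/
noncomputable def wd {Z : Type*} [MeasurableSpace Z] (ν : Measure Z) (p : Z → ℝ) : Measure Z :=
  ν.withDensity fun z => ENNReal.ofReal (p z)

lemma dH_sq_s6 {Z : Type*} [MeasurableSpace Z] (ν : Measure Z) [IsProbabilityMeasure ν]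
    (p q : Z → ℝ) (hp : IsDens ν p) (hq : IsDens ν q) :
    dH (wd ν p) (wd ν q) ^ 2 = 2 - 2 * ∫ z, √(p z * q z) ∂ν := by
  have i1 := withDensity_prob ν p hp.2.1 hp.2.2.1 hp.2.2.2
  have i2 := withDensity_prob ν q hq.2.1 hq.2.2.1 hq.2.2.2
  change IsProbabilityMeasure (wd ν p) at i1
  change IsProbabilityMeasure (wd ν q) at i2
  have a1 : wd ν p ≪ ν := withDensity_absolutelyContinuous _ _
  have a2 : wd ν q ≪ ν := withDensity_absolutelyContinuous _ _
  have r1 : (wd ν p).rnDeriv ν =ᵐ[ν] fun z => ENNReal.ofReal (p z) :=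
    Measure.rnDeriv_withDensity ν hp.1.ennreal_ofReal
  have r2 : (wd ν q).rnDeriv ν =ᵐ[ν] fun z => ENNReal.ofReal (q z) :=
    Measure.rnDeriv_withDensity ν hq.1.ennreal_ofReal
  set P := wd ν p
  set Q := wd ν q
  have a3 : P + Q ≪ ν := Measure.AbsolutelyContinuous.add_left a1 a2
  have s1 := Measure.rnDeriv_mul_rnDeriv (μ := P) (ν := P + Q) (κ := ν)
    (Measure.AbsolutelyContinuous.rfl.add_right _)
  have s2 := Measure.rnDeriv_mul_rnDeriv (μ := Q) (ν := P + Q) (κ := ν)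
    (by rw [add_comm]; exact Measure.AbsolutelyContinuous.rfl.add_right _)
  have hsqi := sqrt_mul_integrable hp.1 hq.1 hp.2.1 hq.2.1 hp.2.2.1 hq.2.2.1
  rw [dH, Real.sq_sqrt (integral_nonneg fun _ => sq_nonneg _), ← integral_toReal_rnDeriv_mul a3]
  have : ∫ z, ((P + Q).rnDeriv ν z).toReal * (√((P.rnDeriv (P + Q) z).toReal) -
      √((Q.rnDeriv (P + Q) z).toReal)) ^ 2 ∂ν = ∫ z, (p z + q z - 2 * √(p z * q z)) ∂ν := by
    apply integral_congr_ae
    filter_upwards [s1, s2, r1, r2] with z e1 e2 e3 e4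
    rw [Pi.mul_apply, e3] at e1
    rw [Pi.mul_apply, e4] at e2
    have e1' := congrArg ENNReal.toReal e1
    have e2' := congrArg ENNReal.toReal e2
    rw [ENNReal.toReal_mul, ENNReal.toReal_ofReal (hp.2.1 z)] at e1'
    rw [ENNReal.toReal_mul, ENNReal.toReal_ofReal (hq.2.1 z)] at e2'
    rw [← e1', ← e2']
    have f0 : 0 ≤ (P.rnDeriv (P + Q) z).toReal := ENNReal.toReal_nonneg
    have g0 : 0 ≤ (Q.rnDeriv (P + Q) z).toReal := ENNReal.toReal_nonneg
    have h0 : 0 ≤ ((P + Q).rnDeriv ν z).toReal := ENNReal.toReal_nonneg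
    generalize (P.rnDeriv (P + Q) z).toReal = f at *
    generalize (Q.rnDeriv (P + Q) z).toReal = g at *
    generalize ((P + Q).rnDeriv ν z).toReal = s at *
    rw [show f * s * (g * s) = (f * g) * (s ^ 2) by ring, Real.sqrt_mul (by positivity),
      Real.sqrt_sq h0, Real.sqrt_mul f0]
    have := Real.sq_sqrt f0
    have := Real.sq_sqrt g0
    nlinarith
  have hpq : Integrable (fun z => p z + q z) ν := hp.2.2.1.add hq.2.2.1
  rw [this, integral_sub hpq (hsqi.const_mul 2),
    integral_add hp.2.2.1 hq.2.2.1, hp.2.2.2, hq.2.2.2, integral_const_mul]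
  ring

lemma IsDens.mix {Z : Type*} [MeasurableSpace Z] {ν : Measure Z}
    {p q : Z → ℝ} (hp : IsDens ν p) (hq : IsDens ν q) {s t : ℝ} (hs : 0 ≤ s) (ht : 0 ≤ t)
    (hst : s + t = 1) : IsDens ν (s • p + t • q) := by
  obtain ⟨a1, a2, a3, a4⟩ := hp
  obtain ⟨b1, b2, b3, b4⟩ := hq
  refine ⟨(a1.const_smul s).add (b1.const_smul t), fun z => ?_, (a3.smul s).add (b3.smul t), ?_⟩
  · have := a2 z; have := b2 z
    simp only [Pi.add_apply, Pi.smul_apply, smul_eq_mul]; positivity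
  · simp only [Pi.add_apply, Pi.smul_apply, smul_eq_mul]
    rw [integral_add (a3.const_mul s) (b3.const_mul t), integral_const_mul, integral_const_mul,
      a4, b4]
    linarith

lemma wd_mix {Z : Type*} [MeasurableSpace Z] {ν : Measure Z}
    {p q : Z → ℝ} (hp : IsDens ν p) (hq : IsDens ν q) {s t : ℝ} (hs : 0 ≤ s) (ht : 0 ≤ t) :
    wd ν (s • p + t • q) = ENNReal.ofReal s • wd ν p + ENNReal.ofReal t • wd ν q := by
  unfold wd
  rw [← withDensity_smul _ hp.1.ennreal_ofReal, ← withDensity_smul _ hq.1.ennreal_ofReal,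
    ← withDensity_add_left (hp.1.ennreal_ofReal.const_smul _)]
  congr 1
  ext z
  have := hp.2.1 z; have := hq.2.1 z
  simp only [Pi.add_apply, Pi.smul_apply, smul_eq_mul]
  rw [ENNReal.ofReal_add (by positivity) (by positivity), ENNReal.ofReal_mul hs,
    ENNReal.ofReal_mul ht]

lemma dH_sq_mix {Z : Type*} [MeasurableSpace Z] (ν : Measure Z) [IsProbabilityMeasure ν]
    (p q : Z → ℝ) (hp : IsDens ν p) (hq : IsDens ν q) (s t : ℝ) (hs : 0 ≤ s) (ht : 0 ≤ t)
    (hst : s + t = 1) :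
    dH (wd ν p) (wd ν (s • p + t • q)) ^ 2 ≤ t * dH (wd ν p) (wd ν q) ^ 2 := by
  have hm := hp.mix hq hs ht hst
  rw [dH_sq_s6 ν _ _ hp hq, dH_sq_s6 ν _ _ hp hm]
  have hsqi := sqrt_mul_integrable hp.1 hq.1 hp.2.1 hq.2.1 hp.2.2.1 hq.2.2.1
  have hsqi2 := sqrt_mul_integrable hp.1 hm.1 hp.2.1 hm.2.1 hp.2.2.1 hm.2.2.1
  have h : ∫ z, (s * p z + t * √(p z * q z)) ∂ν ≤ ∫ z, √(p z * (s • p + t • q) z) ∂ν := by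
    refine integral_mono ((hp.2.2.1.const_mul s).add (hsqi.const_mul t)) hsqi2 fun z => ?_
    have h1 := hp.2.1 z
    have h2 := hq.2.1 z
    simp only [Pi.add_apply, Pi.smul_apply, smul_eq_mul]
    apply Real.le_sqrt_of_sq_le
    have e : s = 1 - t := by linarith
    rw [Real.sqrt_mul h1]
    set a := √(p z)
    set b := √(q z)
    have ea : p z = a ^ 2 := (Real.sq_sqrt h1).symm
    have eb : q z = b ^ 2 := (Real.sq_sqrt h2).symm
    rw [ea, eb]
    have : a ^ 2 * (s * a ^ 2 + t * b ^ 2) - (s * a ^ 2 + t * (a * b)) ^ 2 =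
        a ^ 2 * (s * t * (a - b) ^ 2) := by rw [e]; ring
    have : 0 ≤ a ^ 2 * (s * t * (a - b) ^ 2) := by positivity
    linarith
  rw [integral_add (hp.2.2.1.const_mul s) (hsqi.const_mul t), integral_const_mul,
    integral_const_mul, hp.2.2.2] at h
  have e : s = 1 - t := by linarith
  nlinarith

lemma exists_dens {Z : Type*} [MeasurableSpace Z] (ν : Measure Z) [IsProbabilityMeasure ν]
    (μ : Measure Z) [IsProbabilityMeasure μ] (h : μ ≪ ν) : ∃ p, IsDens ν p ∧ μ = wd ν p := by
  refine ⟨fun z => (μ.rnDeriv ν z).toReal, ⟨(Measure.measurable_rnDeriv μ ν).ennreal_toReal,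
    fun z => ENNReal.toReal_nonneg, Measure.integrable_toReal_rnDeriv, ?_⟩, ?_⟩
  · rw [Measure.integral_toReal_rnDeriv h]; simp
  · unfold wd
    conv_lhs => rw [← Measure.withDensity_rnDeriv_eq μ ν h]
    apply withDensity_congr_ae
    filter_upwards [Measure.rnDeriv_lt_top μ ν] with z hz
    rw [ENNReal.ofReal_toReal hz.ne]

lemma push_mix {X Z : Type*} [MeasurableSpace X] [MeasurableSpace Z] (Q1 : Kernel X Z)
    (lam : ℝ) (P0 P1 : Measure X) :
    push (fun x => Q1 x) (mix lam P0 P1) =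
      ENNReal.ofReal lam • push (fun x => Q1 x) P0 +
        ENNReal.ofReal (1 - lam) • push (fun x => Q1 x) P1 := by
  ext s hs
  unfold push mix
  simp only [Measure.add_apply, Measure.smul_apply]
  rw [Measure.bind_apply hs Q1.measurable.aemeasurable,
    Measure.bind_apply hs Q1.measurable.aemeasurable,
    Measure.bind_apply hs Q1.measurable.aemeasurable]
  simp [lintegral_add_measure, lintegral_smul_measure]

/-- domination of the privatized family by one probability measure -/
lemma exists_dom {X Z : Type*} [MeasurableSpace X] [MeasurableSpace Z]
    (P : Set (Measure X)) (hPprob : ∀ μ ∈ P, IsProbabilityMeasure μ) (hne : P.Nonempty)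
    (hdom : Dominated P) (Q1 : Kernel X Z) (hQ1 : IsMarkovKernel Q1) :
    ∃ ν : Measure Z, IsProbabilityMeasure ν ∧ ∀ μ ∈ P,
      ∃ p, IsDens ν p ∧ push (fun x => Q1 x) μ = wd ν p := by
  obtain ⟨ν, hν, hac⟩ := hdom
  have hν0 : ν ≠ 0 := by
    rintro rfl
    obtain ⟨μ, hμ⟩ := hne
    have := hPprob μ hμ
    have h := hac μ hμ
    exact IsProbabilityMeasure.ne_zero μ (Measure.absolutelyContinuous_zero_iff.1 h)
  have : NeZero ν := ⟨hν0⟩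
  have hpr : IsProbabilityMeasure (ν.toFinite) := inferInstance
  have hpr2 : IsProbabilityMeasure (ν.toFinite.bind Q1) := inferInstance
  refine ⟨ν.toFinite.bind Q1, hpr2, fun μ hμ => ?_⟩
  have := hPprob μ hμ
  have hpr3 : IsProbabilityMeasure (μ.bind Q1) := inferInstance
  have h1 : μ ≪ ν.toFinite := (hac μ hμ).trans (absolutelyContinuous_toFinite ν)
  obtain ⟨p, h2, h3⟩ := exists_dens (ν.toFinite.bind Q1) (μ.bind Q1) (h1.comp_right Q1)
  exact ⟨p, h2, h3⟩


lemma modulus_le {X Z : Type*} [MeasurableSpace X] [MeasurableSpace Z]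
    (P : Set (Measure X)) (θ : Measure X → ℝ) (hA : CondA P θ) (Q1 : Kernel X Z) (ε : ℝ)
    (P0 P1 : Measure X) (h0 : P0 ∈ P) (h1 : P1 ∈ P)
    (h : dH (push (fun x => Q1 x) P0) (push (fun x => Q1 x) P1) ≤ ε) :
    |θ P0 - θ P1| ≤ (omegaHQ (fun x => Q1 x) P θ ε).toReal := by
  obtain ⟨c, hc⟩ := hA
  have hfin : omegaHQ (fun x => Q1 x) P θ ε ≠ ⊤ := by
    refine ne_top_of_le_ne_top (b := ENNReal.ofReal (2 * c)) ENNReal.ofReal_ne_top ?_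
    unfold omegaHQ modulus
    refine iSup_le fun R0 => iSup_le fun g0 => iSup_le fun R1 => iSup_le fun g1 =>
      iSup_le fun _ => ENNReal.ofReal_le_ofReal ?_
    have := abs_le.1 (hc R0 g0)
    have := abs_le.1 (hc R1 g1)
    exact abs_le.2 ⟨by linarith, by linarith⟩
  rw [← ENNReal.ofReal_le_iff_le_toReal hfin]
  unfold omegaHQ modulus
  exact le_iSup_of_le P0 (le_iSup_of_le h0 (le_iSup_of_le P1 (le_iSup_of_le h1
    (le_iSup_of_le h le_rfl))))

lemma modulus_scale {X Z : Type*} [MeasurableSpace X] [MeasurableSpace Z]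
    (n : ℕ) (hn : 0 < n) (P : Set (Measure X)) (hPprob : ∀ μ ∈ P, IsProbabilityMeasure μ)
    (θ : Measure X → ℝ) (hA : CondA P θ)
    (hdom : Dominated P) (hconv : ConvexMeasureSet P) (hlin : LinearFunctional P θ)
    (Q1 : Kernel X Z) (hQ1 : IsMarkovKernel Q1)
    (P0 P1 : Measure X) (h0 : P0 ∈ P) (h1 : P1 ∈ P) (lam : ℝ) (hl0 : 0 ≤ lam) (hl1 : lam ≤ 1)
    (h : lam * dH (push (fun x => Q1 x) P0) (push (fun x => Q1 x) P1) ^ 2 ≤ 1 / (n : ℝ)) :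
    lam * |θ P0 - θ P1| ≤ (omegaHQ (fun x => Q1 x) P θ ((Real.sqrt ↑n)⁻¹)).toReal := by
  obtain ⟨ν, hν, hd⟩ := exists_dom P hPprob ⟨P0, h0⟩ hdom Q1 hQ1
  obtain ⟨p, hp, ep⟩ := hd P0 h0
  obtain ⟨q, hq, eq⟩ := hd P1 h1
  have hm := hconv P0 h0 P1 h1 (1 - lam) (by linarith) (by linarith)
  have e := hlin P0 h0 P1 h1 (1 - lam) (by linarith) (by linarith)
  have epush : push (fun x => Q1 x) (mix (1 - lam) P0 P1) = wd ν ((1 - lam) • p + lam • q) := by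
    rw [push_mix, wd_mix hp hq (by linarith) hl0, ep, eq]
    simp
  have key := modulus_le P θ hA Q1 ((Real.sqrt ↑n)⁻¹) P0 _ h0 hm (by
    have h2 := dH_sq_mix ν p q hp hq (1 - lam) lam (by linarith) hl0 (by ring)
    rw [← epush, ← ep, ← eq] at h2
    have h3 := h2.trans h
    apply le_of_sq_le_sq _ (by positivity)
    rw [inv_pow, Real.sq_sqrt (by positivity)]
    simpa using h3)
  rw [e] at key
  have : θ P0 - ((1 - lam) * θ P0 + (1 - (1 - lam)) * θ P1) = lam * (θ P0 - θ P1) := by ring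
  rw [this, abs_mul, abs_of_nonneg hl0] at key
  exact key

lemma dH_lower {X Z : Type*} [MeasurableSpace X] [MeasurableSpace Z]
    (n : ℕ) (hn : 0 < n) (P : Set (Measure X)) (hPprob : ∀ μ ∈ P, IsProbabilityMeasure μ)
    (θ : Measure X → ℝ) (hA : CondA P θ)
    (hdom : Dominated P) (hconv : ConvexMeasureSet P) (hlin : LinearFunctional P θ)
    (Q1 : Kernel X Z) (hQ1 : IsMarkovKernel Q1) (om : ℝ)
    (hom : om = (omegaHQ (fun x => Q1 x) P θ ((Real.sqrt ↑n)⁻¹)).toReal) (hpos : 0 < om)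
    (P0 P1 : Measure X) (h0 : P0 ∈ P) (h1 : P1 ∈ P) (τ : ℝ) (hτ : 1 < τ)
    (h : τ * om ≤ |θ P0 - θ P1|) :
    τ / n ≤ dH (push (fun x => Q1 x) P0) (push (fun x => Q1 x) P1) ^ 2 := by
  by_contra! hcon
  have hn' : (0 : ℝ) < n := by exact_mod_cast hn
  have key := fun lam a b c => modulus_scale n hn P hPprob θ hA hdom hconv hlin Q1 hQ1 P0 P1 h0 h1
    lam a b c
  rw [← hom] at key
  set d2 := dH (push (fun x => Q1 x) P0) (push (fun x => Q1 x) P1) ^ 2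
  have hd0 : 0 ≤ d2 := sq_nonneg _
  by_cases hd : d2 ≤ 1 / n
  · have := key 1 (by norm_num) le_rfl (by linarith)
    nlinarith
  · push Not at hd
    have hnd : 1 < n * d2 := by
      rw [div_lt_iff₀ hn'] at hd; linarith
    have hdτ : n * d2 < τ := by
      rw [lt_div_iff₀ hn'] at hcon; linarith
    have hd2 : 0 < d2 := by
      rcases hd0.eq_or_lt with h | h
      · rw [← h] at hnd; norm_num at hnd
      · exact h
    have := key (1 / (n * d2)) (by positivity) (by
      rw [div_le_one (by linarith)]; exact hnd.le) (by
      apply le_of_eq; field_simp)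
    rw [one_div_mul_eq_div, div_le_iff₀ (by linarith)] at this
    nlinarith

lemma theta_const {X Z : Type*} [MeasurableSpace X] [MeasurableSpace Z]
    (n : ℕ) (hn : 0 < n) (P : Set (Measure X)) (hPprob : ∀ μ ∈ P, IsProbabilityMeasure μ)
    (θ : Measure X → ℝ) (hA : CondA P θ)
    (hdom : Dominated P) (hconv : ConvexMeasureSet P) (hlin : LinearFunctional P θ)
    (Q1 : Kernel X Z) (hQ1 : IsMarkovKernel Q1)
    (hom : (omegaHQ (fun x => Q1 x) P θ ((Real.sqrt ↑n)⁻¹)).toReal = 0)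
    (P0 P1 : Measure X) (h0 : P0 ∈ P) (h1 : P1 ∈ P) : θ P0 = θ P1 := by
  have hn' : (0 : ℝ) < n := by exact_mod_cast hn
  have key := fun lam a b c => modulus_scale n hn P hPprob θ hA hdom hconv hlin Q1 hQ1 P0 P1 h0 h1
    lam a b c
  rw [hom] at key
  set d2 := dH (push (fun x => Q1 x) P0) (push (fun x => Q1 x) P1) ^ 2
  have hd0 : 0 ≤ d2 := sq_nonneg _
  have hp : 0 < n * d2 + 1 := by positivity
  have := key (1 / (n * d2 + 1)) (by positivity) (by
      rw [div_le_one hp]; nlinarith) (by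
      rw [one_div_mul_eq_div, div_le_div_iff₀ hp hn']; nlinarith)
  rw [one_div_mul_eq_div, div_le_iff₀ hp, zero_mul] at this
  exact sub_eq_zero.1 (abs_nonpos_iff.1 this)

lemma test_theta {X Z : Type*} [MeasurableSpace X] [MeasurableSpace Z]
    (n : ℕ) (hn : 0 < n) (P : Set (Measure X)) (hPprob : ∀ μ ∈ P, IsProbabilityMeasure μ)
    (hne : P.Nonempty)
    (θ : Measure X → ℝ) (hA : CondA P θ)
    (hdom : Dominated P) (hconv : ConvexMeasureSet P) (hlin : LinearFunctional P θ)
    (Q1 : Kernel X Z) (hQ1 : IsMarkovKernel Q1) (om : ℝ)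
    (hom : om = (omegaHQ (fun x => Q1 x) P θ ((Real.sqrt ↑n)⁻¹)).toReal) (hpos : 0 < om)
    (s t τ : ℝ) (hτ : 1 < τ) (hst : τ * om ≤ t - s) :
    ∃ T : Set (Fin n → Z), MeasurableSet T ∧
      (∀ μ ∈ P, θ μ ≤ s → (Measure.pi fun _ : Fin n => push (fun x => Q1 x) μ) T ≤
        ENNReal.ofReal (2 * Real.exp (-τ / 2))) ∧
      (∀ μ ∈ P, t ≤ θ μ → (Measure.pi fun _ : Fin n => push (fun x => Q1 x) μ) Tᶜ ≤
        ENNReal.ofReal (2 * Real.exp (-τ / 2))) := by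
  have hn' : (0 : ℝ) < n := by exact_mod_cast hn
  obtain ⟨ν, hν, hd⟩ := exists_dom P hPprob hne hdom Q1 hQ1
  have hconvex : ∀ (S : Set ℝ), Convex ℝ S → Convex ℝ
      {p : Z → ℝ | IsDens ν p ∧ ∃ μ ∈ P, θ μ ∈ S ∧ push (fun x => Q1 x) μ = wd ν p} := by
    intro S hS p hp q hq u v hu hv huv
    obtain ⟨dp, μ, hμ, sμ, eμ⟩ := hp
    obtain ⟨dq, μ', hμ', sμ', eμ'⟩ := hq
    have hv' : v = 1 - u := by linarith
    refine ⟨dp.mix dq hu hv huv, mix u μ μ', hconv μ hμ μ' hμ' u hu (by linarith), ?_, ?_⟩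
    · rw [hlin μ hμ μ' hμ' u hu (by linarith), ← hv']
      exact hS sμ sμ' hu hv huv
    · rw [push_mix, wd_mix dp dq hu hv, eμ, eμ', hv']
  have hρ : 1 - τ / (2 * n) < Real.exp (-τ / (2 * n)) := by
    have := Real.add_one_lt_exp (x := -τ / (2 * n)) (by
      apply div_ne_zero; linarith; positivity)
    rw [neg_div] at this ⊢
    linarith
  obtain ⟨T, hT, h1, h2⟩ := exists_test ν n _ _ (fun p hp => hp.1) (fun p hp => hp.1)
    (hconvex _ (convex_Iic s)) (hconvex _ (convex_Ici t)) (1 - τ / (2 * n)) _ hρ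
    (Real.exp_pos _).le (by
      rintro p ⟨dp, μ, hμ, sμ, eμ⟩ q ⟨dq, μ', hμ', sμ', eμ'⟩
      have := dH_lower n hn P hPprob θ hA hdom hconv hlin Q1 hQ1 om hom hpos μ μ' hμ hμ' τ hτ (by
        rw [abs_sub_comm]
        refine hst.trans (le_trans ?_ (le_abs_self _))
        have := Set.mem_Iic.1 sμ
        have := Set.mem_Ici.1 sμ'
        linarith)
      rw [eμ, eμ', dH_sq_s6 ν p q dp dq] at this
      have e : τ / n = 2 * (τ / (2 * n)) := by field_simp
      rw [e] at this
      linarith)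
  have e : Real.exp (-τ / (2 * n)) ^ n = Real.exp (-τ / 2) := by
    rw [← Real.exp_nat_mul]; congr 1; field_simp
  rw [e] at h1 h2
  refine ⟨T, hT, fun μ hμ hs => ?_, fun μ hμ hs => ?_⟩
  · obtain ⟨p, dp, ep⟩ := hd μ hμ
    rw [ep]
    exact h1 p ⟨dp, μ, hμ, hs, ep⟩
  · obtain ⟨p, dp, ep⟩ := hd μ hμ
    rw [ep]
    exact h2 p ⟨dp, μ, hμ, hs, ep⟩


/-- distance of natural numbers -/
def gap (k m : ℕ) : ℕ := (k - m) + (m - k)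

/-- tournament events -/
def evE {Ω : Type*} (T : ℕ → ℕ → Set Ω) (k m : ℕ) : Set Ω := if k < m then T k m else (T m k)ᶜ

lemma evE_meas {Ω : Type*} [MeasurableSpace Ω] (T : ℕ → ℕ → Set Ω)
    (hT : ∀ k m, MeasurableSet (T k m)) (k m : ℕ) : MeasurableSet (evE T k m) := by
  unfold evE
  split_ifs
  · exact hT k m
  · exact (hT m k).compl

lemma finset_sup_meas {Ω : Type*} [MeasurableSpace Ω] (s : Finset ℕ) (f : ℕ → Ω → ℕ)
    (hf : ∀ m, Measurable (f m)) : Measurable fun z => s.sup fun m => f m z := by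
  classical
  induction s using Finset.induction_on with
  | empty => simp
  | insert a s _ ih =>
    simp only [Finset.sup_insert]
    exact (hf a).sup ih

lemma tournament {Ω : Type*} [MeasurableSpace Ω] (T : ℕ → ℕ → Set Ω)
    (hT : ∀ k m, MeasurableSet (T k m)) (N : ℕ) (hN : 0 < N) :
    ∃ kh : Ω → ℕ, Measurable kh ∧ (∀ z, kh z < N) ∧ ∀ z, ∀ k0 < N, 2 ≤ gap k0 (kh z) →
      ∃ m < N, gap k0 (kh z) ≤ gap k0 m ∧ z ∈ evE T k0 m := by
  classical
  let R : ℕ → Ω → ℕ := fun k z => (Finset.range N).sup fun m =>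
    if z ∈ evE T k m ∧ 2 ≤ gap k m then gap k m else 0
  have hRm : ∀ k, Measurable (R k) := by
    intro k
    refine finset_sup_meas _ (fun m z => if z ∈ evE T k m ∧ 2 ≤ gap k m then gap k m else 0) ?_
    intro m
    refine Measurable.ite ?_ measurable_const measurable_const
    exact (evE_meas T hT k m).inter (MeasurableSet.const _)
  have hex : ∀ z, ∃ k, k < N ∧ ∀ j, j < N → R k z ≤ R j z := by
    intro z
    obtain ⟨k, hk, h⟩ := Finset.exists_min_image (Finset.range N) (fun k => R k z)
      ⟨0, Finset.mem_range.2 hN⟩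
    exact ⟨k, Finset.mem_range.1 hk, fun j hj => h j (Finset.mem_range.2 hj)⟩
  refine ⟨fun z => Nat.find (hex z), ?_, fun z => (Nat.find_spec (hex z)).1, ?_⟩
  · refine measurable_find hex fun k => ?_
    refine (MeasurableSet.const (k < N)).inter ?_
    have : {x | ∀ j, j < N → R k x ≤ R j x} = ⋂ j, {x | j < N → R k x ≤ R j x} := by
      ext; simp
    change MeasurableSet {x | ∀ j, j < N → R k x ≤ R j x}
    rw [this]
    refine MeasurableSet.iInter fun j => ?_
    by_cases hj : j < N
    · simpa [hj] using measurableSet_le (hRm k) (hRm j)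
    · simp [hj]
  · intro z k0 hk0 hg
    obtain ⟨h1, h2⟩ := Nat.find_spec (hex z)
    change 2 ≤ gap k0 (Nat.find (hex z)) at hg
    change ∃ m < N, gap k0 (Nat.find (hex z)) ≤ gap k0 m ∧ z ∈ evE T k0 m
    generalize Nat.find (hex z) = k at *
    by_cases hz : z ∈ evE T k0 k
    · exact ⟨k, h1, le_rfl, hz⟩
    · have hz' : z ∈ evE T k k0 := by
        unfold evE gap at *
        split_ifs at * with a b
        · omega
        · exact not_not.1 hz
        · exact hz
        · omega
      have hsym : gap k k0 = gap k0 k := by unfold gap; omega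
      have hR : gap k0 k ≤ R k z := by
        have := Finset.le_sup (f := fun m => if z ∈ evE T k m ∧ 2 ≤ gap k m then gap k m else 0)
          (Finset.mem_range.2 hk0)
        rw [if_pos ⟨hz', by omega⟩] at this
        rw [← hsym]; exact this
      have hR0 : gap k0 k ≤ R k0 z := hR.trans (h2 k0 hk0)
      obtain ⟨m, hm, em⟩ := Finset.exists_mem_eq_sup (Finset.range N) ⟨0, Finset.mem_range.2 hN⟩
        (fun m => if z ∈ evE T k0 m ∧ 2 ≤ gap k0 m then gap k0 m else 0)
      change R k0 z = _ at em
      rw [em] at hR0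
      split_ifs at hR0 with hc
      · exact ⟨m, Finset.mem_range.1 hm, hR0, hc.1⟩
      · omega

lemma loss_pow {l : ℝ → ℝ} {a : ℝ} (ha : 1 < a) (hB : CondB l a) (D : ℝ) (hD : 0 ≤ D) (j : ℕ) :
    l ((3 / 2) ^ j * D) ≤ a ^ j * l D := by
  induction j with
  | zero => simp
  | succ j ih =>
    have h := hB.2.2.2 ((3 / 2) ^ j * D) (by positivity)
    rw [pow_succ', pow_succ', mul_assoc, mul_assoc]
    exact h.trans (mul_le_mul_of_nonneg_left ih (by linarith))

lemma pow_lower (j : ℕ) (hj : 1 ≤ j) : (j : ℝ) + 1 / 4 ≤ (3 / 2) ^ j := by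
  have h2 : ∀ j : ℕ, 2 ≤ j → (j : ℝ) + 1 / 4 ≤ (3 / 2) ^ j := by
    intro j hj
    induction j, hj using Nat.le_induction with
    | base => norm_num
    | succ j hj ih =>
      rw [pow_succ]
      push_cast
      have : (2 : ℝ) ≤ j := by exact_mod_cast hj
      nlinarith
  rcases hj.eq_or_lt with h | h
  · rw [← h]; norm_num
  · exact h2 j h

lemma loss_cell {l : ℝ → ℝ} {a : ℝ} (ha : 1 < a) (hB : CondB l a) (D : ℝ) (hD : 0 ≤ D) (r : ℕ)
    (hr : 2 ≤ r) : l ((r + 1 / 2) * (D / 2)) * (2 * (1 / (2 * √a)) ^ (r - 1)) ≤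
      2 * a * l D * (1 / 2) ^ (r - 1) := by
  have hlD := hB.2.1 D hD
  have h1 : l ((r + 1 / 2) * (D / 2)) ≤ a ^ ((r + 1) / 2) * l D := by
    refine (hB.1 _ _ (by positivity) ?_).trans (loss_pow ha hB D hD _)
    have h := pow_lower ((r + 1) / 2) (by omega)
    have h' : (r : ℝ) ≤ 2 * ((r + 1) / 2 : ℕ) := by
      have : r ≤ 2 * ((r + 1) / 2) := by omega
      exact_mod_cast this
    nlinarith
  have ha0 : (0 : ℝ) < a := by linarith
  have hs : 1 ≤ √a := by rw [Real.one_le_sqrt]; exact ha.le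
  have hs0 : 0 < √a := by linarith
  have h2 : a ^ ((r + 1) / 2) ≤ a * √a ^ (r - 1) := by
    have e : a = √a ^ 2 := (Real.sq_sqrt ha0.le).symm
    calc a ^ ((r + 1) / 2) = √a ^ (2 * ((r + 1) / 2)) := by rw [pow_mul, ← e]
      _ ≤ √a ^ (2 + (r - 1)) := pow_le_pow_right₀ hs (by omega)
      _ = a * √a ^ (r - 1) := by rw [pow_add, ← e]
  calc _ ≤ (a * √a ^ (r - 1) * l D) * (2 * (1 / (2 * √a)) ^ (r - 1)) := by
        apply mul_le_mul_of_nonneg_right _ (by positivity)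
        exact h1.trans (mul_le_mul_of_nonneg_right h2 hlD)
    _ = 2 * a * l D * (√a * (1 / (2 * √a))) ^ (r - 1) := by rw [mul_pow]; ring
    _ = _ := by congr 2; field_simp

lemma sum_gap (N k0 : ℕ) :
    ∑ m ∈ (Finset.range N).filter (fun m => 2 ≤ gap k0 m), (1 / 2 : ℝ) ^ (gap k0 m - 1) ≤ 2 := by
  have hone : ∀ (s : Finset ℕ) (f : ℕ → ℕ), Set.InjOn f s →
      ∑ m ∈ s, (1 / 2 : ℝ) ^ (f m + 1) ≤ 1 := by
    intro s f hf
    rw [← Finset.sum_image (f := fun i => (1 / 2 : ℝ) ^ (i + 1)) hf]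
    have hs : HasSum (fun i : ℕ => (1 / 2 : ℝ) ^ (i + 1)) 1 := by
      have := hasSum_geometric_two.mul_left (1 / 2)
      have e : (fun i : ℕ => (1 / 2 : ℝ) ^ (i + 1)) = fun i => 1 / 2 * (1 / 2) ^ i := by
        ext i; rw [pow_succ]; ring
      rw [e]
      norm_num at this ⊢
      exact this
    exact sum_le_hasSum _ (fun i _ => by positivity) hs
  rw [← Finset.sum_filter_add_sum_filter_not _ (fun m => m < k0)]
  have h1 := hone (((Finset.range N).filter (fun m => 2 ≤ gap k0 m)).filter (fun m => m < k0))
    (fun m => gap k0 m - 2) (by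
      intro x hx y hy h
      have hx1 := Finset.mem_filter.1 (Finset.mem_coe.1 hx)
      have hy1 := Finset.mem_filter.1 (Finset.mem_coe.1 hy)
      have hx2 := (Finset.mem_filter.1 hx1.1).2
      have hy2 := (Finset.mem_filter.1 hy1.1).2
      have hx3 := hx1.2
      have hy3 := hy1.2
      simp only [gap] at hx2 hy2 h
      omega)
  have h2 := hone (((Finset.range N).filter (fun m => 2 ≤ gap k0 m)).filter (fun m => ¬ m < k0))
    (fun m => gap k0 m - 2) (by
      intro x hx y hy h
      have hx1 := Finset.mem_filter.1 (Finset.mem_coe.1 hx)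
      have hy1 := Finset.mem_filter.1 (Finset.mem_coe.1 hy)
      have hx2 := (Finset.mem_filter.1 hx1.1).2
      have hy2 := (Finset.mem_filter.1 hy1.1).2
      have hx3 := hx1.2
      have hy3 := hy1.2
      simp only [gap] at hx2 hy2 h
      omega)
  have e : ∀ m, 2 ≤ gap k0 m → gap k0 m - 1 = gap k0 m - 2 + 1 := by intro m hm; omega
  rw [Finset.sum_congr rfl (fun m hm => by
      rw [e m (Finset.mem_filter.1 (Finset.mem_filter.1 hm).1).2])]
  conv_lhs => enter [2]; rw [Finset.sum_congr rfl (fun m hm => by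
      rw [e m (Finset.mem_filter.1 (Finset.mem_filter.1 hm).1).2])]
  linarith

lemma risk_bound {Ω : Type*} [MeasurableSpace Ω] (μ : Measure Ω) [IsProbabilityMeasure μ]
    (T : ℕ → ℕ → Set Ω) (hT : ∀ k m, MeasurableSet (T k m)) (N : ℕ) (kh : Ω → ℕ)
    (hkh : ∀ z, ∀ k0 < N, 2 ≤ gap k0 (kh z) →
      ∃ m < N, gap k0 (kh z) ≤ gap k0 m ∧ z ∈ evE T k0 m)
    {l : ℝ → ℝ} {a : ℝ} (ha : 1 < a) (hB : CondB l a) (D : ℝ) (hD : 0 ≤ D) (k0 : ℕ) (hk0 : k0 < N)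
    (herr : ∀ m < N, 2 ≤ gap k0 m →
      μ (evE T k0 m) ≤ ENNReal.ofReal (2 * (1 / (2 * √a)) ^ (gap k0 m - 1)))
    (est : Ω → ℝ) (th : ℝ) (hest : ∀ z, |est z - th| ≤ (gap k0 (kh z) + 1 / 2) * (D / 2)) :
    ∫⁻ z, ENNReal.ofReal (l |est z - th|) ∂μ ≤ ENNReal.ofReal ((1 + 4 * a) * l D) := by
  have hlD := hB.2.1 D hD
  set S := (Finset.range N).filter (fun m => 2 ≤ gap k0 m) with hS
  let L : ℕ → ℝ := fun m => l ((gap k0 m + 1 / 2) * (D / 2))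
  have hL : ∀ m, 0 ≤ L m := fun m => hB.2.1 _ (by positivity)
  have hpath : ∀ z, ENNReal.ofReal (l |est z - th|) ≤ ENNReal.ofReal (l D) +
      ∑ m ∈ S, (evE T k0 m).indicator (fun _ => ENNReal.ofReal (L m)) z := by
    intro z
    by_cases hg : 2 ≤ gap k0 (kh z)
    · obtain ⟨m, hm, hgm, hz⟩ := hkh z k0 hk0 hg
      have hmS : m ∈ S := Finset.mem_filter.2 ⟨Finset.mem_range.2 hm, hg.trans hgm⟩
      refine le_trans ?_ le_add_self
      refine le_trans ?_ (Finset.single_le_sum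
        (f := fun m => (evE T k0 m).indicator (fun _ => ENNReal.ofReal (L m)) z)
        (fun i _ => zero_le) hmS)
      rw [Set.indicator_of_mem hz]
      apply ENNReal.ofReal_le_ofReal
      apply hB.1 _ _ (abs_nonneg _)
      refine (hest z).trans ?_
      have : (gap k0 (kh z) : ℝ) ≤ gap k0 m := by exact_mod_cast hgm
      gcongr
    · refine le_trans ?_ le_self_add
      apply ENNReal.ofReal_le_ofReal
      apply hB.1 _ _ (abs_nonneg _)
      refine (hest z).trans ?_
      have : (gap k0 (kh z) : ℝ) ≤ 1 := by
        have : gap k0 (kh z) ≤ 1 := by omega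
        exact_mod_cast this
      nlinarith
  calc _ ≤ ∫⁻ z, (ENNReal.ofReal (l D) +
      ∑ m ∈ S, (evE T k0 m).indicator (fun _ => ENNReal.ofReal (L m)) z) ∂μ := lintegral_mono hpath
    _ = ENNReal.ofReal (l D) + ∑ m ∈ S, ENNReal.ofReal (L m) * μ (evE T k0 m) := by
        rw [lintegral_add_left measurable_const, lintegral_finsetSum _ (fun m _ =>
          measurable_const.indicator (evE_meas T hT k0 m))]
        simp only [lintegral_const, measure_univ, mul_one]
        congr 1
        refine Finset.sum_congr rfl fun m _ => ?_
        rw [lintegral_indicator_const (evE_meas T hT k0 m)]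
    _ ≤ ENNReal.ofReal (l D) + ∑ m ∈ S,
          ENNReal.ofReal (2 * a * l D * (1 / 2) ^ (gap k0 m - 1)) := by
        gcongr with m hm
        obtain ⟨h1, h2⟩ := Finset.mem_filter.1 hm
        refine (mul_le_mul_right (herr m (Finset.mem_range.1 h1) h2) _).trans ?_
        rw [← ENNReal.ofReal_mul (hL m)]
        exact ENNReal.ofReal_le_ofReal (loss_cell ha hB D hD _ h2)
    _ ≤ _ := by
        have ha0 : (0 : ℝ) < a := by linarith
        rw [← ENNReal.ofReal_sum_of_nonneg (fun m _ => by positivity),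
          ← ENNReal.ofReal_add hlD (Finset.sum_nonneg fun m _ => by positivity)]
        apply ENNReal.ofReal_le_ofReal
        rw [← Finset.mul_sum]
        have := mul_le_mul_of_nonneg_left (sum_gap N k0) (by positivity : 0 ≤ 2 * a * l D)
        linarith


lemma C_facts {a C : ℝ} (ha : 1 < a) (hC : √(2 * Real.log (2 * a)) + 1 ≤ C) :
    2 ≤ C ∧ Real.exp (-(C ^ 2 / 4)) ≤ 1 / (2 * √a) := by
  have ha0 : (0 : ℝ) < a := by linarith
  have hlog2 := Real.log_two_gt_d9
  have hlog2' := Real.log_two_lt_d9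
  have hla : 0 < Real.log a := Real.log_pos ha
  have hl : Real.log (2 * a) = Real.log 2 + Real.log a := Real.log_mul (by norm_num) ha0.ne'
  have hu : 1 ≤ √(2 * Real.log (2 * a)) := by
    rw [Real.one_le_sqrt, hl]; linarith
  have hsq : √(2 * Real.log (2 * a)) ^ 2 = 2 * Real.log (2 * a) := Real.sq_sqrt (by
    rw [hl]; linarith)
  set u := √(2 * Real.log (2 * a))
  refine ⟨by linarith, ?_⟩
  have hs0 : 0 < √a := Real.sqrt_pos.2 ha0
  have e : 1 / (2 * √a) = Real.exp (-(Real.log 2 + Real.log a / 2)) := by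
    rw [← Real.log_sqrt ha0.le, ← Real.log_mul (by norm_num) hs0.ne', Real.exp_neg,
      Real.exp_log (by positivity), one_div]
  rw [e, Real.exp_le_exp]
  have : (u + 1) ^ 2 ≤ C ^ 2 := by gcongr
  rw [hl] at hsq
  nlinarith

lemma final_loss {l : ℝ → ℝ} {a C : ℝ} (ha : 1 < a) (hB : CondB l a) (hC : 2 ≤ C) (om : ℝ)
    (hom : 0 ≤ om) :
    (1 + 4 * a) * l (C ^ 2 * om) ≤ ((1 + 8 * a ^ 2 / (2 * a - 1)) *
                  a ^ ⌈2 * Real.log C / Real.log (3 / 2)⌉) * l om := by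
  have ha0 : (0 : ℝ) < a := by linarith
  have hlo := hB.2.1 om hom
  have h32 : 0 < Real.log (3 / 2) := Real.log_pos (by norm_num)
  have hlC : 0 < Real.log C := Real.log_pos (by linarith)
  have hK : 0 ≤ ⌈2 * Real.log C / Real.log (3 / 2)⌉ := Int.ceil_nonneg (by positivity)
  obtain ⟨K, hKe⟩ := Int.eq_ofNat_of_zero_le hK
  have hle := Int.le_ceil (2 * Real.log C / Real.log (3 / 2))
  rw [hKe] at hle ⊢
  have hle2 : 2 * Real.log C / Real.log (3 / 2) ≤ (K : ℝ) := by simpa using hle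
  rw [div_le_iff₀ h32] at hle2
  have hCK : C ^ 2 ≤ (3 / 2 : ℝ) ^ K := by
    rw [← Real.log_le_log_iff (by positivity) (by positivity), Real.log_pow, Real.log_pow]
    exact_mod_cast hle2
  have h1 : l (C ^ 2 * om) ≤ a ^ K * l om :=
    (hB.1 _ _ (by positivity) (by gcongr)).trans (loss_pow ha hB om hom K)
  have h2 : 1 + 4 * a ≤ 1 + 8 * a ^ 2 / (2 * a - 1) := by
    have : 4 * a ≤ 8 * a ^ 2 / (2 * a - 1) := by
      rw [le_div_iff₀ (by linarith)]; nlinarith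
    linarith
  have e : a ^ (Int.ofNat K) = a ^ K := zpow_natCast a K
  have e' : a ^ ((K : ℕ) : ℤ) = a ^ K := zpow_natCast a K
  rw [e', mul_assoc]
  calc (1 + 4 * a) * l (C ^ 2 * om) ≤ (1 + 4 * a) * (a ^ K * l om) := by gcongr
    _ ≤ _ := by gcongr

/-- attainability: upper bound for a given non-interactive channel.
Under boundedness of `θ` (Condition A), the loss condition (Condition B with constant `a`),
`𝒫` dominated and convex, `θ` linear, and `Q` a non-interactive channel with identical
Markov marginals `Q1` (so that `Q P^{⊗n} = (Q1 P)^{⊗n}`), for every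
`C ≥ √(2 log 2a) + 1` and `C1 = (1 + 8a²/(2a-1)) a^{⌈2 log C / log(3/2)⌉}`, there exists an
estimator `θ̂_n : Z^n → ℝ` with
`sup_{P ∈ 𝒫} E_{Q P^{⊗n}} l(|θ̂_n - θ(P)|) ≤ C1 · l(ω_H^{(Q1)}(n^{-1/2}))`. -/
theorem statement6 {X Z : Type*} [MeasurableSpace X] [MeasurableSpace Z]
    (n : ℕ) (hn : 0 < n) (P : Set (Measure X)) (hPprob : ∀ μ ∈ P, IsProbabilityMeasure μ)
    (θ : Measure X → ℝ) (hA : CondA P θ)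
    (l : ℝ → ℝ) (a : ℝ) (ha : 1 < a) (hB : CondB l a)
    (hdom : Dominated P) (hconv : ConvexMeasureSet P) (hlin : LinearFunctional P θ)
    (Q1 : Kernel X Z) (hQ1 : IsMarkovKernel Q1)
    (C : ℝ) (hC : Real.sqrt (2 * Real.log (2 * a)) + 1 ≤ C) :
    ∃ est : (Fin n → Z) → ℝ, Measurable est ∧
      ∀ μ ∈ P,
        (∫⁻ z, ENNReal.ofReal (l |est z - θ μ|)
            ∂(Measure.pi fun _ : Fin n => push (fun x => Q1 x) μ))
          ≤ ENNReal.ofReal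
              (((1 + 8 * a ^ 2 / (2 * a - 1)) *
                  a ^ ⌈2 * Real.log C / Real.log (3 / 2)⌉) *
                l ((omegaHQ (fun x => Q1 x) P θ ((Real.sqrt ↑n)⁻¹)).toReal)) := by

  rcases P.eq_empty_or_nonempty with hP | hne
  · exact ⟨fun _ => 0, measurable_const, fun μ hμ => by simp [hP] at hμ⟩
  obtain ⟨hC2, hCe⟩ := C_facts ha hC
  obtain ⟨μ0, hμ0⟩ := hne
  have hom0 : 0 ≤ (omegaHQ (fun x => Q1 x) P θ ((Real.sqrt ↑n)⁻¹)).toReal := ENNReal.toReal_nonneg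
  rcases hom0.eq_or_lt with hz | hpos
  · refine ⟨fun _ => θ μ0, measurable_const, fun μ hμ => ?_⟩
    rw [theta_const n hn P hPprob θ hA hdom hconv hlin Q1 hQ1 hz.symm μ0 μ hμ0 hμ]
    simp [hB.2.2.1]
  obtain ⟨om, hom⟩ : ∃ om, om = (omegaHQ (fun x => Q1 x) P θ ((Real.sqrt ↑n)⁻¹)).toReal := ⟨_, rfl⟩
  rw [← hom] at hpos ⊢
  obtain ⟨c, hc⟩ := id hA
  have hWpos : 0 < C ^ 2 * om / 2 := by positivity
  obtain ⟨W, hW⟩ : ∃ W, W = C ^ 2 * om / 2 := ⟨_, rfl⟩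
  rw [← hW] at hWpos
  have hT : ∀ k m : ℕ, ∃ T : Set (Fin n → Z), MeasurableSet T ∧ (k + 2 ≤ m →
      (∀ μ ∈ P, θ μ ≤ -c + (k + 1) * W → (Measure.pi fun _ : Fin n => push (fun x => Q1 x) μ) T ≤
        ENNReal.ofReal (2 * (1 / (2 * √a)) ^ (m - k - 1))) ∧
      (∀ μ ∈ P, -c + m * W ≤ θ μ → (Measure.pi fun _ : Fin n => push (fun x => Q1 x) μ) Tᶜ ≤
        ENNReal.ofReal (2 * (1 / (2 * √a)) ^ (m - k - 1)))) := by
    intro k m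
    by_cases hkm : k + 2 ≤ m
    · obtain ⟨r, rfl⟩ : ∃ r, m = k + 2 + r := ⟨m - (k + 2), by omega⟩
      obtain ⟨T, hT, h1, h2⟩ := test_theta n hn P hPprob ⟨μ0, hμ0⟩ θ hA hdom hconv hlin Q1 hQ1 om
        hom hpos (-c + (k + 1) * W) (-c + (k + 2 + r : ℕ) * W) ((r + 1) * (C ^ 2 / 2))
        (by nlinarith [(Nat.cast_nonneg r : (0 : ℝ) ≤ r)]) (by
          rw [hW]; push_cast; apply le_of_eq; ring)
      have hle : ENNReal.ofReal (2 * Real.exp (-((r + 1) * (C ^ 2 / 2)) / 2)) ≤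
          ENNReal.ofReal (2 * (1 / (2 * √a)) ^ (k + 2 + r - k - 1)) := by
        apply ENNReal.ofReal_le_ofReal
        have e : k + 2 + r - k - 1 = r + 1 := by omega
        have e2 : Real.exp (-((r + 1) * (C ^ 2 / 2)) / 2) = Real.exp (-(C ^ 2 / 4)) ^ (r + 1) := by
          rw [← Real.exp_nat_mul]; congr 1; push_cast; ring
        rw [e, e2]
        gcongr
      exact ⟨T, hT, fun _ => ⟨fun μ hμ h => (h1 μ hμ h).trans hle,
        fun μ hμ h => (h2 μ hμ h).trans hle⟩⟩
    · exact ⟨∅, MeasurableSet.empty, fun h => absurd h hkm⟩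
  choose T hTm hTe using hT
  obtain ⟨kh, hkm, hkN, hkh⟩ := tournament T hTm (⌊2 * c / W⌋₊ + 1) (Nat.succ_pos _)
  refine ⟨fun z => -c + kh z * W + W / 2, ?_, fun μ hμ => ?_⟩
  · have : Measurable fun z => (kh z : ℝ) := (measurable_from_top (f := fun k : ℕ => (k : ℝ))).comp hkm
    exact ((this.mul_const W).const_add (-c)).add_const _
  refine le_trans ?_ (ENNReal.ofReal_le_ofReal (final_loss ha hB hC2 om hpos.le))
  have hpr := hPprob μ hμ
  have hpr3 : IsProbabilityMeasure (push (fun x => Q1 x) μ) :=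
    (inferInstance : IsProbabilityMeasure (μ.bind Q1))
  have hb := abs_le.1 (hc μ hμ)
  have hx0 : 0 ≤ (θ μ + c) / W := div_nonneg (by linarith) hWpos.le
  obtain ⟨k0, hk0⟩ : ∃ k0, k0 = ⌊(θ μ + c) / W⌋₊ := ⟨_, rfl⟩
  have hlo : (k0 : ℝ) * W ≤ θ μ + c := by
    rw [← le_div_iff₀ hWpos, hk0]; exact Nat.floor_le hx0
  have hhi : θ μ + c ≤ (k0 + 1) * W := by
    rw [← div_le_iff₀ hWpos, hk0]; exact (Nat.lt_floor_add_one _).le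
  have hk0N : k0 < ⌊2 * c / W⌋₊ + 1 := by
    rw [hk0, Nat.lt_succ_iff]
    apply Nat.floor_le_floor
    gcongr
    linarith
  refine risk_bound _ T hTm _ kh hkh ha hB (C ^ 2 * om) (by positivity) k0 hk0N ?_ _ _ ?_
  · intro m _ hg
    unfold evE
    split_ifs with hlt
    · have e : gap k0 m = m - k0 := by unfold gap; omega
      rw [e] at hg ⊢
      exact (hTe k0 m (by omega)).1 μ hμ (by linarith)
    · have e : gap k0 m = k0 - m := by unfold gap; omega
      rw [e] at hg ⊢
      exact (hTe m k0 (by omega)).2 μ hμ (by linarith)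
  · intro z
    rw [← hW]
    have hgap : |(kh z : ℝ) - k0| ≤ gap k0 (kh z) := by
      unfold gap
      rcases le_total (kh z) k0 with h | h
      · rw [Nat.sub_eq_zero_of_le h, add_zero, Nat.cast_sub h, abs_sub_comm]
        have : (kh z : ℝ) ≤ k0 := by exact_mod_cast h
        rw [abs_of_nonneg (by linarith)]
      · rw [Nat.sub_eq_zero_of_le h, zero_add, Nat.cast_sub h]
        have : (k0 : ℝ) ≤ kh z := by exact_mod_cast h
        rw [abs_of_nonneg (by linarith)]
    have h := abs_le.1 hgap
    apply abs_le.2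
    constructor
    · nlinarith [mul_le_mul_of_nonneg_right h.1 hWpos.le]
    · nlinarith [mul_le_mul_of_nonneg_right h.2 hWpos.le]

end PrivacyPaper
end
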